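/- For i = 1, …, n−1 let g_i = a_{i1} z_1 + ⋯ + a_{i,n−1} z_{n−1} + b_i with a_{ij}, b_i ∈ K, and suppose the (n−1)×(n−1) coefficient matrix (a_{ij}) is invertible over K (the linear parts of g_1, …, g_{n−1} are linearly independent). Let F ∈ R^{l×m} with l < m and rank r (1 ≤ r ≤ l), and suppose d_r(F) is associated to g_1 g_2 ⋯ g_{n−1} h, where h ∈ K[z_n]. Then F is equivalent to its Smith form if and only if J_k(F) = R for every k = 1, …, r. -/

import Mathlib

open MvPolynomial Matrix

section Defs

variable {A : Type*} [CommRing A]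

/-- The set of all `k × k` minors of a matrix. -/
def minorsSet {l m : ℕ} (F : Matrix (Fin l) (Fin m) A) (k : ℕ) : Set A :=
  { p | ∃ (r : Fin k ↪ Fin l) (c : Fin k ↪ Fin m), p = (F.submatrix ⇑r ⇑c).det }

/-- `d` is a greatest common divisor of the `k × k` minors of `F`. -/
def IsGcdMinors {l m : ℕ} (F : Matrix (Fin l) (Fin m) A) (k : ℕ) (d : A) : Prop :=
  (∀ p ∈ minorsSet F k, d ∣ p) ∧ ∀ e : A, (∀ p ∈ minorsSet F k, e ∣ p) → e ∣ d

/-- The ideal generated by the `k × k` reduced minors of `F`, relative to a gcd `d`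
of the `k × k` minors (the reduced minors are the `v` with `d * v` a minor). -/
def reducedIdeal {l m : ℕ} (F : Matrix (Fin l) (Fin m) A) (k : ℕ) (d : A) : Ideal A :=
  Ideal.span { v : A | d * v ∈ minorsSet F k }

/-- `J_k(F) = R`: the `k × k` reduced minors of `F` generate the unit ideal. -/
def JkUnit {l m : ℕ} (F : Matrix (Fin l) (Fin m) A) (k : ℕ) : Prop :=
  ∃ d : A, IsGcdMinors F k d ∧ reducedIdeal F k d = ⊤

/-- `F` has rank `r`: some `r × r` minor is nonzero and all `(r+1) × (r+1)` minors vanish. -/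
def HasRank {l m : ℕ} (F : Matrix (Fin l) (Fin m) A) (r : ℕ) : Prop :=
  (∃ p ∈ minorsSet F r, p ≠ 0) ∧ ∀ p ∈ minorsSet F (r + 1), p = 0

/-- Equivalence of matrices: `F₁ = U * F₂ * V` for unimodular `U`, `V`. -/
def MatEquiv {l m : ℕ} (F₁ F₂ : Matrix (Fin l) (Fin m) A) : Prop :=
  ∃ (U : Matrix (Fin l) (Fin l) A) (V : Matrix (Fin m) (Fin m) A),
    IsUnit U.det ∧ IsUnit V.det ∧ F₁ = U * F₂ * V

/-- The rectangular diagonal matrix with diagonal entries `Φ`. -/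
def smithDiag {l m : ℕ} (Φ : Fin l → A) : Matrix (Fin l) (Fin m) A :=
  Matrix.of fun i j => if (i : ℕ) = (j : ℕ) then Φ i else 0

/-- `F` (of rank `r`) is equivalent to its Smith form: there are diagonal entries `Φ` such that
for each `i ≤ r` the product `Φ_1 ⋯ Φ_i` is a gcd of the `i × i` minors of `F`
(i.e. `Φ_i = d_i(F)/d_{i-1}(F)`), `Φ_i = 0` for `i > r`, and `F` is equivalent to
the diagonal matrix with entries `Φ`. -/
def SmithEquivAt {l m : ℕ} (F : Matrix (Fin l) (Fin m) A) (r : ℕ) : Prop :=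
  ∃ Φ : Fin l → A,
    (∀ i : Fin l, (i : ℕ) < r →
      IsGcdMinors F ((i : ℕ) + 1) (∏ j ∈ Finset.Iic i, Φ j)) ∧
    (∀ i : Fin l, r ≤ (i : ℕ) → Φ i = 0) ∧
    MatEquiv F (smithDiag Φ)

/-- `F` is equivalent to its Smith form. -/
def EquivToSmith {l m : ℕ} (F : Matrix (Fin l) (Fin m) A) : Prop :=
  ∃ r : ℕ, HasRank F r ∧ SmithEquivAt F r

end Defs

section MinorIdeals

variable {A : Type*} [CommRing A]

/-- Ideal generated by `k × k` minors. -/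
def mI {l m : Type*} (F : Matrix l m A) (k : ℕ) : Ideal A :=
  Ideal.span {p | ∃ (f : Fin k → l) (g : Fin k → m), p = (F.submatrix f g).det}

lemma det_mem_mI {l m : Type*} (F : Matrix l m A) {k : ℕ} (f : Fin k → l) (g : Fin k → m) :
    (F.submatrix f g).det ∈ mI F k := Ideal.subset_span ⟨f, g, rfl⟩

lemma mI_le {l m : Type*} {F : Matrix l m A} {k : ℕ} {I : Ideal A}
    (h : ∀ (f : Fin k → l) (g : Fin k → m), (F.submatrix f g).det ∈ I) : mI F k ≤ I := by
  refine Ideal.span_le.2 ?_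
  rintro _ ⟨f, g, rfl⟩
  exact h f g

lemma mI_transpose {l m : Type*} (F : Matrix l m A) (k : ℕ) : mI Fᵀ k = mI F k := by
  apply le_antisymm
  · refine mI_le fun f g => ?_
    have := det_mem_mI F g f
    rwa [← det_transpose] at this
  · refine mI_le fun f g => ?_
    have := det_mem_mI Fᵀ g f
    rwa [← det_transpose] at this

lemma mI_mul_left {l' l m : Type*} [Fintype l] (U : Matrix l' l A)
    (F : Matrix l m A) (k : ℕ) : mI (U * F) k ≤ mI F k := by
  classical
  refine mI_le fun f g => ?_
  have h1 : ((U * F).submatrix f g) = fun i => ∑ p : l, U (f i) p • (F.submatrix id g) p := by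
    funext i j
    simp [Matrix.mul_apply, Finset.sum_apply]
  have h2 : ((U * F).submatrix f g).det
      = ∑ p : Fin k → l, (∏ i, U (f i) (p i)) * (F.submatrix p g).det := by
    rw [h1]
    have := (detRowAlternating (n := Fin k) (R := A)).toMultilinearMap.map_sum
      (fun i (p : l) => U (f i) p • (F.submatrix id g) p)
    refine this.trans ?_
    refine Finset.sum_congr rfl fun p _ => ?_
    refine ((detRowAlternating (n := Fin k) (R := A)).toMultilinearMap.map_smul_univ _ _).trans ?_
    rfl
  rw [h2]
  exact Ideal.sum_mem _ fun p _ => Ideal.mul_mem_left _ _ (det_mem_mI F p g)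

lemma mI_mul_right {l m m' : Type*} [Fintype m]
    (F : Matrix l m A) (V : Matrix m m' A) (k : ℕ) : mI (F * V) k ≤ mI F k := by
  rw [← mI_transpose, ← mI_transpose F, transpose_mul]
  exact mI_mul_left _ _ _

/-- equivalence of matrices -/
def MEq {l m : Type*} [Fintype l] [DecidableEq l] [Fintype m] [DecidableEq m]
    (F G : Matrix l m A) : Prop :=
  ∃ (U : Matrix l l A) (V : Matrix m m A), IsUnit U ∧ IsUnit V ∧ F = U * G * V

section
variable {l m : Type*} [Fintype l] [DecidableEq l] [Fintype m] [DecidableEq m]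

lemma MEq.refl (F : Matrix l m A) : MEq F F := ⟨1, 1, isUnit_one, isUnit_one, by simp⟩

lemma MEq.symm {F G : Matrix l m A} (h : MEq F G) : MEq G F := by
  obtain ⟨_, _, ⟨U, rfl⟩, ⟨V, rfl⟩, rfl⟩ := h
  refine ⟨(U⁻¹ : (Matrix l l A)ˣ), (V⁻¹ : (Matrix m m A)ˣ), Units.isUnit _, Units.isUnit _, ?_⟩
  rw [Matrix.mul_assoc (U : Matrix l l A), ← Matrix.mul_assoc, U.inv_mul, Matrix.one_mul,
    Matrix.mul_assoc, V.mul_inv, Matrix.mul_one]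

lemma MEq.trans {F G H : Matrix l m A} (h : MEq F G) (h' : MEq G H) : MEq F H := by
  obtain ⟨U, V, hU, hV, rfl⟩ := h
  obtain ⟨U', V', hU', hV', rfl⟩ := h'
  exact ⟨U * U', V' * V, hU.mul hU', hV'.mul hV, by simp only [Matrix.mul_assoc]⟩

lemma MEq.mI_eq {F G : Matrix l m A} (h : MEq F G) (k : ℕ) : mI F k = mI G k := by
  have key : ∀ {F G : Matrix l m A}, MEq F G → mI F k ≤ mI G k := by
    rintro _ G ⟨U, V, -, -, rfl⟩
    exact (mI_mul_right _ _ _).trans (mI_mul_left _ _ _)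
  exact le_antisymm (key h) (key h.symm)

lemma MEq.smul {F G : Matrix l m A} (h : MEq F G) (c : A) : MEq (c • F) (c • G) := by
  obtain ⟨U, V, hU, hV, rfl⟩ := h
  exact ⟨U, V, hU, hV, by simp⟩

lemma isUnit_map {B : Type*} [CommRing B] (φ : A →+* B) {U : Matrix l l A} (h : IsUnit U) :
    IsUnit (U.map φ) := by
  have := h.map φ.mapMatrix
  simpa using this

lemma MEq.map {B : Type*} [CommRing B] (φ : A →+* B) {F G : Matrix l m A} (h : MEq F G) :
    MEq (F.map φ) (G.map φ) := by
  obtain ⟨U, V, hU, hV, rfl⟩ := h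
  exact ⟨U.map φ, V.map φ, isUnit_map φ hU, isUnit_map φ hV, by simp [Matrix.map_mul]⟩

end

lemma mI_map {B : Type*} [CommRing B] (φ : A →+* B) {l m : Type*} (F : Matrix l m A) (k : ℕ) :
    mI (F.map φ) k = (mI F k).map φ := by
  have key : ∀ (f : Fin k → l) (g : Fin k → m),
      ((F.map φ).submatrix f g).det = φ (F.submatrix f g).det := by
    intro f g
    rw [RingHom.map_det]; rfl
  apply le_antisymm
  · refine mI_le fun f g => ?_
    rw [key]
    exact Ideal.mem_map_of_mem _ (det_mem_mI _ _ _)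
  · rw [Ideal.map_le_iff_le_comap]
    refine mI_le fun f g => ?_
    rw [Ideal.mem_comap, ← key]
    exact det_mem_mI _ _ _

lemma mI_smul {l m : Type*} (c : A) (F : Matrix l m A) (k : ℕ) :
    mI (c • F) k = Ideal.span {c ^ k} * mI F k := by
  have key : ∀ (f : Fin k → l) (g : Fin k → m),
      ((c • F).submatrix f g).det = c ^ k * (F.submatrix f g).det := by
    intro f g
    have : (c • F).submatrix f g = c • F.submatrix f g := rfl
    rw [this, det_smul]; simp
  apply le_antisymm
  · refine mI_le fun f g => ?_
    rw [key]
    exact Ideal.mul_mem_mul (Ideal.mem_span_singleton_self _) (det_mem_mI _ _ _)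
  · rw [Ideal.span_singleton_mul_le_iff]
    intro z hz
    induction hz using Submodule.span_induction with
    | mem x hx =>
      obtain ⟨f, g, rfl⟩ := hx
      rw [← key]
      exact det_mem_mI _ _ _
    | zero => simp
    | add x y _ _ hx hy => rw [mul_add]; exact Ideal.add_mem _ hx hy
    | smul a x _ hx => 
      rw [smul_eq_mul, mul_left_comm]; exact Ideal.mul_mem_left _ _ hx

lemma mI_succ_le {l m : Type*} (F : Matrix l m A) (k : ℕ) : mI F (k + 1) ≤ mI F k := by
  refine mI_le fun f g => ?_
  rw [det_succ_row_zero]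
  refine Ideal.sum_mem _ fun j _ => Ideal.mul_mem_left _ _ ?_
  exact det_mem_mI F (f ∘ Fin.succ) (g ∘ j.succAbove)

lemma mI_antitone {l m : Type*} (F : Matrix l m A) {k k' : ℕ} (h : k ≤ k') :
    mI F k' ≤ mI F k := by
  induction h with
  | refl => exact le_rfl
  | step _ ih => exact (mI_succ_le F _).trans ih

lemma mI_zero {l m : Type*} (F : Matrix l m A) : mI F 0 = ⊤ := by
  rw [Ideal.eq_top_iff_one]
  have := det_mem_mI F (k := 0) Fin.elim0 Fin.elim0
  simpa using this

lemma entry_mem_mI {l m : Type*} (F : Matrix l m A) (i : l) (j : m) : F i j ∈ mI F 1 := by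
  have := det_mem_mI F (k := 1) (fun _ => i) (fun _ => j)
  simpa using this

lemma mI_det {r : ℕ} (G : Matrix (Fin r) (Fin r) A) : mI G r = Ideal.span {G.det} := by
  apply le_antisymm
  · refine mI_le fun f g => ?_
    have h1 : G.submatrix f g = (1 : Matrix _ _ A).submatrix f id * G *
        (1 : Matrix _ _ A).submatrix id g := by
      ext i j
      simp [Matrix.mul_apply, Matrix.one_apply]
    rw [h1, det_mul, det_mul]
    exact Ideal.mul_mem_right _ _ (Ideal.mul_mem_left _ _ (Ideal.mem_span_singleton_self _))
  · rw [Ideal.span_singleton_le_iff_mem]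
    simpa using det_mem_mI G id id

/-- `[a 0; 0 M]` -/
def bd {r : ℕ} (a : A) (M : Matrix (Fin r) (Fin r) A) : Matrix (Fin (r + 1)) (Fin (r + 1)) A :=
  fun i j => Fin.cases (Fin.cases a (fun _ => 0) j) (fun i' => Fin.cases 0 (fun j' => M i' j') j) i

section bd
variable {r : ℕ} (a b : A) (M N : Matrix (Fin r) (Fin r) A)
@[simp] lemma bd_zero_zero : bd a M 0 0 = a := rfl
@[simp] lemma bd_zero_succ (j : Fin r) : bd a M 0 j.succ = 0 := rfl
@[simp] lemma bd_succ_zero (i : Fin r) : bd a M i.succ 0 = 0 := rfl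
@[simp] lemma bd_succ_succ (i j : Fin r) : bd a M i.succ j.succ = M i j := rfl

lemma bd_mul : bd a M * bd b N = bd (a * b) (M * N) := by
  ext i j
  refine Fin.cases ?_ (fun i => ?_) i <;> refine Fin.cases ?_ (fun j => ?_) j <;>
    simp [Matrix.mul_apply, Fin.sum_univ_succ]

lemma bd_one : bd (1 : A) (1 : Matrix (Fin r) (Fin r) A) = 1 := by
  ext i j
  refine Fin.cases ?_ (fun i => ?_) i <;> refine Fin.cases ?_ (fun j => ?_) j <;>
    simp [Matrix.one_apply, Fin.succ_ne_zero, (Fin.succ_ne_zero _).symm]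

lemma bd_diagonal (φ : Fin r → A) : bd a (diagonal φ) = diagonal (Fin.cons a φ : Fin (r+1) → A) := by
  ext i j
  refine Fin.cases ?_ (fun i => ?_) i <;> refine Fin.cases ?_ (fun j => ?_) j <;>
    simp [Matrix.diagonal_apply, Fin.succ_ne_zero, (Fin.succ_ne_zero _).symm]

lemma det_bd : (bd a M).det = a * M.det := by
  rw [det_succ_row_zero, Fin.sum_univ_succ]
  simp
  rfl

lemma isUnit_bd {M : Matrix (Fin r) (Fin r) A} (h : IsUnit M) : IsUnit (bd 1 M) := by
  rw [Matrix.isUnit_iff_isUnit_det] at h ⊢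
  simpa [det_bd] using h

lemma MEq.bd {M N : Matrix (Fin r) (Fin r) A} (h : MEq M N) : MEq (bd 1 M) (bd 1 N) := by
  obtain ⟨U, V, hU, hV, rfl⟩ := h
  exact ⟨_, _, isUnit_bd hU, isUnit_bd hV, by simp [bd_mul]⟩

lemma bd_minor_aux {k : ℕ} (f g : Fin k → Fin (r + 1)) (hf : ∀ i, f i ≠ 0) :
    ((bd a M).submatrix f g).det ∈ mI M k := by
  by_cases hg : ∃ j, g j = 0
  · obtain ⟨j, hj⟩ := hg
    rw [det_eq_zero_of_column_eq_zero j]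
    · exact Ideal.zero_mem _
    · intro i
      obtain ⟨i', hi'⟩ := Fin.exists_succ_eq.2 (hf i)
      simp [hj, ← hi']
  · push Not at hg
    choose f' hf' using fun i => Fin.exists_succ_eq.2 (hf i)
    choose g' hg' using fun i => Fin.exists_succ_eq.2 (hg i)
    have : (bd a M).submatrix f g = M.submatrix f' g' := by
      ext i j
      simp [← hf', ← hg']
    rw [this]
    exact det_mem_mI _ _ _

lemma mI_bd (k : ℕ) : mI (bd 1 M) (k + 1) = mI M k := by
  apply le_antisymm
  · refine mI_le fun f g => ?_
    by_cases hf : ∃ i, f i = 0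
    · obtain ⟨i, hi⟩ := hf
      by_cases hf2 : ∃ i', i' ≠ i ∧ f i' = 0
      · obtain ⟨i', hne, hi'⟩ := hf2
        rw [det_zero_of_row_eq hne]
        · exact Ideal.zero_mem _
        · funext j; simp [hi, hi']
      · push Not at hf2
        rw [det_succ_row _ i]
        refine Ideal.sum_mem _ fun j _ => Ideal.mul_mem_left _ _ ?_
        rw [submatrix_submatrix]
        exact bd_minor_aux _ _ _ _ fun t => hf2 _ (Fin.succAbove_ne _ _)
    · push Not at hf
      rw [det_succ_row_zero]
      refine Ideal.sum_mem _ fun j _ => Ideal.mul_mem_left _ _ ?_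
      rw [submatrix_submatrix]
      exact bd_minor_aux _ _ _ _ fun t => hf _
  · refine mI_le fun f g => ?_
    have h1 : (bd 1 M).submatrix (Fin.cons 0 (Fin.succ ∘ f) : Fin (k+1) → Fin (r+1))
      (Fin.cons 0 (Fin.succ ∘ g) : Fin (k+1) → Fin (r+1)) = bd 1 (M.submatrix f g) := by
      ext i j
      refine Fin.cases ?_ (fun i => ?_) i <;> refine Fin.cases ?_ (fun j => ?_) j <;> simp
    have h2 := det_mem_mI (bd 1 M) (Fin.cons 0 (Fin.succ ∘ f) : Fin (k+1) → Fin (r+1))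
      (Fin.cons 0 (Fin.succ ∘ g) : Fin (k+1) → Fin (r+1))
    rw [h1, det_bd, one_mul] at h2
    exact h2
end bd

lemma span_minorsSet {l m : ℕ} (F : Matrix (Fin l) (Fin m) A) (k : ℕ) :
    Ideal.span (minorsSet F k) = mI F k := by
  apply le_antisymm
  · refine Ideal.span_le.2 ?_
    rintro _ ⟨f, g, rfl⟩
    exact det_mem_mI _ _ _
  · refine mI_le fun f g => ?_
    by_cases hf : Function.Injective f
    · by_cases hg : Function.Injective g
      · exact Ideal.subset_span ⟨⟨f, hf⟩, ⟨g, hg⟩, rfl⟩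
      · simp only [Function.Injective] at hg
        push Not at hg
        obtain ⟨i, j, h, hne⟩ := hg
        rw [det_zero_of_column_eq hne]
        · exact Ideal.zero_mem _
        · intro t; simp [h]
    · simp only [Function.Injective] at hf
      push Not at hf
      obtain ⟨i, j, h, hne⟩ := hf
      rw [det_zero_of_row_eq hne]
      · exact Ideal.zero_mem _
      · funext t; simp [h]

/-- padding of units -/
lemma isUnit_pad {l r : Type*} [Fintype l] [DecidableEq l] [Fintype r] [DecidableEq r]
    {J : Matrix l r A} {J' : Matrix r l A} (h : J' * J = 1) {γ : Matrix r r A} (hγ : IsUnit γ) :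
    IsUnit (J * γ * J' + (1 - J * J')) := by
  have key : ∀ γ γ' : Matrix r r A, γ * γ' = 1 →
      (J * γ * J' + (1 - J * J')) * (J * γ' * J' + (1 - J * J')) = 1 := by
    intro γ γ' hh
    have e1 : (J * γ * J') * (J * γ' * J') = J * J' := by
      calc _ = J * γ * (J' * J) * γ' * J' := by simp only [Matrix.mul_assoc]
        _ = J * (γ * γ') * J' := by rw [h, Matrix.mul_one]; simp only [Matrix.mul_assoc]
        _ = _ := by rw [hh, Matrix.mul_one]
    have e2 : (J * γ * J') * (J * J') = J * γ * J' := by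
      calc _ = J * γ * (J' * J) * J' := by simp only [Matrix.mul_assoc]
        _ = _ := by rw [h, Matrix.mul_one]
    have e3 : (J * J') * (J * γ' * J') = J * γ' * J' := by
      calc _ = J * (J' * J) * γ' * J' := by simp only [Matrix.mul_assoc]
        _ = _ := by rw [h, Matrix.mul_one]
    have e4 : (J * J') * (J * J') = J * J' := by
      calc _ = J * (J' * J) * J' := by simp only [Matrix.mul_assoc]
        _ = _ := by rw [h, Matrix.mul_one]
    rw [add_mul, mul_add, mul_add, mul_sub, sub_mul, sub_mul, e1]
    simp only [mul_one, one_mul, mul_sub]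
    rw [e2, e3, e4]
    abel
  obtain ⟨u, rfl⟩ := hγ
  exact ⟨⟨_, _, key u (u⁻¹ : (Matrix r r A)ˣ) u.mul_inv, key (u⁻¹ : (Matrix r r A)ˣ) u u.inv_mul⟩, rfl⟩

end MinorIdeals

section Columns

/-- columns related by an invertible matrix modulo `π` -/
def Rl {A : Type*} [CommRing A] {ι : Type*} [Fintype ι] [DecidableEq ι] (π : A) (w w' : ι → A) : Prop :=
  ∃ γ : Matrix ι ι A, IsUnit γ ∧ ∀ i, π ∣ (γ *ᵥ w) i - w' i

variable {A : Type*} [CommRing A] {ι : Type*} [Fintype ι] [DecidableEq ι]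

lemma dvd_mulVec {π : A} {κ : Type*} {w : ι → A} (γ : Matrix κ ι A) (h : ∀ i, π ∣ w i) (i : κ) :
    π ∣ (γ *ᵥ w) i := by
  simp only [mulVec, dotProduct]
  exact Finset.dvd_sum fun j _ => Dvd.dvd.mul_left (h j) _

lemma Rl.of_dvd {π : A} {w w' : ι → A} (h : ∀ i, π ∣ w i - w' i) : Rl π w w' :=
  ⟨1, isUnit_one, by simpa using h⟩

lemma Rl.refl (π : A) (w : ι → A) : Rl π w w := Rl.of_dvd (by simp)

lemma Rl.of_eq {π : A} {w w' : ι → A} {γ : Matrix ι ι A} (hγ : IsUnit γ) (h : γ *ᵥ w = w') :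
    Rl π w w' := ⟨γ, hγ, by simp [h]⟩

lemma Rl.trans {π : A} {w w' w'' : ι → A} (h : Rl π w w') (h' : Rl π w' w'') : Rl π w w'' := by
  obtain ⟨γ, hγ, h⟩ := h
  obtain ⟨γ', hγ', h'⟩ := h'
  refine ⟨γ' * γ, hγ'.mul hγ, fun i => ?_⟩
  have h1 := dvd_mulVec (w := fun i => (γ *ᵥ w) i - w' i) γ' h i
  have h2 : (γ' * γ) *ᵥ w - w'' = γ' *ᵥ (γ *ᵥ w - w') + (γ' *ᵥ w' - w'') := by
    rw [mulVec_sub, mulVec_mulVec]; abel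
  have h3 := congrFun h2 i
  simp only [Pi.sub_apply, Pi.add_apply] at h3
  rw [h3]
  exact dvd_add h1 (h' i)

lemma Rl.symm {π : A} {w w' : ι → A} (h : Rl π w w') : Rl π w' w := by
  obtain ⟨_, ⟨γ, rfl⟩, h⟩ := h
  refine ⟨(γ⁻¹ : (Matrix ι ι A)ˣ), Units.isUnit _, fun i => ?_⟩
  have h1 := dvd_mulVec (w := fun i => ((γ : Matrix ι ι A) *ᵥ w) i - w' i)
    ((γ⁻¹ : (Matrix ι ι A)ˣ) : Matrix ι ι A) h i
  have h2 : ((γ⁻¹ : (Matrix ι ι A)ˣ) : Matrix ι ι A) *ᵥ w' - w =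
      - (((γ⁻¹ : (Matrix ι ι A)ˣ) : Matrix ι ι A) *ᵥ ((γ : Matrix ι ι A) *ᵥ w - w')) := by
    rw [mulVec_sub, mulVec_mulVec, Units.inv_mul, one_mulVec]; abel
  have h3 := congrFun h2 i
  simp only [Pi.sub_apply, Pi.neg_apply] at h3
  rw [h3]
  exact (dvd_neg.2 h1)

lemma map_mulVec' {B : Type*} [CommRing B] (φ : A →+* B) {κ : Type*} (γ : Matrix κ ι A) (w : ι → A) (i : κ) :
    (γ.map φ *ᵥ fun j => φ (w j)) i = φ ((γ *ᵥ w) i) := by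
  simp [mulVec, dotProduct]

lemma Rl.map {B : Type*} [CommRing B] (φ : A →+* B) {π : A} {w w' : ι → A} (h : Rl π w w') :
    Rl (φ π) (fun i => φ (w i)) (fun i => φ (w' i)) := by
  obtain ⟨γ, hγ, h⟩ := h
  refine ⟨γ.map φ, isUnit_map φ hγ, fun i => ?_⟩
  rw [map_mulVec', ← map_sub]
  exact map_dvd φ (h i)

lemma isUnit_one_add_vecMulVec {u v : ι → A} (h : v ⬝ᵥ u = 0) : IsUnit (1 + vecMulVec u v) := by
  have key : ∀ u : ι → A, v ⬝ᵥ u = 0 → (1 + vecMulVec u v) * (1 + vecMulVec (-u) v) = 1 := by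
    intro u hu
    rw [mul_add, add_mul, add_mul, vecMulVec_mul_vecMulVec]
    simp [hu, neg_vecMulVec]
  refine ⟨⟨_, _, key u h, ?_⟩, rfl⟩
  have := key (-u) (by simp [h])
  simpa using this

lemma Rl.transvection {π : A} (w u v : ι → A) (h : v ⬝ᵥ u = 0) :
    Rl π w (fun i => w i + u i * (v ⬝ᵥ w)) := by
  refine Rl.of_eq (isUnit_one_add_vecMulVec h) ?_
  funext i
  simp [add_mulVec, vecMulVec_mulVec, mul_comm]

lemma Rl.row {π : A} (w a : ι → A) (i1 : ι) (h : a i1 = 0) :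
    Rl π w (Function.update w i1 (w i1 + ∑ j, a j * w j)) := by
  have := Rl.transvection (π := π) w (Pi.single i1 1) a (by simp [h])
  convert this using 1
  funext i
  by_cases hi : i = i1
  · subst hi; simp [dotProduct]
  · simp [hi]

lemma Rl.of_unit {x : ι → A} {i0 i1 : ι} (hne : i0 ≠ i1) (h : IsUnit (x i1)) :
    Rl 0 x (Pi.single i0 1) := by
  obtain ⟨u, hu⟩ := h
  have h1 := Rl.row (π := 0) x (Pi.single i1 ((u⁻¹ : Aˣ) * (1 - x i0))) i0 (by simp [hne])
  refine h1.trans ?_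
  have h2 : x i0 + ∑ j, (Pi.single i1 (((u⁻¹ : Aˣ) : A) * (1 - x i0)) : ι → A) j * x j = 1 := by
    rw [Finset.sum_eq_single i1]
    · simp only [Pi.single_eq_same]
      rw [← hu]
      linear_combination (1 - x i0) * u.inv_mul
    · intro j _ hj; simp [hj]
    · simp
  rw [h2]
  set y := Function.update x i0 1 with hy
  have h3 := Rl.transvection (π := 0) y (Pi.single i0 1 - y) (Pi.single i0 1) (by simp [hy])
  convert h3 using 1
  funext i
  simp [hy]

lemma Rl.of_unit' [Nontrivial ι] {x : ι → A} (i0 i1 : ι) (h : IsUnit (x i1)) :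
    Rl 0 x (Pi.single i0 1) := by
  by_cases hne : i0 = i1
  · subst hne
    obtain ⟨j, hj⟩ := exists_ne i0
    exact (Rl.of_unit hj h).trans (Rl.of_unit (i1 := j) hj.symm (by simp))
  · exact Rl.of_unit hne h

lemma Rl.of_coprime_one [Nontrivial ι] {x : ι → A} (i0 i1 : ι) (a : ι → A) (ha : a i1 = 0)
    (h : IsUnit (x i1 + ∑ j, a j * x j)) : Rl 0 x (Pi.single i0 1) :=
  (Rl.row x a i1 ha).trans (Rl.of_unit' i0 i1 (by simpa using h))

/-- Suslin key matrix -/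
lemma suslin_key [IsDomain A] {W W' t : ι → A} {c g1 g2 m1 m2 : A} {i0 i1 : ι} (hne : i0 ≠ i1)
    (hW : ∀ i, W' i = W i + c * t i) (h1 : g1 * W i0 + g2 * W i1 = c)
    (h2 : (g1 + c * m1) * W' i0 + (g2 + c * m2) * W' i1 = c) : Rl 0 W W' := by
  by_cases hc : c = 0
  · refine Rl.of_dvd ?_
    intro i; rw [hW]; simp [hc]
  let U : Matrix ι (Fin 2) A := fun i => ![t i, (Pi.single i0 (-m2) + Pi.single i1 m1 : ι → A) i]
  let V : Matrix (Fin 2) ι A := ![Pi.single i0 g1 + Pi.single i1 g2,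
    Pi.single i0 (-(W i1)) + Pi.single i1 (W i0)]
  have e : (m1 * t i0 + m2 * t i1) * c + (g1 * t i0 + g2 * t i1) + (m1 * W i0 + m2 * W i1) = 0 := by
    rw [hW, hW] at h2
    apply mul_left_cancel₀ hc
    linear_combination h2 - h1
  have s1 : ∀ (j : ι) (a : A) (f : ι → A), ∑ i, (Pi.single j a : ι → A) i * f i = a * f j := by
    intro j a f
    rw [Finset.sum_eq_single j]
    · simp
    · intro i _ hi; simp [hi]
    · simp
  refine Rl.of_eq (γ := 1 + U * V) ?_ ?_
  · rw [Matrix.isUnit_iff_isUnit_det, Matrix.det_one_add_mul_comm]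
    have v00 : (V * U) 0 0 = g1 * t i0 + g2 * t i1 := by
      rw [Matrix.mul_apply]; simp [V, U, add_mul, Finset.sum_add_distrib, s1]
    have v01 : (V * U) 0 1 = g2 * m1 - g1 * m2 := by
      rw [Matrix.mul_apply]; simp [V, U, add_mul, Finset.sum_add_distrib, s1, hne, hne.symm]; ring
    have v10 : (V * U) 1 0 = -(W i1) * t i0 + W i0 * t i1 := by
      rw [Matrix.mul_apply]; simp [V, U, add_mul, Finset.sum_add_distrib, s1]
    have v11 : (V * U) 1 1 = m2 * W i1 + m1 * W i0 := by
      rw [Matrix.mul_apply]; simp [V, U, add_mul, Finset.sum_add_distrib, s1, hne, hne.symm]; ring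
    rw [det_fin_two]
    simp only [Matrix.add_apply, v00, v01, v10, v11, Matrix.one_apply]
    have : (1 + (g1 * t i0 + g2 * t i1)) * (1 + (m2 * W i1 + m1 * W i0)) -
        (g2 * m1 - g1 * m2) * (-(W i1) * t i0 + W i0 * t i1) = 1 := by
      linear_combination e + (m1 * t i0 + m2 * t i1) * h1
    simp only [Fin.isValue, if_true, zero_ne_one, one_ne_zero, if_false, zero_add, this]
    exact isUnit_one
  · have h3 : V *ᵥ W = ![c, 0] := by
      funext i
      fin_cases i
      · simp [V, mulVec, dotProduct, add_mul, Finset.sum_add_distrib, s1, h1]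
      · simp [V, mulVec, dotProduct, add_mul, Finset.sum_add_distrib, s1]; ring
    funext i
    rw [add_mulVec, ← mulVec_mulVec, h3]
    simp [U, mulVec, dotProduct, Fin.sum_univ_two, hW]
    ring

/-- stable range -/
lemma stable_range {P : Type*} [CommRing P] [IsDomain P] [IsPrincipalIdealRing P]
    {ϖ : P} (h0 : ϖ ≠ 0) (c : ι → P) (i0 : ι)
    (h : Ideal.span (Set.range c) ⊔ Ideal.span {ϖ} = ⊤) :
    ∃ a : ι → P, a i0 = 0 ∧ IsCoprime ϖ (c i0 + ∑ j, a j * c j) := by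
  classical
  let I : Ideal P := Ideal.span (Set.range (Function.update c i0 0))
  obtain ⟨d, hd⟩ := (IsPrincipalIdealRing.principal I).principal
  have hd' : d ∈ I := hd ▸ Submodule.mem_span_singleton_self d
  obtain ⟨a, ha⟩ := (Ideal.mem_span_range_iff_exists_fun).1 hd'
  let S := (UniqueFactorizationMonoid.factors ϖ).filter (fun p => ¬ p ∣ c i0)
  let s := S.prod
  refine ⟨fun j => s * Function.update a i0 0 j, by simp, ?_⟩
  have hsum : ∑ j, s * Function.update a i0 0 j * c j = s * d := by
    rw [← ha, Finset.mul_sum]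
    refine Finset.sum_congr rfl fun j _ => ?_
    by_cases hj : j = i0
    · subst hj; simp
    · simp [hj, mul_assoc]
  rw [hsum]
  refine isCoprime_of_prime_dvd (by tauto) ?_
  intro p hp hp1 hp2
  have hpS : p ∣ s → ¬ p ∣ c i0 := by
    intro h hc
    obtain ⟨q, hq, hpq⟩ := Prime.exists_mem_multiset_dvd hp h
    rw [Multiset.mem_filter] at hq
    have hq' := UniqueFactorizationMonoid.irreducible_of_factor q hq.1
    have := (hp.irreducible.associated_of_dvd hq' hpq)
    exact hq.2 (this.symm.dvd.trans hc)
  by_cases hpc : p ∣ c i0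
  · have h1 : p ∣ s * d := (dvd_add_right hpc).1 hp2
    have h2 : p ∣ d := (hp.dvd_or_dvd h1).resolve_left fun h => hpS h hpc
    apply hp.not_isUnit
    have h3 : Ideal.span (Set.range c) ⊔ Ideal.span {ϖ} ≤ Ideal.span {p} := by
      refine sup_le (Ideal.span_le.2 ?_) ?_
      · rintro _ ⟨j, rfl⟩
        by_cases hj : j = i0
        · subst hj; exact Ideal.mem_span_singleton.2 hpc
        · have : c j ∈ I := Ideal.subset_span ⟨j, by simp [hj]⟩
          rw [hd] at this
          exact Ideal.mem_span_singleton.2 (h2.trans (Ideal.mem_span_singleton.1 this))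
      · rw [Ideal.span_singleton_le_span_singleton]; exact hp1
    rw [h, top_le_iff, Ideal.span_singleton_eq_top] at h3
    exact h3
  · obtain ⟨q, hq, hpq⟩ := UniqueFactorizationMonoid.exists_mem_factors_of_dvd h0 hp.irreducible hp1
    have : p ∣ s := hpq.dvd.trans (Multiset.dvd_prod (Multiset.mem_filter.2 ⟨hq, fun h => hpc (hpq.dvd.trans h)⟩))
    exact hpc ((dvd_add_left (this.mul_right d)).1 hp2)

end Columns

section Suslin
variable {A : Type*} [CommRing A] {ι : Type*} [Fintype ι] [DecidableEq ι]

lemma comp_sub_dvd (p b b' : Polynomial A) : b' - b ∣ p.comp b' - p.comp b := by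
  have := Polynomial.sub_dvd_eval_sub b' b (p.map Polynomial.C)
  simpa [Polynomial.eval_map, Polynomial.comp] using this

lemma exists_const_of_monic (m : Ideal A) [hm : m.IsMaximal] {f g : Polynomial A} (hf : f.Monic)
    (h : IsCoprime (f.map (Ideal.Quotient.mk m)) (g.map (Ideal.Quotient.mk m))) :
    ∃ c : A, c ∉ m ∧ ∃ p q : Polynomial A, p * f + q * g = Polynomial.C c := by
  let I : Ideal (Polynomial A) := Ideal.span {f, g}
  let M := Polynomial A ⧸ I
  have hfin : Module.Finite A (Polynomial A ⧸ Ideal.span {f}) := Polynomial.Monic.finite_quotient hf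
  have hfin' : Module.Finite A M := by
    have hle : Ideal.span {f} ≤ I := Ideal.span_mono (by simp)
    exact Module.Finite.of_surjective (M := Polynomial A ⧸ Ideal.span {f})
      (Ideal.Quotient.factorₐ A hle).toLinearMap (Ideal.Quotient.factor_surjective hle)
  obtain ⟨p, q, hpq⟩ := h
  obtain ⟨p, rfl⟩ := Polynomial.map_surjective _ Ideal.Quotient.mk_surjective p
  obtain ⟨q, rfl⟩ := Polynomial.map_surjective _ Ideal.Quotient.mk_surjective q
  have h1 : p * f + q * g - 1 ∈ m.map Polynomial.C := by
    rw [Ideal.mem_map_C_iff]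
    intro n
    rw [← Ideal.Quotient.eq_zero_iff_mem, ← Polynomial.coeff_map]
    simp [hpq]
  have hI : p * f + q * g ∈ I := Ideal.mem_span_pair.2 ⟨p, q, rfl⟩
  have h2 : (1 : M) ∈ m.map (algebraMap A M) := by
    have e : algebraMap A M = (Ideal.Quotient.mk I).comp Polynomial.C := rfl
    have h3 := Ideal.mem_map_of_mem (Ideal.Quotient.mk I) h1
    rw [Ideal.map_map, ← e, map_sub, Ideal.Quotient.eq_zero_iff_mem.2 hI, zero_sub, map_one] at h3
    exact neg_mem_iff.1 h3
  have h4 : (⊤ : Submodule A M) ≤ m • ⊤ := by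
    rw [Ideal.smul_top_eq_map, (Ideal.eq_top_iff_one _).2 h2]
    intro x _; trivial
  obtain ⟨c, hc, hc'⟩ := Submodule.exists_sub_one_mem_and_smul_eq_zero_of_fg_of_le_smul m
    (⊤ : Submodule A M) Module.Finite.fg_top h4
  refine ⟨c, fun h => hm.ne_top ?_, ?_⟩
  · rw [Ideal.eq_top_iff_one]
    have := m.sub_mem h hc
    simpa using this
  · have h5 := hc' 1 trivial
    have h6 : (Ideal.Quotient.mk I) (Polynomial.C c) = 0 := by
      exact (Algebra.algebraMap_eq_smul_one (A := M) c).trans h5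
    rw [Ideal.Quotient.eq_zero_iff_mem, Ideal.mem_span_pair] at h6
    obtain ⟨a, b, h⟩ := h6
    exact ⟨a, b, h⟩

/-- weakening of the modulus -/
lemma Rl.of_zero {π : A} {w w' : ι → A} (h : Rl 0 w w') : Rl π w w' := by
  obtain ⟨γ, hγ, h⟩ := h
  exact ⟨γ, hγ, fun i => by rw [zero_dvd_iff.1 (h i)]; simp⟩

lemma suslin [IsDomain A] [Nontrivial ι] (π : A) (w : ι → Polynomial A) (i0 : ι) (hw : (w i0).Monic)
    (h : Ideal.span (Set.range w) ⊔ Ideal.span {Polynomial.C π} = ⊤) (b b' : Polynomial A) :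
    Rl (Polynomial.C π) (fun i => (w i).comp b) (fun i => (w i).comp b') := by
  classical
  let J : Ideal A :=
    { carrier := {c | ∀ b b' : Polynomial A, Polynomial.C c ∣ b' - b →
        Rl (Polynomial.C π) (fun i => (w i).comp b) (fun i => (w i).comp b')}
      zero_mem' := by
        intro b b' h
        simp only [map_zero, zero_dvd_iff, sub_eq_zero] at h
        rw [h]
        exact Rl.refl _ _
      add_mem' := by
        rintro c d hc hd b b' ⟨s, hs⟩
        have h1 := hc b (b + Polynomial.C c * s) (by simp)
        have h2 := hd (b + Polynomial.C c * s) b' ⟨s, by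
          rw [map_add] at hs; linear_combination hs⟩
        exact h1.trans h2
      smul_mem' := by
        intro a c hc b b' h
        refine hc b b' (dvd_trans ?_ h)
        simp }
  have hπ : π ∈ J := by
    intro b b' h
    refine Rl.of_dvd fun i => ?_
    rw [← dvd_neg, neg_sub]
    exact h.trans (comp_sub_dvd _ _ _)
  suffices hJ : J = ⊤ by
    have : (1 : A) ∈ J := by rw [hJ]; trivial
    exact this b b' (by simp)
  by_contra hJ
  obtain ⟨m, hm, hle⟩ := Ideal.exists_le_maximal J hJ
  letI : Field (A ⧸ m) := Ideal.Quotient.field m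
  obtain ⟨i1, hne⟩ := exists_ne i0
  let φ := Polynomial.mapRingHom (Ideal.Quotient.mk m)
  have hmon : (φ (w i0)).Monic := hw.map _
  have hcov : Ideal.span (Set.range (Function.update (fun i => φ (w i)) i0 0)) ⊔
      Ideal.span {φ (w i0)} = ⊤ := by
    rw [eq_top_iff]
    have h1 := congrArg (Ideal.map φ) h
    rw [Ideal.map_sup, Ideal.map_span, Ideal.map_span, Ideal.map_top] at h1
    rw [← h1]
    refine sup_le (Ideal.span_le.2 ?_) (Ideal.span_le.2 ?_)
    · rintro _ ⟨_, ⟨i, rfl⟩, rfl⟩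
      by_cases hi : i = i0
      · subst hi
        exact Ideal.mem_sup_right (Ideal.mem_span_singleton_self _)
      · exact Ideal.mem_sup_left (Ideal.subset_span ⟨i, by simp [hi]⟩)
    · rintro _ ⟨_, rfl, rfl⟩
      have : φ (Polynomial.C π) = 0 := by
        simp [φ, Ideal.Quotient.eq_zero_iff_mem.2 (hle hπ)]
      rw [this]; exact Ideal.zero_mem _
  obtain ⟨a, ha, hcop⟩ := stable_range hmon.ne_zero _ i1 hcov
  choose a' ha' using fun i => Polynomial.map_surjective _ (Ideal.Quotient.mk_surjective (I := m)) (a i)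
  let a'' := Function.update (Function.update a' i0 0) i1 0
  let G := w i1 + ∑ j, a'' j * w j
  have hG : φ G = (Function.update (fun i => φ (w i)) i0 0) i1 +
      ∑ j, a j * (Function.update (fun i => φ (w i)) i0 0) j := by
    simp only [G, map_add, map_sum, map_mul]
    rw [Function.update_of_ne hne]
    congr 1
    refine Finset.sum_congr rfl fun j _ => ?_
    by_cases hj1 : j = i1
    · subst hj1; simp [a'', ha]
    · by_cases hj0 : j = i0
      · subst hj0; simp [a'', hj1]
      · simp [a'', hj1, hj0, φ, ha']
  rw [← hG] at hcop
  obtain ⟨c, hc, p, q, hpq⟩ := exists_const_of_monic m hw hcop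
  apply hc
  apply hle
  intro b b' hb
  have hrow : ∀ b : Polynomial A, Rl (Polynomial.C π) (fun i => (w i).comp b)
      (fun i => (Function.update w i1 G i).comp b) := by
    intro b
    have := Rl.row (π := Polynomial.C π) (fun i => (w i).comp b) (fun i => (a'' i).comp b) i1
      (by simp [a''])
    convert this using 1
    funext i
    by_cases hi : i = i1
    · subst hi
      simp only [G, Function.update_self, Polynomial.add_comp, Polynomial.sum_comp, Polynomial.mul_comp]
    · simp [hi]
  refine (hrow b).trans (Rl.trans ?_ (hrow b').symm)
  apply Rl.of_zero
  have hdv : ∀ f : Polynomial A, ∃ t, f.comp b' = f.comp b + Polynomial.C c * t := by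
    intro f
    obtain ⟨t, ht⟩ := hb.trans (comp_sub_dvd f b b')
    exact ⟨t, by linear_combination ht⟩
  choose t ht using fun i => hdv (Function.update w i1 G i)
  obtain ⟨m1, hm1⟩ := hdv p
  obtain ⟨m2, hm2⟩ := hdv q
  have e1 : Function.update w i1 G i0 = w i0 := by simp [hne.symm]
  have e2 : Function.update w i1 G i1 = G := by simp
  refine suslin_key (t := t) (c := Polynomial.C c) (g1 := p.comp b) (g2 := q.comp b) (m1 := m1)
    (m2 := m2) (i0 := i0) (i1 := i1) hne.symm ht ?_ ?_
  · rw [e1, e2]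
    have := congrArg (fun f => Polynomial.comp f b) hpq
    simpa using this
  · rw [e1, e2, ← hm1, ← hm2]
    have := congrArg (fun f => Polynomial.comp f b') hpq
    simpa using this

/-- scaled version -/
lemma suslin' [IsDomain A] [Nontrivial ι] (π : A) (w : ι → Polynomial A) (i0 : ι) (u u' : A)
    (hu : π ∣ u * u' - 1) (f : Polynomial A) (hf : f.Monic)
    (hw : Polynomial.C π ∣ Polynomial.C u * w i0 - f)
    (h : Ideal.span (Set.range w) ⊔ Ideal.span {Polynomial.C π} = ⊤) (b b' : Polynomial A) :
    Rl (Polynomial.C π) (fun i => (w i).comp b) (fun i => (w i).comp b') := by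
  let w' : ι → Polynomial A := Function.update (fun i => Polynomial.C u * w i) i0 f
  have hw' : ∀ i, Polynomial.C π ∣ Polynomial.C u * w i - w' i := by
    intro i
    by_cases hi : i = i0
    · subst hi; simpa [w'] using hw
    · simp [w', hi]
  have hu' : Polynomial.C π ∣ Polynomial.C u * Polynomial.C u' - 1 := by
    have := map_dvd Polynomial.C hu
    simpa using this
  have hw'' : ∀ i, Polynomial.C π ∣ w i - Polynomial.C u' * w' i := by
    intro i
    have e : w i - Polynomial.C u' * w' i = Polynomial.C u' * (Polynomial.C u * w i - w' i)
      - w i * (Polynomial.C u * Polynomial.C u' - 1) := by ring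
    rw [e]
    exact dvd_sub ((hw' i).mul_left _) (hu'.mul_left _)
  have h' : Ideal.span (Set.range w') ⊔ Ideal.span {Polynomial.C π} = ⊤ := by
    rw [eq_top_iff, ← h]
    refine sup_le (Ideal.span_le.2 ?_) le_sup_right
    rintro _ ⟨i, rfl⟩
    have e : w i = Polynomial.C u' * w' i + (w i - Polynomial.C u' * w' i) := by ring
    rw [e]
    refine Ideal.add_mem _ (Ideal.mul_mem_left _ _ (Ideal.mem_sup_left (Ideal.subset_span ⟨i, rfl⟩)))
      (Ideal.mem_sup_right (Ideal.mem_span_singleton.2 (hw'' i)))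
  have key := suslin π w' i0 (by simpa [w'] using hf) h' b b'
  obtain ⟨γ, hγ, hk⟩ := key
  have hc : ∀ b i, Polynomial.C π ∣ (w i).comp b - Polynomial.C u' * (w' i).comp b := by
    intro b i
    obtain ⟨s, hs⟩ := hw'' i
    refine ⟨s.comp b, ?_⟩
    have := congrArg (fun f => Polynomial.comp f b) hs
    simpa using this
  have k1 : Rl (Polynomial.C π) (fun i => Polynomial.C u' * (w' i).comp b)
      (fun i => Polynomial.C u' * (w' i).comp b') := by
    refine ⟨γ, hγ, fun i => ?_⟩
    have e : (γ *ᵥ fun i => Polynomial.C u' * (w' i).comp b) =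
      Polynomial.C u' • (γ *ᵥ fun i => (w' i).comp b) := by
      rw [← mulVec_smul]; rfl
    rw [e]
    simp only [Pi.smul_apply, smul_eq_mul, ← mul_sub]
    exact (hk i).mul_left _
  exact (Rl.of_dvd (hc b)).trans (k1.trans (Rl.of_dvd (hc b')).symm)
end Suslin

section Coord
variable {k : Type*} [CommRing k] {n : ℕ}

/-- Nagata substitution -/
noncomputable def nagT1 (d : ℕ) (c : k) :
    MvPolynomial (Fin (n + 1)) k →ₐ[k] MvPolynomial (Fin (n + 1)) k :=
  aeval fun i ↦ if i = 0 then X 0 else X i + c • X 0 ^ (d ^ i.1)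

lemma nagT1_comp (d : ℕ) (c : k) :
    (nagT1 (n := n) d c).comp (nagT1 d (-c)) = AlgHom.id _ _ := by
  rw [nagT1, nagT1, comp_aeval, ← MvPolynomial.aeval_X_left]
  ext i v
  cases i using Fin.cases <;> simp

/-- Nagata automorphism -/
noncomputable def nagT (d : ℕ) : MvPolynomial (Fin (n + 1)) k ≃ₐ[k] MvPolynomial (Fin (n + 1)) k :=
  AlgEquiv.ofAlgHom (nagT1 d 1) (nagT1 d (-1))
  (nagT1_comp d 1) (by simpa using nagT1_comp (n := n) d (-1 : k))

lemma nagT_apply (d : ℕ) (f : MvPolynomial (Fin (n + 1)) k) : nagT d f =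
  aeval (fun i : Fin (n+1) ↦ if i = 0 then X 0 else X i + (1 : k) • X 0 ^ (d ^ i.1)) f := rfl

lemma nagT_map {k' : Type*} [CommRing k'] (φ : k →+* k') (d : ℕ) (f : MvPolynomial (Fin (n + 1)) k) :
    nagT d (f.map φ) = (nagT d f).map φ := by
  rw [nagT_apply, nagT_apply]
  have := DFunLike.congr_fun (f := ((aeval (fun i : Fin (n+1) ↦ if i = 0 then X 0 else X i + (1 : k') • X 0 ^ (d ^ i.1))).toRingHom.comp (MvPolynomial.map φ)))
    (g := (MvPolynomial.map φ).comp (aeval (fun i : Fin (n+1) ↦ if i = 0 then X 0 else X i + (1 : k) • X 0 ^ (d ^ i.1))).toRingHom) ?_ f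
  · simpa using this
  · ext i
    · simp
    · simp only [RingHom.comp_apply, AlgHom.toRingHom_eq_coe, RingHom.coe_coe, map_X, aeval_X]
      split_ifs <;> simp

lemma finSuccEquiv_map {k' : Type*} [CommRing k'] (φ : k →+* k') (f : MvPolynomial (Fin (n + 1)) k) :
    finSuccEquiv k' n (f.map φ) = (finSuccEquiv k n f).map (MvPolynomial.map φ) := by
  have := DFunLike.congr_fun (f := (finSuccEquiv k' n).toAlgHom.toRingHom.comp (MvPolynomial.map φ))
    (g := (Polynomial.mapRingHom (MvPolynomial.map φ)).comp (finSuccEquiv k n).toAlgHom.toRingHom) ?_ f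
  · simpa using this
  · ext i
    · simp [finSuccEquiv_apply]
    · refine Fin.cases ?_ (fun i => ?_) i
      · simp [finSuccEquiv_apply]
      · simp [finSuccEquiv_apply]

end Coord

section CoordField
variable {k : Type*} [Field k] {n : ℕ}

lemma nag_sum_ne {d : ℕ} (hd : 1 < d) {v w : Fin (n + 1) →₀ ℕ} (vlt : ∀ i, v i < d) (wlt : ∀ i, w i < d) (ne : v ≠ w) :
    ∑ x : Fin (n + 1), d ^ x.1 * v x ≠ ∑ x : Fin (n + 1), d ^ x.1 * w x := by
  intro h
  refine ne <| Finsupp.ext <| congrFun <| List.ofFn_inj.mp ?_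
  apply Nat.ofDigits_inj_of_len_eq hd
    (by simp) (by grind) (by grind)
  simpa only [Nat.ofDigits_eq_sum_mapIdx, List.mapIdx_eq_ofFn, List.get_ofFn, List.length_ofFn,
    Fin.val_cast, mul_comm, List.sum_ofFn] using! h

lemma nag_monomial (d : ℕ) (hd : 1 < d) (v : Fin (n + 1) →₀ ℕ) {a : k} (ha : a ≠ 0) :
    (finSuccEquiv k n (nagT d (monomial v a))).natDegree = ∑ i : Fin (n + 1), d ^ i.1 * v i ∧
    (finSuccEquiv k n (nagT d (monomial v a))).leadingCoeff = MvPolynomial.C a := by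
  have hd0 : ∀ j : ℕ, d ^ j ≠ 0 := fun j => pow_ne_zero _ (by lia)
  have key : finSuccEquiv k n (nagT d (monomial v a)) = Polynomial.C (MvPolynomial.C a) *
      (Polynomial.X ^ (v 0) * ∏ i : Fin n, (Polynomial.X ^ (d ^ i.succ.1) + Polynomial.C (X i)) ^ v i.succ) := by
    rw [monomial_eq, Finsupp.prod_pow v fun a ↦ X a, nagT_apply]
    simp only [Fin.prod_univ_succ, map_mul, map_prod, map_pow,
      MvPolynomial.aeval_C, MvPolynomial.aeval_X, if_pos, Fin.succ_ne_zero,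
      ite_false, one_smul, map_add, finSuccEquiv_X_zero, finSuccEquiv_X_succ, algebraMap_eq]
    congr 1
    · simp [finSuccEquiv_apply]
    · congr 1
      refine Finset.prod_congr rfl fun i _ => ?_
      rw [add_comm]
  have hmon : ∀ i : Fin n, (Polynomial.X ^ (d ^ i.succ.1) + Polynomial.C (X (R := k) i)).Monic :=
    fun i => Polynomial.monic_X_pow_add_C _ (hd0 _)
  have hm : (Polynomial.X ^ (v 0) * ∏ i : Fin n, (Polynomial.X ^ (d ^ i.succ.1) + Polynomial.C (X (R := k) i)) ^ v i.succ).Monic :=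
    (Polynomial.monic_X_pow _).mul (Polynomial.monic_prod_of_monic _ _ fun i _ => (hmon i).pow _)
  have hC : (MvPolynomial.C a : MvPolynomial (Fin n) k) ≠ 0 := by simpa using ha
  constructor
  · rw [key, Polynomial.natDegree_C_mul hC, Polynomial.Monic.natDegree_mul (Polynomial.monic_X_pow _)
      (Polynomial.monic_prod_of_monic _ _ fun i _ => (hmon i).pow _), Polynomial.natDegree_X_pow,
      Polynomial.natDegree_prod_of_monic _ _ (fun i _ => (hmon i).pow _), Fin.sum_univ_succ]
    congr 1
    · simp
    · refine Finset.sum_congr rfl fun i _ => ?_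
      rw [(hmon i).natDegree_pow, Polynomial.natDegree_X_pow_add_C, mul_comm]
  · rw [key, Polynomial.leadingCoeff_mul, hm.leadingCoeff, mul_one, Polynomial.leadingCoeff_C]

lemma nag_leadingCoeff (f : MvPolynomial (Fin (n + 1)) k) (hf : f ≠ 0) :
    ∃ (d : ℕ) (a : k), a ≠ 0 ∧ (finSuccEquiv k n (nagT d f)).leadingCoeff = MvPolynomial.C a := by
  classical
  set d := 2 + f.totalDegree with hd
  refine ⟨d, ?_⟩
  have hd1 : 1 < d := by lia
  have hlt : ∀ v ∈ f.support, ∀ i, v i < d := fun v hv i =>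
    lt_of_le_of_lt ((monomial_le_degreeOf i hv).trans (degreeOf_le_totalDegree f i)) (by lia)
  let N : (Fin (n+1) →₀ ℕ) → ℕ := fun v => ∑ i : Fin (n + 1), d ^ i.1 * v i
  obtain ⟨v, vin, vs⟩ := Finset.exists_max_image f.support N (support_nonempty.mpr hf)
  have hv0 := mem_support_iff.1 vin
  refine ⟨coeff v f, hv0, ?_⟩
  let p := fun w => finSuccEquiv k n (nagT d (monomial w (coeff w f)))
  have hsum : finSuccEquiv k n (nagT d f) = p v + ∑ w ∈ f.support.erase v, p w := by
    conv_lhs => rw [← f.support_sum_monomial_coeff]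
    rw [map_sum, map_sum, Finset.add_sum_erase _ p vin]
  rw [hsum, add_comm, Polynomial.leadingCoeff_add_of_degree_lt, (nag_monomial d hd1 v hv0).2]
  have hpv : p v ≠ 0 := by
    intro h0
    have := (nag_monomial d hd1 v hv0).2
    rw [show finSuccEquiv k n (nagT d (monomial v (coeff v f))) = 0 from h0] at this
    simp at this
    exact hv0 (C_eq_zero.1 this.symm)
  refine lt_of_le_of_lt (Polynomial.degree_sum_le _ _) ?_
  rw [Finset.sup_lt_iff (Ne.bot_lt (fun x ↦ hpv <| Polynomial.degree_eq_bot.mp x))]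
  intro w hw
  rw [Finset.mem_erase] at hw
  apply Polynomial.degree_lt_degree
  rw [(nag_monomial d hd1 v hv0).1, (nag_monomial d hd1 w (mem_support_iff.1 hw.2)).1]
  exact lt_of_le_of_ne (vs w hw.2) (nag_sum_ne hd1 (hlt w hw.2) (hlt v vin) hw.1)

end CoordField

section LemmaL
variable {B : Type*} [CommRing B]

lemma mk_span_eq_zero (π r : B) : Ideal.Quotient.mk (Ideal.span {π}) r = 0 ↔ π ∣ r := by
  rw [Ideal.Quotient.eq_zero_iff_mem, Ideal.mem_span_singleton]

lemma C_dvd_iff_map_mk {σ : Type*} (π : B) (f : MvPolynomial σ B) :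
    C π ∣ f ↔ f.map (Ideal.Quotient.mk (Ideal.span {π})) = 0 :=
  C_dvd_iff_map_hom_eq_zero _ _ (mk_span_eq_zero π) f

lemma CC_dvd_iff_map_mk {σ : Type*} (π : B) (f : Polynomial (MvPolynomial σ B)) :
    Polynomial.C (C π) ∣ f ↔ f.map (MvPolynomial.map (Ideal.Quotient.mk (Ideal.span {π}))) = 0 := by
  rw [Polynomial.C_dvd_iff_dvd_coeff, Polynomial.ext_iff]
  refine forall_congr' fun i => ?_
  rw [C_dvd_iff_map_mk]
  simp

lemma coord_mod {N : ℕ} (π : B) (hπ : (Ideal.span {π}).IsMaximal)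
    (f : MvPolynomial (Fin (N + 1)) B) (hf : ¬ C π ∣ f) :
    ∃ e : MvPolynomial (Fin (N + 1)) B ≃+* Polynomial (MvPolynomial (Fin N) B),
      (∀ b, e (C b) = Polynomial.C (C b)) ∧ ∃ (u u' : B) (q : Polynomial (MvPolynomial (Fin N) B)),
      π ∣ u * u' - 1 ∧ q.Monic ∧ Polynomial.C (C π) ∣ Polynomial.C (C u) * e f - q := by
  letI : Field (B ⧸ Ideal.span {π}) := Ideal.Quotient.field _
  rw [C_dvd_iff_map_mk] at hf
  obtain ⟨d, a, ha, hlc⟩ := nag_leadingCoeff _ hf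
  refine ⟨((nagT d).trans (finSuccEquiv B N)).toRingEquiv, ?_, ?_⟩
  · intro b
    have := ((nagT (n := N) d).trans (finSuccEquiv B N)).commutes b
    exact this
  obtain ⟨u', rfl⟩ := Ideal.Quotient.mk_surjective a
  obtain ⟨u, hu⟩ := Ideal.Quotient.mk_surjective ((Ideal.Quotient.mk (Ideal.span {π}) u')⁻¹)
  rw [nagT_map, finSuccEquiv_map] at hlc
  set p := finSuccEquiv B N (nagT d f) with hp
  set φ : MvPolynomial (Fin N) B →+* _ := MvPolynomial.map (Ideal.Quotient.mk (Ideal.span {π})) with hφ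
  have hmon : ((Polynomial.C (C u) * p).map φ).Monic := by
    rw [Polynomial.map_mul, Polynomial.Monic, Polynomial.leadingCoeff_mul, hlc, Polynomial.map_C,
      Polynomial.leadingCoeff_C, hφ, map_C, ← map_mul, hu, inv_mul_cancel₀ ha, map_one]
  obtain ⟨q, hq, -, hqm⟩ := Polynomial.lifts_and_natDegree_eq_and_monic
    (f := φ) (p := (Polynomial.C (C u) * p).map φ) ((Polynomial.mem_lifts _).2 ⟨_, rfl⟩) hmon
  refine ⟨u, u', q, ?_, hqm, ?_⟩
  · rw [← mk_span_eq_zero, map_sub, map_mul, hu, inv_mul_cancel₀ ha, map_one, sub_self]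
  · rw [CC_dvd_iff_map_mk, Polynomial.map_sub, hq]
    exact sub_self (Polynomial.map φ (Polynomial.C (C u) * p))

variable {ι : Type*} [Fintype ι] [DecidableEq ι]

lemma span_range_map_top {A A' : Type*} [CommRing A] [CommRing A'] (φ : A →+* A') {w : ι → A} {π : A}
    (h : Ideal.span (Set.range w) ⊔ Ideal.span {π} = ⊤) :
    Ideal.span (Set.range (fun i => φ (w i))) ⊔ Ideal.span {φ π} = ⊤ := by
  have h1 := congrArg (Ideal.map φ) h
  rw [Ideal.map_sup, Ideal.map_span, Ideal.map_span, Ideal.map_top, ← Set.range_comp,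
    Set.image_singleton] at h1
  exact h1

lemma span_range_of_Rl {A : Type*} [CommRing A] {w w' : ι → A} {π : A} (hr : Rl π w w')
    (h : Ideal.span (Set.range w) ⊔ Ideal.span {π} = ⊤) :
    Ideal.span (Set.range w') ⊔ Ideal.span {π} = ⊤ := by
  obtain ⟨γ, -, hγ⟩ := hr.symm
  rw [eq_top_iff, ← h]
  refine sup_le (Ideal.span_le.2 ?_) le_sup_right
  rintro _ ⟨i, rfl⟩
  have e : w i = (γ *ᵥ w') i - ((γ *ᵥ w') i - w i) := by ring
  rw [e]
  refine Ideal.sub_mem _ (Ideal.mem_sup_left ?_) (Ideal.mem_sup_right (Ideal.mem_span_singleton.2 (hγ i)))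
  simp only [mulVec, dotProduct]
  exact Ideal.sum_mem _ fun j _ => Ideal.mul_mem_left _ _ (Ideal.subset_span ⟨j, rfl⟩)

/-- Lemma L -/
lemma lemmaL [IsDomain B] [Nontrivial ι] (π : B) (hπ : (Ideal.span {π}).IsMaximal) (N : ℕ)
    (w : ι → MvPolynomial (Fin N) B)
    (h : Ideal.span (Set.range w) ⊔ Ideal.span {C π} = ⊤) :
    ∃ v : ι → B, Rl (C π) w (fun i => C (v i)) := by
  induction N with
  | zero =>
    refine ⟨fun i => (w i).coeff 0, Rl.of_dvd fun i => ?_⟩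
    have := eq_C_of_isEmpty (w i)
    rw [← this]; simp
  | succ N ih =>
    have hex : ∃ i0, ¬ C π ∣ w i0 := by
      by_contra hcon
      push Not at hcon
      have h1 : Ideal.span (Set.range w) ⊔ Ideal.span {C π} ≤ Ideal.span {C π} := by
        refine sup_le (Ideal.span_le.2 ?_) le_rfl
        rintro _ ⟨i, rfl⟩
        exact Ideal.mem_span_singleton.2 (hcon i)
      rw [h, top_le_iff, Ideal.span_singleton_eq_top] at h1
      apply hπ.ne_top
      rw [Ideal.span_singleton_eq_top]
      have := h1.map (constantCoeff (σ := Fin (N+1)) (R := B))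
      simpa using this
    obtain ⟨i0, hi0⟩ := hex
    obtain ⟨e, he, u, u', q, hu, hq, hd⟩ := coord_mod π hπ _ hi0
    have h1 := span_range_map_top e.toRingHom h
    simp only [RingEquiv.toRingHom_eq_coe, RingEquiv.coe_toRingHom, he] at h1
    have hu2 : (C π : MvPolynomial (Fin N) B) ∣ C u * C u' - 1 := by
      have := map_dvd (C (σ := Fin N)) hu
      simpa using this
    have h2 := suslin' (C π) (fun i => e (w i)) i0 (C u) (C u') hu2 q hq hd h1 Polynomial.X 0
    simp only [Polynomial.comp_X, Polynomial.comp_zero] at h2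
    have h3 := span_range_of_Rl h2 h1
    have h4 := span_range_map_top (Polynomial.evalRingHom 0) h3
    simp only [Polynomial.coe_evalRingHom, Polynomial.eval_C] at h4
    obtain ⟨v, hv⟩ := ih _ h4
    refine ⟨v, ?_⟩
    have h5 := h2.trans (hv.map Polynomial.C)
    have h6 := h5.map e.symm.toRingHom
    simpa [← he] using h6

/-- unimodular columns over polynomial rings -/
lemma qs_column {K : Type*} [Field K] [Nontrivial ι] {N : ℕ} (w : ι → MvPolynomial (Fin N) K)
    (h : Ideal.span (Set.range w) = ⊤) (i0 : ι) : Rl 0 w (Pi.single i0 1) := by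
  have h' : Ideal.span (Set.range w) ⊔ Ideal.span {C 0} = ⊤ := by rw [h]; simp
  obtain ⟨v, hv⟩ := lemmaL (0 : K) (by
    rw [Ideal.span_singleton_eq_bot.2 rfl]; exact Ideal.bot_isMaximal) N w h'
  have h2 := span_range_of_Rl hv h'
  rw [map_zero] at hv
  refine hv.trans ?_
  have : ∃ i1, v i1 ≠ 0 := by
    by_contra hcon
    push Not at hcon
    have h3 := span_range_map_top constantCoeff h2
    simp [hcon] at h3
  obtain ⟨i1, hi1⟩ := this
  exact Rl.of_unit' i0 i1 (hi1.isUnit.map C)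

lemma qs_column_exact {K : Type*} [Field K] {ι : Type*} [Fintype ι] [DecidableEq ι] {N : ℕ}
    (w : ι → MvPolynomial (Fin N) K)
    (h : Ideal.span (Set.range w) = ⊤) (i0 : ι) :
    ∃ γ : Matrix ι ι (MvPolynomial (Fin N) K), IsUnit γ ∧ γ *ᵥ w = Pi.single i0 1 := by
  rcases subsingleton_or_nontrivial ι with hs | hn
  · have hr : Set.range w = {w i0} := by
      ext x
      simp only [Set.mem_range, Set.mem_singleton_iff]
      constructor
      · rintro ⟨i, rfl⟩; rw [Subsingleton.elim i i0]
      · rintro rfl; exact ⟨_, rfl⟩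
    rw [hr, Ideal.span_singleton_eq_top] at h
    obtain ⟨u, hu⟩ := h
    refine ⟨diagonal fun _ => ((u⁻¹ : (MvPolynomial (Fin N) K)ˣ) : MvPolynomial (Fin N) K), ?_, ?_⟩
    · rw [Matrix.isUnit_iff_isUnit_det, det_diagonal]
      exact IsUnit.prod_univ_iff.2 fun _ => Units.isUnit _
    · funext i
      rw [Subsingleton.elim i i0, mulVec_diagonal, ← hu]; simp
  · obtain ⟨γ, hγ, h⟩ := qs_column w h i0
    refine ⟨γ, hγ, ?_⟩
    funext i
    exact sub_eq_zero.1 (zero_dvd_iff.1 (h i))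
end LemmaL

section QS
universe u

lemma schanuel' {R : Type*} [CommRing R] {P Q M : Type*} [AddCommGroup P] [AddCommGroup Q]
    [AddCommGroup M] [Module R P] [Module R Q] [Module R M] [Module.Projective R P]
    [Module.Projective R Q] (f : P →ₗ[R] M) (g : Q →ₗ[R] M) (hf : Function.Surjective f)
    (hg : Function.Surjective g) :
    Nonempty ((LinearMap.ker f × Q) ≃ₗ[R] (LinearMap.ker g × P)) := by
  obtain ⟨s, hs⟩ := Module.projective_lifting_property f g hf
  obtain ⟨t, ht⟩ := Module.projective_lifting_property g f hg
  have hs' : ∀ q, f (s q) = g q := fun q => LinearMap.congr_fun hs q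
  have ht' : ∀ p, g (t p) = f p := fun p => LinearMap.congr_fun ht p
  refine ⟨LinearEquiv.ofLinear
    (LinearMap.prod ((LinearMap.snd R (LinearMap.ker f) Q - t ∘ₗ
      ((LinearMap.ker f).subtype.coprod s)).codRestrict (LinearMap.ker g) ?_)
      ((LinearMap.ker f).subtype.coprod s))
    (LinearMap.prod ((LinearMap.snd R (LinearMap.ker g) P - s ∘ₗ
      ((LinearMap.ker g).subtype.coprod t)).codRestrict (LinearMap.ker f) ?_)
      ((LinearMap.ker g).subtype.coprod t)) ?_ ?_⟩
  · rintro ⟨⟨k, hk⟩, q⟩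
    rw [LinearMap.mem_ker] at hk
    simp [hs', ht', hk]
  · rintro ⟨⟨k, hk⟩, q⟩
    rw [LinearMap.mem_ker] at hk
    simp [hs', ht', hk]
  · ext x <;> simp
  · ext x <;> simp

lemma char_seq {A : Type*} [CommRing A] [Nontrivial A] [IsDomain A] {M : Type*} [AddCommGroup M]
    [Module A M] [Module (Polynomial A) M] [IsScalarTower A (Polynomial A) M]
    [Module.Free A M] [Module.Finite A M] :
    ∃ (k : ℕ) (ψ : (Fin k → Polynomial A) →ₗ[Polynomial A] M), Function.Surjective ψ ∧
      Nonempty ((Fin k → Polynomial A) ≃ₗ[Polynomial A] LinearMap.ker ψ) := by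
  classical
  let b := Module.finBasis A M
  set k := Module.finrank A M
  let T : Matrix (Fin k) (Fin k) A := fun i j => b.repr ((Polynomial.X : Polynomial A) • b j) i
  let ψ : (Fin k → Polynomial A) →ₗ[Polynomial A] M := Fintype.linearCombination (Polynomial A) b
  have hψ : ∀ f, ψ f = ∑ i, f i • b i := fun f => Fintype.linearCombination_apply _ _ _
  let D := (charmatrix T).mulVecLin
  have hCs : ∀ (a : A) (m : M), (Polynomial.C a) • m = a • m := by
    intro a m
    rw [← Polynomial.algebraMap_eq, algebraMap_smul]
  have hψC : ∀ c : Fin k → A, ψ (fun i => Polynomial.C (c i)) = ∑ i, c i • b i := by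
    intro c; rw [hψ]; simp only [hCs]
  have hDapp : ∀ q, D q = (Polynomial.X : Polynomial A) • q - (T.map Polynomial.C) *ᵥ q := by
    intro q
    simp only [D, charmatrix, mulVecLin_apply, sub_mulVec]
    congr 1
    funext i
    simp [Matrix.scalar_apply, mulVec_diagonal]
  have hsurj : Function.Surjective ψ := by
    intro m
    refine ⟨fun i => Polynomial.C (b.repr m i), ?_⟩
    rw [hψC, b.sum_repr]
  have hinj : Function.Injective D := by
    rw [← LinearMap.ker_eq_bot, LinearMap.ker_eq_bot']
    intro q hq
    have hdet : (charmatrix T).det ≠ 0 := (Matrix.charpoly_monic T).ne_zero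
    exact Matrix.eq_zero_of_mulVec_eq_zero hdet hq
  have hle : LinearMap.range D ≤ LinearMap.ker ψ := by
    rintro _ ⟨q, rfl⟩
    rw [LinearMap.mem_ker]
    have : ψ ∘ₗ D = 0 := by
      refine LinearMap.pi_ext' fun j => LinearMap.ext_ring ?_
      simp only [LinearMap.comp_apply, LinearMap.zero_apply, hDapp, map_sub, map_smul]
      have e1 : ψ (LinearMap.single (Polynomial A) (fun _ => Polynomial A) j 1) = b j := by
        rw [hψ, Finset.sum_eq_single j]
        · simp
        · intro i _ hi; simp [hi]
        · simp
      have e2 : T.map Polynomial.C *ᵥ (LinearMap.single (Polynomial A) (fun _ => Polynomial A) j 1) =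
          fun i => Polynomial.C (T i j) := by
        funext i; simp
      rw [e1, e2, hψC]
      rw [b.sum_repr, sub_self]
    exact LinearMap.congr_fun this q
  have hdec : ∀ f : Fin k → Polynomial A, ∃ q, ∃ c : Fin k → A, f = D q + fun i => Polynomial.C (c i) := by
    let S : Set (Fin k → Polynomial A) := {f | ∃ q, ∃ c : Fin k → A, f = D q + fun i => Polynomial.C (c i)}
    have hadd : ∀ f g, f ∈ S → g ∈ S → f + g ∈ S := by
      rintro _ _ ⟨q, c, rfl⟩ ⟨q', c', rfl⟩
      refine ⟨q + q', c + c', ?_⟩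
      funext i; simp; ring
    have hC : ∀ a f, f ∈ S → (Polynomial.C a : Polynomial A) • f ∈ S := by
      rintro a _ ⟨q, c, rfl⟩
      refine ⟨Polynomial.C a • q, a • c, ?_⟩
      funext i; simp [mul_add]
    have hX : ∀ f, f ∈ S → (Polynomial.X : Polynomial A) • f ∈ S := by
      rintro _ ⟨q, c, rfl⟩
      refine ⟨(Polynomial.X : Polynomial A) • q + fun i => Polynomial.C (c i), T *ᵥ c, ?_⟩
      rw [map_add, map_smul, hDapp (fun i => Polynomial.C (c i)), smul_add]
      have : (T.map Polynomial.C *ᵥ fun i => Polynomial.C (c i)) = fun i => Polynomial.C ((T *ᵥ c) i) := by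
        funext i; exact map_mulVec' Polynomial.C T c i
      rw [this]; abel
    have hp : ∀ (p : Polynomial A) f, f ∈ S → p • f ∈ S := by
      intro p
      induction p using Polynomial.induction_on with
      | C a => exact hC a
      | add p q hp hq => intro f hf; rw [add_smul]; exact hadd _ _ (hp f hf) (hq f hf)
      | monomial n a h =>
        intro f hf
        rw [pow_succ, ← mul_assoc, mul_smul]
        exact h _ (hX f hf)
    intro f
    have h0 : (0 : Fin k → Polynomial A) ∈ S := ⟨0, 0, by funext i; simp⟩
    have : f = ∑ j, f j • (fun i => Polynomial.C ((Pi.single j 1 : Fin k → A) i)) := by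
      funext i
      rw [Finset.sum_apply, Finset.sum_eq_single i]
      · simp
      · intro j _ hj; simp [Pi.single_apply, hj.symm]
      · simp
    have hmem : f ∈ S := by
      rw [this]
      refine Finset.sum_induction _ (· ∈ S) (fun a b => hadd a b) h0 fun j _ => hp _ _ ?_
      exact ⟨0, Pi.single j 1, by simp⟩
    exact hmem
  have hker : LinearMap.range D = LinearMap.ker ψ := by
    refine le_antisymm hle fun f hf => ?_
    obtain ⟨q, c, rfl⟩ := hdec f
    have h1 : ψ (D q) = 0 := hle ⟨q, rfl⟩
    rw [LinearMap.mem_ker, map_add, h1, zero_add, hψC] at hf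
    have h2 : ∀ i, c i = 0 := (Fintype.linearIndependent_iff.1 b.linearIndependent) c hf
    refine ⟨q, ?_⟩
    funext i; simp [h2]
  exact ⟨k, ψ, hsurj, ⟨(LinearEquiv.ofInjective D hinj).trans (LinearEquiv.ofEq _ _ hker)⟩⟩

/-- unimodular columns are completable -/
def QC (R : Type*) [CommRing R] : Prop :=
  ∀ (n : ℕ) (w : Fin n → R) (i0 : Fin n), Ideal.span (Set.range w) = ⊤ →
    ∃ γ : Matrix (Fin n) (Fin n) R, IsUnit γ ∧ γ *ᵥ w = Pi.single i0 1

lemma QC.of_equiv {R S : Type*} [CommRing R] [CommRing S] (e : R ≃+* S) (h : QC S) : QC R := by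
  intro n w i0 hw
  have hw' : Ideal.span (Set.range fun i => e (w i)) = ⊤ := by
    have h1 := congrArg (Ideal.map (e : R →+* S)) hw
    rw [Ideal.map_span, Ideal.map_top, ← Set.range_comp] at h1
    exact h1
  obtain ⟨γ, hγ, h1⟩ := h n _ i0 hw'
  refine ⟨γ.map (e.symm : S →+* R), isUnit_map _ hγ, ?_⟩
  funext i
  have h2 := map_mulVec' (e.symm : S →+* R) γ (fun i => e (w i)) i
  simp only [RingHom.coe_coe, RingEquiv.symm_apply_apply, h1] at h2
  refine Eq.trans ?_ (h2.trans ?_)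
  · rfl
  · by_cases hi : i = i0
    · subst hi; simp
    · simp [hi]

lemma cancel_one {R : Type*} [CommRing R] [Nontrivial R] (hR : QC R) {P : Type*} [AddCommGroup P]
    [Module R P] [Module.Finite R P] [Module.Free R (P × R)] : Module.Free R P := by
  classical
  let b := Module.finBasis R (P × R)
  let e := b.equivFun
  set m := Module.finrank R (P × R)
  let w := e (0, 1)
  have hw : Ideal.span (Set.range w) = ⊤ := by
    rw [Ideal.eq_top_iff_one]
    have h1 : ((LinearMap.snd R P R) ∘ₗ e.symm.toLinearMap) w = 1 := by simp [w]
    rw [← h1, LinearMap.pi_apply_eq_sum_univ ((LinearMap.snd R P R) ∘ₗ e.symm.toLinearMap) w]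
    exact Ideal.sum_mem _ fun i _ => Ideal.mul_mem_right _ _ (Ideal.subset_span ⟨i, rfl⟩)
  obtain ⟨m', hm'⟩ : ∃ m', m = m' + 1 := by
    rcases Nat.eq_zero_or_eq_succ_pred m with h0 | h0
    · exfalso
      have : Subsingleton (P × R) := by
        have : IsEmpty (Fin m) := by rw [h0]; infer_instance
        exact e.toEquiv.subsingleton
      have h2 := Subsingleton.elim ((0, 1) : P × R) (0, 0)
      simp at h2
    · exact ⟨_, h0⟩
  clear_value m
  subst hm'
  obtain ⟨_, ⟨γ, rfl⟩, hγw⟩ := hR _ w 0 hw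
  let e' : (P × R) ≃ₗ[R] (Fin (m' + 1) → R) := e.trans
    (Matrix.toLin'OfInv (M' := (γ : Matrix _ _ R)) (M := ((γ⁻¹ : (Matrix _ _ R)ˣ) : Matrix _ _ R))
      γ.inv_mul γ.mul_inv)
  have he' : e' (0, 1) = Pi.single 0 1 := hγw
  have hea : ∀ a : R, e' (0, a) = Pi.single 0 a := by
    intro a
    have : ((0, a) : P × R) = a • (0, 1) := by simp
    rw [this, map_smul, he']
    funext i; simp [Pi.single_apply]
  let τ : P →ₗ[R] (Fin m' → R) := (LinearMap.funLeft R R Fin.succ) ∘ₗ e'.toLinearMap ∘ₗ LinearMap.inl R P R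
  have hτ : ∀ p i, τ p i = e' (p, 0) (Fin.succ i) := fun p i => rfl
  have hinj : Function.Injective τ := by
    rw [← LinearMap.ker_eq_bot, LinearMap.ker_eq_bot']
    intro p hp
    have h1 : e' (p, 0) = e' (0, e' (p, 0) 0) := by
      rw [hea]
      funext i
      refine Fin.cases ?_ (fun i => ?_) i
      · simp
      · rw [← hτ, hp]; simp
    have h2 := e'.injective h1
    exact (Prod.ext_iff.1 h2).1
  have hsur : Function.Surjective τ := by
    intro v
    let x := e'.symm (Fin.cons 0 v)
    refine ⟨x.1, ?_⟩
    have h1 : ((x.1, 0) : P × R) = x - (0, x.2) := by ext <;> simp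
    funext i
    rw [hτ, h1, map_sub, hea]
    simp [x]
  exact Module.Free.of_equiv (LinearEquiv.ofBijective τ ⟨hinj, hsur⟩).symm

lemma cancel_many {R : Type*} [CommRing R] [Nontrivial R] (hR : QC R) (k : ℕ) {P : Type*} [AddCommGroup P]
    [Module R P] [Module.Finite R P] (h : Module.Free R (P × (Fin k → R))) : Module.Free R P := by
  induction k with
  | zero => haveI := h; exact Module.Free.of_equiv (LinearEquiv.prodUnique (R := R) (M := P) (M₂ := Fin 0 → R))
  | succ k ih =>
    let e1 : (Fin (k + 1) → R) ≃ₗ[R] R × (Fin k → R) := (Fin.consLinearEquiv R (fun _ : Fin (k+1) => R)).symm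
    let e2 : (P × (Fin (k+1) → R)) ≃ₗ[R] (P × (Fin k → R)) × R :=
      ((LinearEquiv.refl R P).prodCongr (e1.trans (LinearEquiv.prodComm R _ _))).trans
        (LinearEquiv.prodAssoc R P (Fin k → R) R).symm
    have : Module.Free R ((P × (Fin k → R)) × R) := Module.Free.of_equiv e2
    have := cancel_one hR (P := P × (Fin k → R))
    exact ih this
end QS

section SplitI

/-- every idempotent matrix splits through a free module -/
def SplitIdem (R : Type*) [CommRing R] : Prop :=
  ∀ (m : ℕ) (E : Matrix (Fin m) (Fin m) R), E * E = E →
    ∃ (t : ℕ) (a : Matrix (Fin m) (Fin t) R) (b : Matrix (Fin t) (Fin m) R), a * b = E ∧ b * a = 1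

lemma split_of_free {R : Type*} [CommRing R] [Nontrivial R] {m : ℕ} (E : Matrix (Fin m) (Fin m) R)
    (hE : E * E = E) (hf : Module.Free R (LinearMap.range E.mulVecLin)) :
    ∃ (t : ℕ) (a : Matrix (Fin m) (Fin t) R) (b : Matrix (Fin t) (Fin m) R),
      a * b = E ∧ b * a = 1 := by
  classical
  let b0 := Module.finBasis R (LinearMap.range E.mulVecLin)
  let e := b0.equivFun
  refine ⟨_, LinearMap.toMatrix' ((LinearMap.range E.mulVecLin).subtype ∘ₗ e.symm.toLinearMap),
    LinearMap.toMatrix' (e.toLinearMap ∘ₗ E.mulVecLin.rangeRestrict), ?_, ?_⟩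
  · rw [← LinearMap.toMatrix'_comp]
    have : ((LinearMap.range E.mulVecLin).subtype ∘ₗ e.symm.toLinearMap) ∘ₗ
      (e.toLinearMap ∘ₗ E.mulVecLin.rangeRestrict) = Matrix.toLin' E := by
      ext x; simp
    rw [this, LinearMap.toMatrix'_toLin']
  · rw [← LinearMap.toMatrix'_comp]
    have : (e.toLinearMap ∘ₗ E.mulVecLin.rangeRestrict) ∘ₗ
      ((LinearMap.range E.mulVecLin).subtype ∘ₗ e.symm.toLinearMap) = LinearMap.id := by
      refine LinearMap.ext fun v => ?_
      have h1 : E.mulVecLin.rangeRestrict ((LinearMap.range E.mulVecLin).subtype (e.symm v)) = e.symm v := by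
        obtain ⟨⟨_, y, rfl⟩, hy⟩ : ∃ z, z = e.symm v := ⟨_, rfl⟩
        rw [← hy]
        apply Subtype.ext
        simp [hE]
      simp only [LinearMap.comp_apply, LinearEquiv.coe_coe, LinearMap.id_apply]
      rw [h1, LinearEquiv.apply_symm_apply]
    rw [this, LinearMap.toMatrix'_id]

lemma SplitIdem.free {A : Type*} [CommRing A] (hA : SplitIdem A) (P : Type*) [AddCommGroup P]
    [Module A P] [Module.Finite A P] [Module.Projective A P] : Module.Free A P := by
  classical
  obtain ⟨n, π, hπ⟩ := Module.Finite.exists_fin' A P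
  obtain ⟨σ, hσ⟩ := Module.projective_lifting_property π LinearMap.id hπ
  have hσ' : ∀ p, π (σ p) = p := fun p => LinearMap.congr_fun hσ p
  obtain ⟨t, a, b, hab, hba⟩ := hA n (LinearMap.toMatrix' (σ ∘ₗ π)) (by
    rw [← LinearMap.toMatrix'_comp]
    congr 1
    ext x; simp [hσ'])
  have hab' : ∀ v, a *ᵥ (b *ᵥ v) = σ (π v) := by
    intro v
    rw [mulVec_mulVec, hab, LinearMap.toMatrix'_mulVec]; rfl
  have hba' : ∀ v, b *ᵥ (a *ᵥ v) = v := by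
    intro v
    rw [mulVec_mulVec, hba, one_mulVec]
  refine Module.Free.of_equiv (LinearEquiv.ofLinear (π ∘ₗ a.mulVecLin) (b.mulVecLin ∘ₗ σ) ?_ ?_)
  · ext p
    simp [hab', hσ']
  · refine LinearMap.ext fun v => ?_
    simp only [LinearMap.comp_apply, mulVecLin_apply, LinearMap.id_apply]
    rw [← hab', hba', hba']

lemma SplitIdem.of_equiv {R S : Type*} [CommRing R] [CommRing S] (e : R ≃+* S) (h : SplitIdem S) :
    SplitIdem R := by
  intro m E hE
  obtain ⟨t, a, b, hab, hba⟩ := h m (E.map (e : R →+* S)) (by rw [← Matrix.map_mul, hE])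
  refine ⟨t, a.map (e.symm : S →+* R), b.map (e.symm : S →+* R), ?_, ?_⟩
  · rw [← Matrix.map_mul, hab]; ext i j; simp
  · rw [← Matrix.map_mul, hba]; exact Matrix.map_one _ (map_zero _) (map_one _)

lemma SplitIdem.field (K : Type*) [Field K] : SplitIdem K := fun m E hE =>
  split_of_free E hE inferInstance

lemma add_divByMonic' {A : Type*} [CommRing A] [IsDomain A] (g : Polynomial A) (hg : g.Monic)
    (p q : Polynomial A) : (p + q) /ₘ g = p /ₘ g + q /ₘ g := by
  refine (Polynomial.div_modByMonic_unique (p /ₘ g + q /ₘ g) (p %ₘ g + q %ₘ g) hg ⟨?_, ?_⟩).1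
  · conv_rhs => rw [← Polynomial.modByMonic_add_div p g, ← Polynomial.modByMonic_add_div q g]
    ring
  · exact (Polynomial.degree_add_le _ _).trans_lt (max_lt (Polynomial.degree_modByMonic_lt _ hg)
      (Polynomial.degree_modByMonic_lt _ hg))

lemma smul_divByMonic' {A : Type*} [CommRing A] [IsDomain A] (g : Polynomial A) (hg : g.Monic)
    (a : A) (q : Polynomial A) : (a • q) /ₘ g = a • (q /ₘ g) := by
  refine (Polynomial.div_modByMonic_unique (a • (q /ₘ g)) (a • (q %ₘ g)) hg ⟨?_, ?_⟩).1
  · conv_rhs => rw [← Polynomial.modByMonic_add_div q g]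
    rw [smul_add, mul_smul_comm]
  · exact (Polynomial.degree_smul_le _ _).trans_lt (Polynomial.degree_modByMonic_lt _ hg)

lemma split_step {A : Type*} [CommRing A] [IsDomain A] (hA : SplitIdem A) (hQ : QC (Polynomial A))
    {m t : ℕ} (E : Matrix (Fin m) (Fin m) (Polynomial A)) (hE : E * E = E)
    (U : Matrix (Fin m) (Fin t) (Polynomial A)) (V : Matrix (Fin t) (Fin m) (Polynomial A))
    (g : Polynomial A) (hg : g.Monic) (hUV : U * V = g • E) (hVU : V * U = g • 1) :
    ∃ (t : ℕ) (a : Matrix (Fin m) (Fin t) (Polynomial A)) (b : Matrix (Fin t) (Fin m) (Polynomial A)),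
      a * b = E ∧ b * a = 1 := by
  classical
  have hg0 : g ≠ 0 := hg.ne_zero
  have hEU : E * U = U := by
    have h1 : g • (E * U) = g • U := by
      rw [← Matrix.smul_mul, ← hUV, Matrix.mul_assoc, hVU, Matrix.mul_smul, Matrix.mul_one]
    exact smul_right_injective _ hg0 h1
  have hVE : V * E = V := by
    have h1 : g • (V * E) = g • V := by
      rw [← Matrix.mul_smul, ← hUV, ← Matrix.mul_assoc, hVU, Matrix.smul_mul, Matrix.one_mul]
    exact smul_right_injective _ hg0 h1
  let P := LinearMap.range E.mulVecLin
  let L : Submodule (Polynomial A) (Fin m → Polynomial A) :=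
    (LinearMap.range U.mulVecLin).comap E.mulVecLin
  have hL : ∀ x, x ∈ L ↔ ∃ y, U *ᵥ y = E *ᵥ x := by
    intro x; simp [L]
  let M := (Fin m → Polynomial A) ⧸ L
  -- finiteness
  have hfin : Module.Finite A M := by
    haveI : Module.Finite A (Polynomial.degreeLT A g.natDegree) :=
      Module.Finite.equiv (Polynomial.degreeLTEquiv A g.natDegree).symm
    refine Module.Finite.of_surjective ((L.mkQ.restrictScalars A) ∘ₗ
      ((Polynomial.degreeLT A g.natDegree).subtype.compLeft (Fin m))) ?_
    intro y
    obtain ⟨x, rfl⟩ := L.mkQ_surjective y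
    refine ⟨fun i => ⟨x i %ₘ g, ?_⟩, ?_⟩
    · rw [Polynomial.mem_degreeLT, ← Polynomial.degree_eq_natDegree hg0]
      exact Polynomial.degree_modByMonic_lt _ hg
    · simp only [LinearMap.comp_apply, LinearMap.restrictScalars_apply]
      rw [Submodule.mkQ_apply, Submodule.mkQ_apply, Submodule.Quotient.eq, hL]
      refine ⟨V *ᵥ (-(fun i => x i /ₘ g)), ?_⟩
      rw [mulVec_mulVec, hUV, smul_mulVec, ← mulVec_smul]
      congr 1
      funext i
      have := Polynomial.modByMonic_add_div (x i) g
      simp only [LinearMap.compLeft_apply, Pi.sub_apply, Pi.smul_apply, Pi.neg_apply, smul_eq_mul,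
        Function.comp, Submodule.subtype_apply]
      linear_combination -this
  have hproj : Module.Projective A M := by
    let i0 : (Fin m → Polynomial A) →ₗ[A] (Fin m → Polynomial A) :=
      { toFun := fun x => E *ᵥ x - U *ᵥ (fun j => (V *ᵥ x) j /ₘ g)
        map_add' := by
          intro x y
          have : (fun j => (V *ᵥ (x + y)) j /ₘ g) = (fun j => (V *ᵥ x) j /ₘ g) + (fun j => (V *ᵥ y) j /ₘ g) := by
            funext j
            rw [mulVec_add, Pi.add_apply, Pi.add_apply, add_divByMonic' g hg]
          rw [this, mulVec_add, mulVec_add]; abel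
        map_smul' := by
          intro a x
          have : (fun j => (V *ᵥ (a • x)) j /ₘ g) = a • (fun j => (V *ᵥ x) j /ₘ g) := by
            funext j
            rw [mulVec_smul, Pi.smul_apply, Pi.smul_apply, smul_divByMonic' g hg]
          rw [this, mulVec_smul, mulVec_smul, RingHom.id_apply, smul_sub] }
    have hi0 : ∀ x, i0 x = E *ᵥ x - U *ᵥ (fun j => (V *ᵥ x) j /ₘ g) := fun x => rfl
    have hker : L.restrictScalars A ≤ LinearMap.ker i0 := by
      intro x hx
      rw [Submodule.restrictScalars_mem, hL] at hx
      obtain ⟨y, hy⟩ := hx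
      rw [LinearMap.mem_ker, hi0]
      have h1 : V *ᵥ x = g • y := by
        rw [← hVE, ← mulVec_mulVec, ← hy, mulVec_mulVec, hVU, smul_mulVec, one_mulVec]
      have h2 : (fun j => (V *ᵥ x) j /ₘ g) = y := by
        funext j
        rw [h1, Pi.smul_apply, smul_eq_mul, Polynomial.mul_divByMonic_cancel_left _ hg]
      rw [h2, hy, sub_self]
    let i1 : M →ₗ[A] (Fin m → Polynomial A) := ((L.restrictScalars A).liftQ i0 hker) ∘ₗ
      (Submodule.Quotient.restrictScalarsEquiv A L).symm.toLinearMap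
    refine Module.Projective.of_split i1 (L.mkQ.restrictScalars A) ?_
    refine LinearMap.ext fun y => ?_
    obtain ⟨x, rfl⟩ := L.mkQ_surjective y
    have h1 : i1 (L.mkQ x) = i0 x := rfl
    simp only [LinearMap.comp_apply, LinearMap.restrictScalars_apply, LinearMap.id_apply]
    rw [h1, hi0, Submodule.mkQ_apply, Submodule.mkQ_apply, Submodule.Quotient.eq, hL]
    refine ⟨-(fun j => (V *ᵥ x) j /ₘ g), ?_⟩
    rw [mulVec_sub, mulVec_sub, mulVec_mulVec, mulVec_mulVec, hE, hEU, mulVec_neg]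
    abel
  have hfree : Module.Free A M := hA.free M
  obtain ⟨k, ψ, hψ, ⟨eψ⟩⟩ := char_seq (A := A) (M := M)
  have hPproj : Module.Projective (Polynomial A) P := by
    refine Module.Projective.of_split P.subtype E.mulVecLin.rangeRestrict ?_
    refine LinearMap.ext ?_
    rintro ⟨_, y, rfl⟩
    apply Subtype.ext
    simp [hE]
  let f : P →ₗ[Polynomial A] M := L.mkQ ∘ₗ P.subtype
  have hf : Function.Surjective f := by
    intro y
    obtain ⟨x, rfl⟩ := L.mkQ_surjective y
    refine ⟨⟨E *ᵥ x, x, rfl⟩, ?_⟩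
    simp only [f, LinearMap.comp_apply, Submodule.subtype_apply]
    rw [Submodule.mkQ_apply, Submodule.mkQ_apply, Submodule.Quotient.eq, hL]
    refine ⟨0, ?_⟩
    rw [mulVec_sub, mulVec_mulVec, hE, sub_self, mulVec_zero]
  have hUm : ∀ y, U *ᵥ y ∈ P := fun y => ⟨U *ᵥ y, by rw [mulVecLin_apply, mulVec_mulVec, hEU]⟩
  let u0 : (Fin t → Polynomial A) →ₗ[Polynomial A] P := U.mulVecLin.codRestrict P hUm
  let u1 : (Fin t → Polynomial A) →ₗ[Polynomial A] LinearMap.ker f := u0.codRestrict _ (by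
    intro y
    rw [LinearMap.mem_ker]
    change L.mkQ (U *ᵥ y) = 0
    rw [Submodule.mkQ_apply, Submodule.Quotient.mk_eq_zero, hL]
    refine ⟨y, ?_⟩
    simp [hEU])
  have hu1 : Function.Bijective u1 := by
    constructor
    · intro y y' h
      have h1 : U *ᵥ y = U *ᵥ y' := congrArg (fun z : LinearMap.ker f => ((z : P) : Fin m → Polynomial A)) h
      have h2 := congrArg (fun z => V *ᵥ z) h1
      simp only [mulVec_mulVec, hVU, smul_mulVec, one_mulVec] at h2
      exact smul_right_injective _ hg0 h2
    · rintro ⟨⟨_, x, rfl⟩, hx⟩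
      rw [LinearMap.mem_ker] at hx
      simp only [f, LinearMap.comp_apply, Submodule.subtype_apply] at hx
      rw [Submodule.mkQ_apply, Submodule.Quotient.mk_eq_zero, hL] at hx
      obtain ⟨y, hy⟩ := hx
      refine ⟨y, Subtype.ext (Subtype.ext ?_)⟩
      simp only [mulVecLin_apply, mulVec_mulVec, hE] at hy
      exact hy
  obtain ⟨e0⟩ := schanuel' f ψ hf hψ
  have e1 : ((Fin t → Polynomial A) × (Fin k → Polynomial A)) ≃ₗ[Polynomial A]
      (P × (Fin k → Polynomial A)) :=
    (((LinearEquiv.ofBijective u1 hu1).prodCongr (LinearEquiv.refl _ _)).trans e0).trans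
      (((eψ.symm).prodCongr (LinearEquiv.refl _ P)).trans (LinearEquiv.prodComm _ _ _))
  have hfP : Module.Free (Polynomial A) (P × (Fin k → Polynomial A)) := Module.Free.of_equiv e1
  exact split_of_free E hE (cancel_many hQ k hfP)

end SplitI

section SplitII

lemma clear_den {R : Type*} [CommRing R] [IsDomain R] {m n : Type*} [Finite m] [Finite n]
    (a : Matrix m n (FractionRing R)) :
    ∃ (g : R) (U : Matrix m n R), g ≠ 0 ∧ U.map (algebraMap R (FractionRing R)) =
      (algebraMap R (FractionRing R) g) • a := by
  obtain ⟨g, hg⟩ := IsLocalization.exist_integer_multiples_of_finite (nonZeroDivisors R)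
    (fun p : m × n => a p.1 p.2)
  choose U hU using hg
  refine ⟨g, Matrix.of fun i j => U (i, j), nonZeroDivisors.coe_ne_zero g, ?_⟩
  ext i j
  rw [Matrix.map_apply, Matrix.of_apply, Matrix.smul_apply, hU, smul_eq_mul, Algebra.smul_def]

lemma split_denom {R : Type*} [CommRing R] [IsDomain R] {m : ℕ} (E : Matrix (Fin m) (Fin m) R)
    (hE : E * E = E) : ∃ (t : ℕ) (U : Matrix (Fin m) (Fin t) R) (V : Matrix (Fin t) (Fin m) R) (g : R),
      g ≠ 0 ∧ U * V = g • E ∧ V * U = g • 1 := by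
  let φ := algebraMap R (FractionRing R)
  have hφ : Function.Injective φ := IsFractionRing.injective R (FractionRing R)
  obtain ⟨t, a, b, hab, hba⟩ := SplitIdem.field (FractionRing R) m (E.map φ) (by
    rw [← Matrix.map_mul, hE])
  obtain ⟨g1, U, hg1, hU⟩ := clear_den a
  obtain ⟨g2, V, hg2, hV⟩ := clear_den b
  refine ⟨t, U, V, g1 * g2, mul_ne_zero hg1 hg2, ?_, ?_⟩
  · apply Matrix.map_injective hφ
    dsimp only
    rw [Matrix.map_mul, hU, hV, Matrix.smul_mul, Matrix.mul_smul, hab, smul_smul, ← map_mul]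
    ext i j; simp [φ]
  · apply Matrix.map_injective hφ
    dsimp only
    rw [Matrix.map_mul, hU, hV, Matrix.smul_mul, Matrix.mul_smul, hba, smul_smul, ← map_mul]
    ext i j
    by_cases hij : i = j
    · subst hij; simp [φ, mul_comm]
    · simp [φ, hij]

theorem splitIdem_mv (K : Type*) [Field K] (N : ℕ) : SplitIdem (MvPolynomial (Fin N) K) := by
  induction N with
  | zero =>
    exact SplitIdem.of_equiv (MvPolynomial.isEmptyRingEquiv K (Fin 0)) (SplitIdem.field K)
  | succ N ih =>
    intro m E hE
    obtain ⟨t, U, V, g, hg, hUV, hVU⟩ := split_denom E hE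
    obtain ⟨e, he, u, u', q, hu, hq, hd⟩ := coord_mod (N := N) (0 : K)
      (by rw [Ideal.span_singleton_eq_bot.2 rfl]; exact Ideal.bot_isMaximal) g
      (by rw [map_zero, zero_dvd_iff]; exact hg)
    rw [map_zero, map_zero, zero_dvd_iff, sub_eq_zero] at hd
    have hQ : QC (Polynomial (MvPolynomial (Fin N) K)) :=
      QC.of_equiv e.symm fun n w i0 hw => qs_column_exact w hw i0
    let φ : MvPolynomial (Fin (N+1)) K →+* Polynomial (MvPolynomial (Fin N) K) := e
    obtain ⟨t', a, b, hab, hba⟩ := split_step ih hQ (E.map φ) (by rw [← Matrix.map_mul, hE])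
      (U.map φ) ((Polynomial.C (C u) : Polynomial (MvPolynomial (Fin N) K)) • V.map φ) q hq (by
        rw [Matrix.mul_smul, ← Matrix.map_mul, hUV, ← hd]
        ext i j; simp [φ, mul_assoc]) (by
        rw [Matrix.smul_mul, ← Matrix.map_mul, hVU, ← hd]
        ext i j
        by_cases hij : i = j
        · subst hij; simp [φ]
        · simp [φ, hij])
    let ψ : Polynomial (MvPolynomial (Fin N) K) →+* MvPolynomial (Fin (N+1)) K := e.symm
    refine ⟨t', a.map ψ, b.map ψ, ?_, ?_⟩
    · rw [← Matrix.map_mul, hab]; ext i j; simp [φ, ψ]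
    · rw [← Matrix.map_mul, hba]; exact Matrix.map_one _ (map_zero _) (map_one _)

end SplitII

section Reduce

lemma det_mem_mI' {A : Type*} [CommRing A] {l m q : Type*} [Fintype q] [DecidableEq q]
    (F : Matrix l m A) {k : ℕ} (e : Fin k ≃ q) (f : q → l) (g : q → m) :
    (F.submatrix f g).det ∈ mI F k := by
  have := det_mem_mI F (f ∘ e) (g ∘ e)
  rwa [← Matrix.submatrix_submatrix, Matrix.det_submatrix_equiv_self] at this

lemma bordered {A : Type*} [CommRing A] [IsDomain A] {l m : Type*} (F : Matrix l m A) {r : ℕ}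
    (h0 : mI F (r + 1) = ⊥) (f : Fin r → l) (g : Fin r → m)
    (hd : (F.submatrix f g).det ≠ 0) (i : l) (j : m) :
    (fun k => F i (g k)) ⬝ᵥ ((F.submatrix f g).adjugate *ᵥ fun q => F (f q) j) =
      (F.submatrix f g).det * F i j := by
  classical
  set a := F.submatrix f g with ha
  set b : Matrix (Fin r) (Fin 1) A := of fun q _ => F (f q) j with hb
  set c : Matrix (Fin 1) (Fin r) A := of fun _ k => F i (g k) with hc
  set e : Matrix (Fin 1) (Fin 1) A := of fun _ _ => F i j with he
  have hM : (fromBlocks a b c e).det = 0 := by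
    have h1 : fromBlocks a b c e = F.submatrix (Sum.elim f fun _ => i) (Sum.elim g fun _ => j) := by
      ext x y
      rcases x with x | x <;> rcases y with y | y <;> rfl
    have h2 := det_mem_mI' F (finSumFinEquiv (m := r) (n := 1)).symm
      (Sum.elim f fun _ => i) (Sum.elim g fun _ => j)
    rw [← h1, h0] at h2
    exact h2
  have hprod : fromBlocks a b c e * fromBlocks 1 (-(a.adjugate * b)) 0 (a.det • 1) =
      fromBlocks a 0 c (a.det • e - c * a.adjugate * b) := by
    rw [fromBlocks_multiply]
    congr 1
    · simp
    · rw [Matrix.mul_neg, ← Matrix.mul_assoc, mul_adjugate]; simp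
    · simp
    · rw [Matrix.mul_neg, ← Matrix.mul_assoc]; simp; abel
  have h3 := congrArg det hprod
  rw [det_mul, hM, zero_mul, det_fromBlocks_zero₁₂] at h3
  have h4 := (mul_eq_zero.1 h3.symm).resolve_left hd
  rw [det_fin_one, Matrix.sub_apply, Matrix.smul_apply, sub_eq_zero, smul_eq_mul] at h4
  rw [Matrix.mul_assoc] at h4
  exact h4.symm

lemma exists_idemMat {A : Type*} [CommRing A] [IsDomain A] {l m : Type*} [Fintype l] [Fintype m]
    [DecidableEq l] [DecidableEq m]
    (F : Matrix l m A) {r : ℕ} (d : A) (hd : d ≠ 0) (h1 : mI F r = Ideal.span {d})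
    (h0 : mI F (r + 1) = ⊥) :
    ∃ (E : Matrix l l A) (Y : Matrix m l A), E * F = F ∧ d • E = F * Y := by
  have key : ∀ x ∈ mI F r, ∃ Y : Matrix m l A, (∀ i j, d ∣ (F * Y) i j) ∧ F * Y * F = x • F := by
    intro x hx
    induction hx using Submodule.span_induction with
    | zero => exact ⟨0, by simp, by simp⟩
    | add x y _ _ hx hy =>
      obtain ⟨Y, hY, hY'⟩ := hx
      obtain ⟨Z, hZ, hZ'⟩ := hy
      refine ⟨Y + Z, ?_, ?_⟩
      · intro i j; rw [Matrix.mul_add]; exact dvd_add (hY i j) (hZ i j)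
      · rw [Matrix.mul_add, Matrix.add_mul, hY', hZ', add_smul]
    | smul a x _ hx =>
      obtain ⟨Y, hY, hY'⟩ := hx
      refine ⟨a • Y, ?_, ?_⟩
      · intro i j; rw [Matrix.mul_smul]; exact Dvd.dvd.mul_left (hY i j) a
      · rw [Matrix.mul_smul, Matrix.smul_mul, hY', smul_smul]; rfl
    | mem x hx =>
      obtain ⟨f, g, rfl⟩ := hx
      by_cases hz : (F.submatrix f g).det = 0
      · exact ⟨0, by simp, by rw [hz]; simp⟩
      refine ⟨(1 : Matrix m m A).submatrix id g * (F.submatrix f g).adjugate *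
        (1 : Matrix l l A).submatrix f id, ?_, ?_⟩
      · have e1 : F * ((1 : Matrix m m A).submatrix id g * (F.submatrix f g).adjugate *
          (1 : Matrix l l A).submatrix f id) = (F.submatrix id g * (F.submatrix f g).adjugate) *
          (1 : Matrix l l A).submatrix f id := by
          rw [← Matrix.mul_assoc, ← Matrix.mul_assoc]
          congr 2
          ext i j; simp [Matrix.mul_apply, Matrix.one_apply]
        intro i j
        rw [e1, Matrix.mul_apply]
        refine Finset.dvd_sum fun q _ => Dvd.dvd.mul_right ?_ _
        have h2 : (F.submatrix id g * (F.submatrix f g).adjugate) i q =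
            (F.submatrix (Function.update f q i) g).det := by
          have h3 : F.submatrix (Function.update f q i) g =
              (F.submatrix f g).updateRow q (fun k => F i (g k)) := by
            ext x y
            by_cases hx : x = q
            · subst hx; simp
            · simp [hx, updateRow_ne]
          rw [h3, ← cramer_transpose_apply, cramer_eq_adjugate_mulVec, ← adjugate_transpose, mulVec_transpose]
          rfl
        rw [h2, ← Ideal.mem_span_singleton, ← h1]
        exact det_mem_mI _ _ _
      · ext i j
        have hb := bordered F h0 f g hz i j
        rw [Matrix.smul_apply, smul_eq_mul, ← hb]
        have e2 : F * ((1 : Matrix m m A).submatrix id g * (F.submatrix f g).adjugate *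
          (1 : Matrix l l A).submatrix f id) * F = (F.submatrix id g * ((F.submatrix f g).adjugate *
            F.submatrix f id)) := by
          have e3 : F * (1 : Matrix m m A).submatrix id g = F.submatrix id g := by
            ext i j; simp [Matrix.mul_apply, Matrix.one_apply]
          have e4 : (1 : Matrix l l A).submatrix f id * F = F.submatrix f id := by
            ext i j; simp [Matrix.mul_apply, Matrix.one_apply]
          rw [← e3, ← e4]; simp only [Matrix.mul_assoc]
        rw [e2]
        rfl
  obtain ⟨Y, hY, hY'⟩ := key d (by rw [h1]; exact Ideal.mem_span_singleton_self d)
  choose E hE using hY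
  have hE' : d • (of E) = F * Y := by
    ext i j; rw [Matrix.smul_apply, of_apply, smul_eq_mul, hE]
  refine ⟨of E, Y, ?_, hE'⟩
  have : d • (of E * F) = d • F := by rw [← Matrix.smul_mul, hE', hY']
  exact smul_right_injective _ hd this

/-- inclusion matrix -/
def Jm (A : Type*) [CommRing A] (l r : ℕ) : Matrix (Fin l) (Fin r) A :=
  of fun i j => if (i : ℕ) = (j : ℕ) then 1 else 0

lemma Jm_transpose (A : Type*) [CommRing A] (l r : ℕ) : (Jm A l r)ᵀ = Jm A r l := by
  ext i j; simp [Jm, eq_comm]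

lemma Jm_mul_Jm (A : Type*) [CommRing A] {l r : ℕ} (h : r ≤ l) : Jm A r l * Jm A l r = 1 := by
  ext i j
  rw [Matrix.mul_apply, Finset.sum_eq_single (Fin.castLE h i)]
  · simp [Jm, Matrix.one_apply, Fin.ext_iff]
  · intro k _ hk
    have : (i : ℕ) ≠ k := fun h' => hk (Fin.ext (by simp [h']))
    simp [Jm, this]
  · simp

lemma mI_eq_bot_of_lt {A : Type*} [CommRing A] {t k : ℕ} {m : Type*} (G : Matrix (Fin t) m A)
    (h : t < k) : mI G k = ⊥ := by
  rw [eq_bot_iff]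
  refine mI_le fun f g => ?_
  obtain ⟨x, y, hxy, hf⟩ := Fintype.exists_ne_map_eq_of_card_lt f (by simpa using h)
  rw [det_zero_of_row_eq hxy]
  · exact Ideal.zero_mem _
  · funext j; simp [hf]

lemma reduce_left {A : Type*} [CommRing A] [IsDomain A] (hA : SplitIdem A) {l m r : ℕ}
    (F : Matrix (Fin l) (Fin m) A) (d : A) (hd : d ≠ 0) (h1 : mI F r = Ideal.span {d})
    (h0 : mI F (r + 1) = ⊥) :
    r ≤ l ∧ ∃ (U : Matrix (Fin l) (Fin l) A) (G : Matrix (Fin r) (Fin m) A), IsUnit U ∧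
      F = U * Jm A l r * G := by
  obtain ⟨E, Y, hEF, hEY⟩ := exists_idemMat F d hd h1 h0
  have hE : E * E = E := by
    have : d • (E * E) = d • E := by
      rw [← Matrix.mul_smul, hEY, ← Matrix.mul_assoc, hEF]
    exact smul_right_injective _ hd this
  have hE' : (1 - E) * (1 - E) = 1 - E := by
    rw [Matrix.mul_sub, Matrix.sub_mul, Matrix.sub_mul, hE]; simp
  obtain ⟨t, a, b, hab, hba⟩ := hA l E hE
  obtain ⟨t', a', b', hab', hba'⟩ := hA l (1 - E) hE'
  have ht : t = r := by
    apply le_antisymm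
    · by_contra hlt
      push Not at hlt
      have e1 : d • (1 : Matrix (Fin t) (Fin t) A) = b * (F * (Y * a)) := by
        rw [← Matrix.mul_assoc F, ← hEY, Matrix.smul_mul, Matrix.mul_smul, ← hab, Matrix.mul_assoc,
          hba, Matrix.mul_one, hba]
      have e2 : mI (d • (1 : Matrix (Fin t) (Fin t) A)) t ≤ ⊥ := by
        rw [e1, ← h0]
        exact (mI_mul_left _ _ _).trans ((mI_mul_right _ _ _).trans (mI_antitone F hlt))
      rw [mI_det, det_smul, det_one, mul_one, le_bot_iff, Ideal.span_singleton_eq_bot] at e2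
      exact pow_ne_zero _ hd e2
    · by_contra hlt
      push Not at hlt
      have e1 : F = a * (b * F) := by rw [← Matrix.mul_assoc, hab, hEF]
      have e2 : mI F r ≤ ⊥ := by
        conv_lhs => rw [e1]
        exact (mI_mul_left _ _ _).trans (mI_eq_bot_of_lt _ hlt).le
      rw [h1, le_bot_iff, Ideal.span_singleton_eq_bot] at e2
      exact hd e2
  subst ht
  have hbE : b * E = b := by rw [← hab, ← Matrix.mul_assoc, hba, Matrix.one_mul]
  have hEa' : E * a' = 0 := by
    have : (1 - E) * a' = a' := by rw [← hab', Matrix.mul_assoc, hba', Matrix.mul_one]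
    rw [Matrix.sub_mul, Matrix.one_mul, sub_eq_self] at this
    exact this
  have hba'0 : b * a' = 0 := by rw [← hbE, Matrix.mul_assoc, hEa', Matrix.mul_zero]
  have hb'a : b' * a = 0 := by
    have e1 : b' * (1 - E) = b' := by rw [← hab', ← Matrix.mul_assoc, hba', Matrix.one_mul]
    have e2 : E * a = a := by rw [← hab, Matrix.mul_assoc, hba, Matrix.mul_one]
    rw [← e1, Matrix.mul_assoc, Matrix.sub_mul, e2, Matrix.one_mul, sub_self, Matrix.mul_zero]
  have p1 : fromCols a a' * fromRows b b' = 1 := by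
    rw [fromCols_mul_fromRows, hab, hab']; abel
  have p2 : fromRows b b' * fromCols a a' = 1 := by
    rw [fromRows_mul_fromCols, hba, hba', hba'0, hb'a, fromBlocks_one]
  have hcard : l = t + t' := by
    have := Matrix.square_of_invertible _ _ p1 p2
    simpa using this
  subst hcard
  refine ⟨Nat.le_add_right _ _, (fromCols a a').submatrix id finSumFinEquiv.symm, b * F, ?_, ?_⟩
  · rw [isUnit_iff_exists]
    refine ⟨(fromRows b b').submatrix finSumFinEquiv.symm id, ?_, ?_⟩
    · rw [submatrix_mul_equiv, p1]; simp
    · rw [← submatrix_mul _ _ _ id _ Function.bijective_id, p2, submatrix_one_equiv]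
  · have : (fromCols a a').submatrix id finSumFinEquiv.symm * Jm A (t + t') t = a := by
      ext i j
      rw [Matrix.mul_apply, Finset.sum_eq_single (Fin.castAdd t' j)]
      · simp [Jm]
      · intro k _ hk
        have : (k : ℕ) ≠ j := fun h' => hk (Fin.ext (by simp [h']))
        simp [Jm, this]
      · simp
    rw [this, ← Matrix.mul_assoc, hab, hEF]

/-- Reduction to a square matrix. -/
lemma reduce_square {A : Type*} [CommRing A] [IsDomain A] (hA : SplitIdem A) {l m r : ℕ}
    (F : Matrix (Fin l) (Fin m) A) (d : A) (hd : d ≠ 0) (h1 : mI F r = Ideal.span {d})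
    (h0 : mI F (r + 1) = ⊥) :
    r ≤ l ∧ r ≤ m ∧ ∃ (G : Matrix (Fin r) (Fin r) A), MEq F (Jm A l r * G * Jm A r m) ∧
      ∀ k, mI G k = mI F k := by
  obtain ⟨hl, U, G1, hU, hF⟩ := reduce_left hA F d hd h1 h0
  have hmI : ∀ k, mI G1 k = mI F k := by
    intro k
    apply le_antisymm
    · obtain ⟨U, rfl⟩ := hU
      have : G1 = Jm A r l * (((U⁻¹ : (Matrix (Fin l) (Fin l) A)ˣ) : Matrix (Fin l) (Fin l) A) * F) := by
        have h5 : ((U⁻¹ : (Matrix (Fin l) (Fin l) A)ˣ) : Matrix (Fin l) (Fin l) A) * F =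
            Jm A l r * G1 := by
          rw [hF]
          simp only [Matrix.mul_assoc]
          rw [← Matrix.mul_assoc, U.inv_mul, Matrix.one_mul]
        rw [h5, ← Matrix.mul_assoc, Jm_mul_Jm A hl, Matrix.one_mul]
      rw [this]
      exact (mI_mul_left _ _ _).trans (mI_mul_left _ _ _)
    · rw [hF]; exact mI_mul_left _ _ _
  obtain ⟨hm, V, G2, hV, hG⟩ := reduce_left hA G1ᵀ d hd (by rw [mI_transpose, hmI, h1])
    (by rw [mI_transpose, hmI, h0])
  have hG1 : G1 = G2ᵀ * Jm A r m * Vᵀ := by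
    have := congrArg transpose hG
    rw [transpose_transpose, transpose_mul, transpose_mul, Jm_transpose] at this
    rw [this, Matrix.mul_assoc]
  have hE : MEq F (Jm A l r * G2ᵀ * Jm A r m) := by
    refine ⟨U, Vᵀ, hU, ?_, ?_⟩
    · rw [isUnit_iff_isUnit_det] at hV ⊢
      rwa [det_transpose]
    · rw [hF, hG1]; simp only [Matrix.mul_assoc]
  refine ⟨hl, hm, G2ᵀ, hE, fun k => ?_⟩
  rw [hE.mI_eq]
  apply le_antisymm
  · have : G2ᵀ = Jm A r l * (Jm A l r * G2ᵀ * Jm A r m) * Jm A m r := by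
      calc G2ᵀ = (Jm A r l * Jm A l r) * G2ᵀ * (Jm A r m * Jm A m r) := by
            rw [Jm_mul_Jm A hl, Jm_mul_Jm A hm]; simp
        _ = _ := by simp only [Matrix.mul_assoc]
    conv_lhs => rw [this]
    exact (mI_mul_right _ _ _).trans (mI_mul_left _ _ _)
  · exact (mI_mul_right _ _ _).trans (mI_mul_left _ _ _)

end Reduce

section UTcore

lemma exists_unimod_comb {A : Type*} [CommRing A] [IsDomain A] (hA : SplitIdem A) {n s : ℕ}
    (M : Matrix (Fin n) (Fin n) A) (hs : 0 < s)
    (h1 : mI M s = ⊤) (h0 : mI M (s + 1) = ⊥) : ∃ y v, y ⬝ᵥ (M *ᵥ v) = 1 := by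
  obtain ⟨hl, -, G, ⟨_, _, ⟨U, rfl⟩, ⟨V, rfl⟩, hM⟩, hG⟩ := reduce_square hA M 1 one_ne_zero
    (by rw [h1, Ideal.span_singleton_one]) h0
  have hdet : IsUnit G := by
    rw [isUnit_iff_isUnit_det, ← Ideal.span_singleton_eq_top, ← mI_det, hG, h1]
  obtain ⟨G, rfl⟩ := hdet
  have key : (Jm A s n * ((U⁻¹ : (Matrix (Fin n) (Fin n) A)ˣ) : Matrix (Fin n) (Fin n) A)) *
      (M * (((V⁻¹ : (Matrix (Fin n) (Fin n) A)ˣ) : Matrix (Fin n) (Fin n) A) * (Jm A n s *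
        ((G⁻¹ : (Matrix (Fin s) (Fin s) A)ˣ) : Matrix (Fin s) (Fin s) A)))) = 1 := by
    rw [hM]
    calc _ = Jm A s n * (((U⁻¹ : (Matrix (Fin n) (Fin n) A)ˣ) : Matrix (Fin n) (Fin n) A) * (U : Matrix (Fin n) (Fin n) A)) *
            Jm A n s * (G : Matrix (Fin s) (Fin s) A) * Jm A s n * ((V : Matrix (Fin n) (Fin n) A) *
            ((V⁻¹ : (Matrix (Fin n) (Fin n) A)ˣ) : Matrix (Fin n) (Fin n) A)) * Jm A n s *
            ((G⁻¹ : (Matrix (Fin s) (Fin s) A)ˣ) : Matrix (Fin s) (Fin s) A) := by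
          simp only [Matrix.mul_assoc]
      _ = (Jm A s n * Jm A n s) * (G : Matrix (Fin s) (Fin s) A) * (Jm A s n * Jm A n s) *
            ((G⁻¹ : (Matrix (Fin s) (Fin s) A)ˣ) : Matrix (Fin s) (Fin s) A) := by
          rw [U.inv_mul, V.mul_inv]; simp only [Matrix.mul_assoc, Matrix.one_mul, Matrix.mul_one]
      _ = 1 := by
          rw [Jm_mul_Jm A hl, Matrix.one_mul, Matrix.mul_one, G.mul_inv]
  have h2 := congrFun (congrFun key ⟨0, hs⟩) ⟨0, hs⟩
  rw [one_apply_eq] at h2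
  exact ⟨_, _, h2⟩

variable {A : Type*} [CommRing A] {ι : Type*} [Fintype ι] [DecidableEq ι]

lemma Rl.mono {π π' : A} {w w' : ι → A} (h : Rl π w w') (hd : π' ∣ π) : Rl π' w w' := by
  obtain ⟨γ, hγ, h⟩ := h
  exact ⟨γ, hγ, fun i => hd.trans (h i)⟩

lemma Rl.of_isCoprime [Nontrivial ι] {q : A} {x : ι → A} (i0 i1 : ι) (h : IsCoprime q (x i1)) :
    Rl q x (Pi.single i0 1) := by
  obtain ⟨s, t, hst⟩ := h
  obtain ⟨j, hj⟩ := exists_ne i1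
  have h1 := Rl.row (π := q) x (Pi.single i1 (t * (1 - x j))) j (by simp [hj])
  refine h1.trans ?_
  have e1 : ∑ k, (Pi.single i1 (t * (1 - x j)) : ι → A) k * x k = t * (1 - x j) * x i1 := by
    rw [Finset.sum_eq_single i1]
    · simp
    · intro k _ hk; simp [hk]
    · simp
  rw [e1]
  have h2 : Rl q (Function.update x j (x j + t * (1 - x j) * x i1)) (Function.update x j 1) := by
    refine Rl.of_dvd fun i => ?_
    by_cases hi : i = j
    · subst hi
      simp only [Function.update_self]
      refine ⟨-s * (1 - x i), ?_⟩
      linear_combination (1 - x i) * hst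
    · simp [hi]
  refine h2.trans (Rl.mono (Rl.of_unit' i0 j (by simp)) (dvd_zero _))

lemma aeval_sub_dvd {B σ S : Type*} [CommRing B] [CommRing S] [Algebra B S] (p : S) (x y : σ → S)
    (h : ∀ i, p ∣ x i - y i) (f : MvPolynomial σ B) : p ∣ aeval x f - aeval y f := by
  induction f using MvPolynomial.induction_on with
  | C a => simp
  | add f g hf hg =>
    rw [map_add, map_add]
    have := dvd_add hf hg
    convert this using 1; ring
  | mul_X f i hf =>
    rw [map_mul, map_mul, aeval_X, aeval_X]
    have := dvd_add (hf.mul_right (x i)) ((h i).mul_left (aeval y f))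
    convert this using 1; ring

variable {B : Type*} [CommRing B]

/-- scaling of the variables -/
noncomputable def scal {N : ℕ} (a : B) : MvPolynomial (Fin N) B →+* MvPolynomial (Fin N) B :=
  (aeval (fun i => C a * X i) : MvPolynomial (Fin N) B →ₐ[B] MvPolynomial (Fin N) B).toRingHom

lemma scal_sub_dvd {N : ℕ} (a b ϖ : B) (h : ϖ ∣ a - b) (f : MvPolynomial (Fin N) B) :
    C ϖ ∣ scal a f - scal b f := by
  refine aeval_sub_dvd _ _ _ (fun i => ?_) f
  rw [← sub_mul, ← C_sub]
  exact (map_dvd C h).mul_right _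

lemma scal_one {N : ℕ} (f : MvPolynomial (Fin N) B) : scal 1 f = f := by
  simp [scal]

lemma scal_zero {N : ℕ} (f : MvPolynomial (Fin N) B) : scal 0 f = C (constantCoeff f) := by
  simp only [scal, map_zero, zero_mul]
  have := aeval_zero' (S₁ := MvPolynomial (Fin N) B) f
  exact this

/-- the property accumulated over primes -/
def QP {N : ℕ} (G : Matrix ι ι (MvPolynomial (Fin N) B)) (ϖ : B) : Prop :=
  ∃ (v : ι → MvPolynomial (Fin N) B) (c : ι → B),
    Ideal.span (Set.range c) ⊔ Ideal.span {ϖ} = ⊤ ∧ Rl (C ϖ) (G *ᵥ v) (fun i => C (c i))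

lemma QP.norm {N : ℕ} {G : Matrix ι ι (MvPolynomial (Fin N) B)} {ϖ : B} (h : QP G ϖ) :
    ∃ (v : ι → MvPolynomial (Fin N) B) (c : ι → B) (γ : Matrix ι ι (MvPolynomial (Fin N) B)),
      Ideal.span (Set.range c) ⊔ Ideal.span {ϖ} = ⊤ ∧ IsUnit γ ∧ γ.map (scal 0) = 1 ∧
      ∀ i, C ϖ ∣ (γ *ᵥ (G *ᵥ v)) i - C (c i) := by
  obtain ⟨v, c, hc, γ, hγ, h⟩ := h
  have hγ0 : IsUnit (γ.map constantCoeff) := isUnit_map _ hγ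
  obtain ⟨δ, hδ⟩ := hγ0
  let δ' : Matrix ι ι B := ((δ⁻¹ : (Matrix ι ι B)ˣ) : Matrix ι ι B)
  have hδ' : IsUnit δ' := Units.isUnit _
  have hδ2 : δ' * γ.map constantCoeff = 1 := by rw [← hδ]; exact δ.inv_mul
  refine ⟨v, δ' *ᵥ c, δ'.map C * γ, ?_, (isUnit_map C hδ').mul hγ, ?_, fun i => ?_⟩
  · exact span_range_of_Rl (Rl.of_eq hδ' rfl) hc
  · have e1 : (δ'.map C * γ).map (scal (N := N) 0) = (δ' * γ.map constantCoeff).map C := by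
      rw [Matrix.map_mul, Matrix.map_mul]
      congr 1
      · ext i j : 2; simp [scal_zero]
      · ext i j : 2; simp [scal_zero]
    rw [e1, hδ2]
    exact Matrix.map_one _ (map_zero _) (map_one _)
  · have h1 := dvd_mulVec (w := fun i => (γ *ᵥ (G *ᵥ v)) i - C (c i)) (δ'.map C) h i
    have h2 : (δ'.map C *ᵥ fun i => (γ *ᵥ (G *ᵥ v)) i - C (c i)) i =
        ((δ'.map C * γ) *ᵥ (G *ᵥ v)) i - C ((δ' *ᵥ c) i) := by
      rw [← map_mulVec' C δ' c i, ← mulVec_mulVec, ← Pi.sub_apply, ← mulVec_sub]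
      rfl
    rwa [h2] at h1

lemma mul_sub_dvd {n : Type*} [Fintype n] {p : A} {M M' : Matrix ι n A} {w w' : n → A}
    (h : ∀ i j, p ∣ M i j - M' i j) (h' : ∀ i, p ∣ w i - w' i) (i : ι) :
    p ∣ (M *ᵥ w) i - (M' *ᵥ w') i := by
  simp only [mulVec, dotProduct]
  rw [← Finset.sum_sub_distrib]
  refine Finset.dvd_sum fun j _ => ?_
  have := dvd_add ((h i j).mul_right (w j)) ((h' j).mul_left (M' i j))
  convert this using 1; ring

lemma mulM_sub_dvd {n o : Type*} [Fintype n] {p : A} {M M' : Matrix ι n A} {W W' : Matrix n o A}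
    (h : ∀ i j, p ∣ M i j - M' i j) (h' : ∀ i j, p ∣ W i j - W' i j) (i : ι) (j : o) :
    p ∣ (M * W) i j - (M' * W') i j :=
  mul_sub_dvd (w := fun k => W k j) (w' := fun k => W' k j) h (fun k => h' k j) i

lemma QP.mul {N : ℕ} {G : Matrix ι ι (MvPolynomial (Fin N) B)} {ϖ π : B} (h1 : QP G ϖ) (h2 : QP G π)
    (hc : IsCoprime ϖ π) : QP G (ϖ * π) := by
  obtain ⟨v1, c1, γ1, hs1, hγ1, hz1, hd1⟩ := h1.norm
  obtain ⟨v2, c2, γ2, hs2, hγ2, hz2, hd2⟩ := h2.norm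
  have hz1' : ∀ i j, scal 0 (γ1 i j) = (1 : Matrix ι ι (MvPolynomial (Fin N) B)) i j :=
    fun i j => congrFun (congrFun hz1 i) j
  have hz2' : ∀ i j, scal 0 (γ2 i j) = (1 : Matrix ι ι (MvPolynomial (Fin N) B)) i j :=
    fun i j => congrFun (congrFun hz2 i) j
  obtain ⟨x, y, hxy⟩ := id hc
  set α := x * ϖ with hα
  set β := y * π with hβ
  have d1 : ϖ ∣ α - 0 := by rw [sub_zero]; exact dvd_mul_left _ _
  have d2 : ϖ ∣ β - 1 := ⟨-x, by linear_combination hxy⟩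
  have d3 : π ∣ β - 0 := by rw [sub_zero]; exact dvd_mul_left _ _
  have d4 : π ∣ α - 1 := ⟨-y, by linear_combination hxy⟩
  let c : ι → B := fun i => β * c1 i + α * c2 i
  let v : ι → MvPolynomial (Fin N) B := fun i => C β * v1 i + C α * v2 i
  let γ := γ1.map (scal β) * γ2.map (scal α)
  have hc1 : ∀ i, ϖ ∣ c1 i - c i := by
    intro i
    have := dvd_add (d2.mul_right (-c1 i)) (d1.mul_right (-c2 i))
    convert this using 1; simp only [c]; ring
  have hc2 : ∀ i, π ∣ c2 i - c i := by
    intro i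
    have := dvd_add (d4.mul_right (-c2 i)) (d3.mul_right (-c1 i))
    convert this using 1; simp only [c]; ring
  have hv1 : ∀ i, C ϖ ∣ v i - v1 i := by
    intro i
    have := dvd_add ((map_dvd C d2).mul_right (v1 i)) ((map_dvd C d1).mul_right (v2 i))
    convert this using 1; simp only [v, map_sub, map_one, map_zero]; ring
  have hv2 : ∀ i, C π ∣ v i - v2 i := by
    intro i
    have := dvd_add ((map_dvd C d4).mul_right (v2 i)) ((map_dvd C d3).mul_right (v1 i))
    convert this using 1; simp only [v, map_sub, map_one, map_zero]; ring
  have hg1 : ∀ i j, C ϖ ∣ γ i j - γ1 i j := by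
    intro i j
    have := mulM_sub_dvd (p := C ϖ) (M := γ1.map (scal β)) (M' := γ1) (W := γ2.map (scal α)) (W' := 1)
      (fun i j => by
        have := scal_sub_dvd β 1 ϖ d2 (γ1 i j)
        rwa [scal_one] at this)
      (fun i j => by
        have := scal_sub_dvd α 0 ϖ d1 (γ2 i j)
        rwa [hz2'] at this) i j
    rwa [Matrix.mul_one] at this
  have hg2 : ∀ i j, C π ∣ γ i j - γ2 i j := by
    intro i j
    have := mulM_sub_dvd (p := C π) (M := γ1.map (scal β)) (M' := 1) (W := γ2.map (scal α)) (W' := γ2)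
      (fun i j => by
        have := scal_sub_dvd β 0 π d3 (γ1 i j)
        rwa [hz1'] at this)
      (fun i j => by
        have := scal_sub_dvd α 1 π d4 (γ2 i j)
        rwa [scal_one] at this) i j
    rwa [Matrix.one_mul] at this
  refine ⟨v, c, ?_, γ, (isUnit_map _ hγ1).mul (isUnit_map _ hγ2), fun i => ?_⟩
  · have t1 : Ideal.span (Set.range c) ⊔ Ideal.span {ϖ} = ⊤ := span_range_of_Rl (Rl.of_dvd hc1) hs1
    have t2 : Ideal.span (Set.range c) ⊔ Ideal.span {π} = ⊤ := span_range_of_Rl (Rl.of_dvd hc2) hs2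
    rw [← Ideal.span_singleton_mul_span_singleton, Ideal.sup_mul_eq_of_coprime_left t1, t2]
  · rw [C_mul]
    refine IsCoprime.mul_dvd (hc.map C) ?_ ?_
    · have q1 := mul_sub_dvd hg1 (mul_sub_dvd (M := G) (M' := G) (fun i j => by simp) hv1) i
      have q2 := dvd_add (dvd_add q1 (hd1 i)) (map_dvd C (hc1 i))
      convert q2 using 1
      rw [C_sub]; ring
    · have q1 := mul_sub_dvd hg2 (mul_sub_dvd (M := G) (M' := G) (fun i j => by simp) hv2) i
      have q2 := dvd_add (dvd_add q1 (hd2 i)) (map_dvd C (hc2 i))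
      convert q2 using 1
      rw [C_sub]; ring

lemma QP.one {N : ℕ} (G : Matrix ι ι (MvPolynomial (Fin N) B)) : QP G 1 :=
  ⟨0, 0, by simp, Rl.of_dvd (by simp)⟩

lemma QP.radical [IsDomain B] [IsPrincipalIdealRing B] {N : ℕ}
    (G : Matrix ι ι (MvPolynomial (Fin N) B)) (h0 : B)
    (hp : ∀ π : B, Prime π → π ∣ h0 → QP G π) (h : B) (hne : h ≠ 0) (hh : h ∣ h0) :
    ∃ ϖ, QP G ϖ ∧ ϖ ∣ h ∧ ∃ n : ℕ, h ∣ ϖ ^ n := by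
  induction h using UniqueFactorizationMonoid.induction_on_prime with
  | h₁ => exact absurd rfl hne
  | h₂ x hx => exact ⟨1, QP.one G, one_dvd _, 0, by simpa using hx.dvd⟩
  | h₃ a p ha hpp ih =>
    obtain ⟨ϖ, hQ, hd, n, hn⟩ := ih ha ((dvd_mul_left _ _).trans hh)
    by_cases hdiv : p ∣ ϖ
    · refine ⟨ϖ, hQ, hd.mul_left _, n + 1, ?_⟩
      rw [pow_succ, mul_comm p]
      exact mul_dvd_mul hn hdiv
    · refine ⟨p * ϖ, (hp p hpp ((dvd_mul_right _ _).trans hh)).mul hQ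
        ((Irreducible.coprime_iff_not_dvd hpp.irreducible).2 hdiv), mul_dvd_mul_left _ hd, n + 1, ?_⟩
      rw [mul_pow]
      exact mul_dvd_mul (dvd_pow_self _ (Nat.succ_ne_zero _)) (hn.trans (pow_dvd_pow _ (Nat.le_succ _)))

end UTcore

section UT
variable {B : Type*} [CommRing B] [IsDomain B] [IsPrincipalIdealRing B] {N : ℕ}

lemma QP_prime {n : ℕ} [Nontrivial (Fin n)] (G : Matrix (Fin n) (Fin n) (MvPolynomial (Fin N) B))
    (Φ : ℕ → B) (hI : ∀ k ≤ n, mI G k = Ideal.span {C (∏ j ∈ Finset.range k, Φ j)})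
    (h1 : Φ 0 = 1) (π : B) (hπ : Prime π) (hd : π ∣ ∏ j ∈ Finset.range n, Φ j) : QP G π := by
  classical
  have hmax : (Ideal.span {π}).IsMaximal := PrincipalIdealRing.isMaximal_of_irreducible hπ.irreducible
  letI : Field (B ⧸ Ideal.span {π}) := Ideal.Quotient.field _
  let φ : MvPolynomial (Fin N) B →+* MvPolynomial (Fin N) (B ⧸ Ideal.span {π}) :=
    MvPolynomial.map (Ideal.Quotient.mk (Ideal.span {π}))
  have hφ : Function.Surjective φ := MvPolynomial.map_surjective _ Ideal.Quotient.mk_surjective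
  have hex : ∃ k, π ∣ ∏ j ∈ Finset.range k, Φ j := ⟨n, hd⟩
  obtain ⟨k, hk, hmin⟩ : ∃ k, (π ∣ ∏ j ∈ Finset.range k, Φ j) ∧
      ∀ k' < k, ¬ π ∣ ∏ j ∈ Finset.range k', Φ j :=
    ⟨Nat.find hex, Nat.find_spec hex, fun k' h => Nat.find_min hex h⟩
  have hkn : k ≤ n := by
    by_contra h
    exact hmin n (by omega) hd
  have hk0 : k ≠ 0 := by
    rintro rfl
    exact hπ.not_unit (isUnit_of_dvd_one (by simpa using hk))
  have hk1 : k ≠ 1 := by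
    rintro rfl
    exact hπ.not_unit (isUnit_of_dvd_one (by simpa [h1] using hk))
  obtain ⟨s, rfl⟩ : ∃ s, k = s + 1 := ⟨k - 1, by omega⟩
  have hs : ¬ π ∣ ∏ j ∈ Finset.range s, Φ j := hmin s (by omega)
  have m1 : mI (G.map φ) s = ⊤ := by
    rw [mI_map, hI s (by omega), Ideal.map_span, Set.image_singleton, Ideal.span_singleton_eq_top]
    simp only [φ, map_C]
    refine IsUnit.map C (IsUnit.mk0 _ ?_)
    rwa [Ne, mk_span_eq_zero]
  have m0 : mI (G.map φ) (s + 1) = ⊥ := by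
    rw [mI_map, hI (s + 1) hkn, Ideal.map_span, Set.image_singleton, Ideal.span_singleton_eq_bot]
    simp only [φ, map_C]
    rw [(mk_span_eq_zero _ _).2 hk, C_0]
  obtain ⟨y, v, hyv⟩ := exists_unimod_comb (splitIdem_mv _ N) (G.map φ) (by omega : 0 < s) m1 m0
  choose y' hy' using fun i => hφ (y i)
  choose v' hv' using fun i => hφ (v i)
  obtain rfl : (fun i => φ (y' i)) = y := funext hy'
  obtain rfl : (fun i => φ (v' i)) = v := funext hv'
  have hyv2 : φ (y' ⬝ᵥ (G *ᵥ v') - 1) = 0 := by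
    rw [map_sub, map_one, sub_eq_zero, ← hyv]
    simp only [dotProduct, map_sum, map_mul, map_mulVec']
  have hdv := (C_dvd_iff_map_mk π _).2 hyv2
  have htop : Ideal.span (Set.range (G *ᵥ v')) ⊔ Ideal.span {C π} = ⊤ := by
    rw [Ideal.eq_top_iff_one]
    have e1 : (1 : MvPolynomial (Fin N) B) = y' ⬝ᵥ (G *ᵥ v') - (y' ⬝ᵥ (G *ᵥ v') - 1) := by ring
    rw [e1]
    refine Ideal.sub_mem _ (Ideal.mem_sup_left ?_) (Ideal.mem_sup_right (Ideal.mem_span_singleton.2 hdv))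
    exact Ideal.sum_mem _ fun i _ => Ideal.mul_mem_left _ _ (Ideal.subset_span ⟨i, rfl⟩)
  obtain ⟨c, hc⟩ := lemmaL π hmax N _ htop
  refine ⟨v', c, ?_, hc⟩
  have h2 := span_range_of_Rl hc htop
  have h3 := span_range_map_top (constantCoeff (R := B) (σ := Fin N)) h2
  simpa using h3

lemma clear_first_row {A : Type*} [CommRing A] {r : ℕ} (H : Matrix (Fin (r+1)) (Fin (r+1)) A)
    (h : ∀ i, H i 0 = (Pi.single 0 1 : Fin (r+1) → A) i) :
    ∃ M, MEq H (bd 1 M) := by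
  refine ⟨H.submatrix Fin.succ Fin.succ, 1, 1 + vecMulVec (Pi.single 0 1) (Fin.cases 0 fun j => H 0 j.succ),
    isUnit_one, isUnit_one_add_vecMulVec (by simp), ?_⟩
  rw [Matrix.one_mul, Matrix.mul_add, Matrix.mul_one, mul_vecMulVec]
  ext i j
  rw [Matrix.add_apply, vecMulVec_apply, mulVec_single_one]
  refine Fin.cases ?_ (fun i => ?_) i <;> refine Fin.cases ?_ (fun j => ?_) j <;> simp [h]

lemma UT_core {r : ℕ} [Nontrivial (Fin (r+1))] (hQ : QC (MvPolynomial (Fin N) B))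
    (G : Matrix (Fin (r+1)) (Fin (r+1)) (MvPolynomial (Fin N) B))
    (Φ : ℕ → B) (hI : ∀ k ≤ r + 1, mI G k = Ideal.span {C (∏ j ∈ Finset.range k, Φ j)})
    (h1 : Φ 0 = 1) (h0 : ∀ i ≤ r, Φ i ≠ 0) : ∃ M, MEq G (bd 1 M) := by
  set h := ∏ j ∈ Finset.range (r+1), Φ j with hh
  have hne : h ≠ 0 := Finset.prod_ne_zero_iff.2 fun i hi => h0 i (by simp at hi; omega)
  obtain ⟨ϖ, ⟨v, c, hc, hR⟩, hϖd, n, hn⟩ := QP.radical G h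
    (fun π hπ hd => QP_prime G Φ hI h1 π hπ hd) h hne dvd_rfl
  have hϖ0 : ϖ ≠ 0 := fun hz => hne (by rw [hz] at hϖd; exact zero_dvd_iff.1 hϖd)
  obtain ⟨a, ha0, hcop⟩ := stable_range hϖ0 c 0 hc
  have hR2 := hR.trans (Rl.row (fun i => C (c i)) (fun i => C (a i)) 0 (by simp [ha0]))
  obtain ⟨γ, hγ, hγd⟩ := hR2
  have hcop2 : IsCoprime (C h) ((γ *ᵥ (G *ᵥ v)) 0) := by
    have e1 : IsCoprime (C ϖ) ((γ *ᵥ (G *ᵥ v)) 0) := by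
      obtain ⟨z, hz⟩ := hγd 0
      rw [Function.update_self] at hz
      have e2 : (γ *ᵥ (G *ᵥ v)) 0 = C (c 0 + ∑ j, a j * c j) + C ϖ * z := by
        rw [← hz]; simp
      rw [e2]
      exact IsCoprime.add_mul_left_right (hcop.map C) z
    have e3 : IsCoprime ((C ϖ : MvPolynomial (Fin N) B) ^ n) ((γ *ᵥ (G *ᵥ v)) 0) := e1.pow_left
    refine e3.of_isCoprime_of_dvd_left ?_
    rw [← map_pow]; exact map_dvd C hn
  have hR3 : Rl (C h) (G *ᵥ v) (Pi.single 0 1) :=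
    (Rl.of_eq hγ rfl).trans (Rl.of_isCoprime 0 0 hcop2)
  obtain ⟨δ, hδ, hδd⟩ := hR3
  choose z hz using hδd
  set G' := δ * G with hG'
  have hdet : Ideal.span {G'.det} = Ideal.span {C h} := by
    rw [← mI_det, hh, ← hI (r + 1) le_rfl]
    have : MEq G' G := ⟨δ, 1, hδ, isUnit_one, by simp [hG']⟩
    exact this.mI_eq _
  obtain ⟨u, hu⟩ := Ideal.span_singleton_eq_span_singleton.1 hdet
  let v' := v - (u : MvPolynomial (Fin N) B) • (G'.adjugate *ᵥ z)
  have hv' : G' *ᵥ v' = Pi.single 0 1 := by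
    have e1 : G' *ᵥ v = Pi.single 0 1 + (C h : MvPolynomial (Fin N) B) • z := by
      funext i
      have := hz i
      rw [mulVec_mulVec] at this
      simp only [Pi.add_apply, Pi.smul_apply, smul_eq_mul]
      rw [← this]; ring
    have e2 : G' *ᵥ (G'.adjugate *ᵥ z) = G'.det • z := by
      rw [mulVec_mulVec, mul_adjugate, smul_mulVec, one_mulVec]
    rw [mulVec_sub, mulVec_smul, e1, e2, ← hu, smul_smul, mul_comm, add_sub_cancel_right]
  have hspan : Ideal.span (Set.range v') = ⊤ := by
    rw [Ideal.eq_top_iff_one]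
    have e1 := congrFun hv' 0
    rw [Pi.single_eq_same] at e1
    rw [← e1]
    change ∑ i, G' 0 i * v' i ∈ _
    exact Ideal.sum_mem _ fun i _ => Ideal.mul_mem_left _ _ (Ideal.subset_span ⟨i, rfl⟩)
  obtain ⟨_, ⟨η, rfl⟩, hηv⟩ := hQ _ v' 0 hspan
  have hη2 : ((η⁻¹ : (Matrix (Fin (r+1)) (Fin (r+1)) (MvPolynomial (Fin N) B))ˣ) :
      Matrix (Fin (r+1)) (Fin (r+1)) (MvPolynomial (Fin N) B)) *ᵥ (Pi.single 0 1) = v' := by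
    rw [← hηv, mulVec_mulVec, η.inv_mul, one_mulVec]
  obtain ⟨M, hM⟩ := clear_first_row (G' * ((η⁻¹ : (Matrix (Fin (r+1)) (Fin (r+1)) (MvPolynomial (Fin N) B))ˣ) :
      Matrix (Fin (r+1)) (Fin (r+1)) (MvPolynomial (Fin N) B))) (by
    intro i
    rw [← hv', ← hη2, mulVec_mulVec, mulVec_single_one]; rfl)
  refine ⟨M, MEq.trans (MEq.symm ?_) hM⟩
  exact ⟨δ, _, hδ, Units.isUnit _, rfl⟩

lemma span_mul_cancel {A : Type*} [CommRing A] [IsDomain A] {x : A} (hx : x ≠ 0) {I J : Ideal A}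
    (h : Ideal.span {x} * I = Ideal.span {x} * J) : I = J :=
  (Ideal.span_singleton_mul_right_inj hx).1 h

theorem UT (hQ : QC (MvPolynomial (Fin N) B)) : ∀ (r : ℕ)
    (G : Matrix (Fin r) (Fin r) (MvPolynomial (Fin N) B)) (Φ : ℕ → B)
    (hI : ∀ k ≤ r, mI G k = Ideal.span {C (∏ j ∈ Finset.range k, Φ j)})
    (h0 : ∀ i < r, Φ i ≠ 0), MEq G (diagonal fun i : Fin r => C (Φ i)) := by
  intro r
  induction r with
  | zero =>
    intro G Φ _ _
    have : G = diagonal fun i : Fin 0 => C (Φ i) := by ext i; exact i.elim0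
    rw [this]; exact MEq.refl _
  | succ r ih =>
    intro G Φ hI h0
    -- factor out the first invariant
    have hΦ0 := h0 0 (Nat.succ_pos _)
    have hent : ∀ i j, C (Φ 0) ∣ G i j := by
      intro i j
      have := entry_mem_mI G i j
      rw [hI 1 (by omega), Ideal.mem_span_singleton] at this
      simpa using this
    choose G1' hG1' using hent
    set G1 : Matrix (Fin (r+1)) (Fin (r+1)) (MvPolynomial (Fin N) B) := of G1' with hG1d
    have hG : G = (C (Φ 0) : MvPolynomial (Fin N) B) • G1 := by
      ext i j : 2
      rw [hG1', Matrix.smul_apply, hG1d, of_apply, smul_eq_mul]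
    have hCΦ : (C (Φ 0) : MvPolynomial (Fin N) B) ≠ 0 := by simpa using hΦ0
    -- new invariants
    have hΨ : ∃ Ψ : ℕ → B, ∀ k ≤ r, Φ k = Φ 0 * Ψ k ∧
        mI G1 (k+1) = Ideal.span {C (∏ j ∈ Finset.range (k+1), Ψ j)} := by
      have key : ∀ k, ∃ δ, k ≤ r + 1 → ∏ j ∈ Finset.range k, Φ j = Φ 0 ^ k * δ ∧
          mI G1 k = Ideal.span {C δ} := by
        intro k
        by_cases hk : k ≤ r + 1
        · have h1 := hI k hk
          rw [hG, mI_smul] at h1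
          have h2 : (C (Φ 0 ^ k) : MvPolynomial (Fin N) B) ∣ C (∏ j ∈ Finset.range k, Φ j) := by
            rw [← Ideal.mem_span_singleton, map_pow]
            exact (Ideal.mul_le_left (J := mI G1 k)) (h1 ▸ Ideal.mem_span_singleton_self _)
          rw [C_dvd_iff_dvd_coeff] at h2
          obtain ⟨δ, hδ⟩ := h2 0
          simp only [coeff_zero_C] at hδ
          refine ⟨δ, fun _ => ⟨hδ, ?_⟩⟩
          rw [hδ, C_mul, ← Ideal.span_singleton_mul_span_singleton, map_pow] at h1
          exact span_mul_cancel (pow_ne_zero _ hCΦ) h1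
        · exact ⟨0, fun h => absurd h hk⟩
      choose δ hδ using key
      have hδ0 : δ 0 = 1 := by
        have := (hδ 0 (by omega)).1
        simpa using this.symm
      have hδne : ∀ k ≤ r + 1, δ k ≠ 0 := by
        intro k hk hz
        have := (hδ k hk).1
        rw [hz, mul_zero, Finset.prod_eq_zero_iff] at this
        obtain ⟨j, hj, hj'⟩ := this
        simp at hj
        exact h0 j (by omega) hj'
      have hstep : ∀ k, ∃ ψ, k ≤ r → δ (k+1) = δ k * ψ := by
        intro k
        by_cases hk : k ≤ r
        · have h1 := mI_succ_le G1 k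
          rw [(hδ k (by omega)).2, (hδ (k+1) (by omega)).2, Ideal.span_singleton_le_span_singleton,
            C_dvd_iff_dvd_coeff] at h1
          obtain ⟨ψ, hψ⟩ := h1 0
          simp only [coeff_zero_C] at hψ
          exact ⟨ψ, fun _ => hψ⟩
        · exact ⟨0, fun h => absurd h hk⟩
      choose Ψ hΨ using hstep
      have hprod : ∀ k ≤ r + 1, ∏ j ∈ Finset.range k, Ψ j = δ k := by
        intro k
        induction k with
        | zero => intro _; simp [hδ0]
        | succ k ihk => intro hk; rw [Finset.prod_range_succ, ihk (by omega), hΨ k (by omega)]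
      refine ⟨Ψ, fun k hk => ⟨?_, ?_⟩⟩
      · have e1 := (hδ (k+1) (by omega)).1
        rw [Finset.prod_range_succ, (hδ k (by omega)).1, hΨ k hk, pow_succ] at e1
        have e2 : Φ 0 ^ k * δ k ≠ 0 := mul_ne_zero (pow_ne_zero _ hΦ0) (hδne k (by omega))
        apply mul_left_cancel₀ e2
        linear_combination e1
      · rw [hprod (k+1) (by omega), (hδ (k+1) (by omega)).2]
    obtain ⟨Ψ, hΨ⟩ := hΨ
    have hΨ0 : Ψ 0 = 1 := by
      have := (hΨ 0 (by omega)).1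
      exact mul_left_cancel₀ hΦ0 (by rw [← this, mul_one])
    have hΨne : ∀ k ≤ r, Ψ k ≠ 0 := by
      intro k hk hz
      have := (hΨ k hk).1
      rw [hz, mul_zero] at this
      exact h0 k (by omega) this
    have hI1 : ∀ k ≤ r + 1, mI G1 k = Ideal.span {C (∏ j ∈ Finset.range k, Ψ j)} := by
      intro k hk
      cases k with
      | zero => rw [mI_zero]; simp
      | succ k => exact (hΨ k (by omega)).2
    have hdiag : (diagonal fun i : Fin (r+1) => (C (Φ i) : MvPolynomial (Fin N) B)) =
        (C (Φ 0) : MvPolynomial (Fin N) B) • diagonal fun i : Fin (r+1) => C (Ψ i) := by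
      rw [← diagonal_smul]
      congr 1
      funext i
      rw [(hΨ i (by omega)).1, C_mul]; rfl
    rw [hG, hdiag]
    apply MEq.smul
    -- the normalised case
    have hM : ∃ M, MEq G1 (bd 1 M) := by
      rcases Nat.eq_zero_or_pos r with hr | hr
      · subst hr
        have hu : IsUnit (G1 0 0) := by
          have e1 := hI1 1 le_rfl
          rw [mI_det, Finset.prod_range_one, hΨ0, C_1, Ideal.span_singleton_one,
            Ideal.span_singleton_eq_top, det_fin_one] at e1
          exact e1
        refine ⟨1, G1, 1, ?_, isUnit_one, ?_⟩
        · rw [isUnit_iff_isUnit_det, det_fin_one]; exact hu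
        · rw [bd_one, Matrix.mul_one, Matrix.mul_one]
      · haveI : Nontrivial (Fin (r+1)) := Fin.nontrivial_iff_two_le.2 (by omega)
        exact UT_core hQ G1 Ψ hI1 hΨ0 hΨne
    obtain ⟨M, hM⟩ := hM
    refine hM.trans ?_
    have hIM : ∀ k ≤ r, mI M k = Ideal.span {C (∏ j ∈ Finset.range k, Ψ (j + 1))} := by
      intro k hk
      rw [← mI_bd, ← hM.mI_eq, hI1 (k+1) (by omega), Finset.prod_range_succ', hΨ0, mul_one]
    have := (ih M (fun j => Ψ (j+1)) hIM (fun i hi => hΨne (i+1) (by omega))).bd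
    refine this.trans ?_
    rw [bd_diagonal]
    have e : (Fin.cons 1 (fun i : Fin r => C (Ψ (i + 1))) : Fin (r+1) → MvPolynomial (Fin N) B) =
        fun i : Fin (r+1) => C (Ψ i) := by
      funext i
      refine Fin.cases ?_ (fun i => ?_) i
      · simp [hΨ0]
      · simp
    rw [e]
    exact MEq.refl _

end UT

section Pad
variable {A : Type*} [CommRing A]

lemma MEq.pad {l m r : ℕ} (hl : r ≤ l) (hm : r ≤ m) {G G' : Matrix (Fin r) (Fin r) A} (h : MEq G G') :
    MEq (Jm A l r * G * Jm A r m) (Jm A l r * G' * Jm A r m) := by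
  obtain ⟨U, V, hU, hV, rfl⟩ := h
  refine ⟨_, _, isUnit_pad (Jm_mul_Jm A hl) hU, isUnit_pad (Jm_mul_Jm A hm) hV, ?_⟩
  have e1 : (Jm A l r * U * Jm A r l + (1 - Jm A l r * Jm A r l)) * Jm A l r = Jm A l r * U := by
    rw [Matrix.add_mul, Matrix.sub_mul, Matrix.mul_assoc (Jm A l r * U), Jm_mul_Jm A hl,
      Matrix.mul_assoc (Jm A l r) (Jm A r l), Jm_mul_Jm A hl]
    simp
  have e2 : Jm A r m * (Jm A m r * V * Jm A r m + (1 - Jm A m r * Jm A r m)) = V * Jm A r m := by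
    rw [Matrix.mul_add, Matrix.mul_sub, Matrix.mul_assoc (Jm A m r), ← Matrix.mul_assoc (Jm A r m),
      ← Matrix.mul_assoc (Jm A r m), Jm_mul_Jm A hm]
    simp
  calc Jm A l r * (U * G' * V) * Jm A r m = (Jm A l r * U) * G' * (V * Jm A r m) := by
        simp only [Matrix.mul_assoc]
    _ = (Jm A l r * U * Jm A r l + (1 - Jm A l r * Jm A r l)) * Jm A l r * G' *
          (Jm A r m * (Jm A m r * V * Jm A r m + (1 - Jm A m r * Jm A r m))) := by rw [e1, e2]
    _ = _ := by simp only [Matrix.mul_assoc]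

lemma Jm_diag_Jm {l m r : ℕ} (φ : ℕ → A) (i : Fin l) (j : Fin m) :
    (Jm A l r * (diagonal fun i : Fin r => φ i) * Jm A r m) i j =
      if (i : ℕ) = (j : ℕ) then (if (i : ℕ) < r then φ i else 0) else 0 := by
  rw [Matrix.mul_apply]
  simp only [mul_diagonal, Jm, of_apply]
  by_cases hi : (i : ℕ) < r
  · rw [Finset.sum_eq_single ⟨i, hi⟩]
    · simp [hi]
    · intro b _ hb
      have : ¬ (i : ℕ) = b := fun h => hb (Fin.ext h.symm)
      simp [this]
    · simp
  · rw [Finset.sum_eq_zero]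
    · simp [hi]
    · intro b _
      have : ¬ (i : ℕ) = b := fun h => hi (h ▸ b.2)
      simp [this]

end Pad

section UTp
variable {B : Type*} [CommRing B] [IsDomain B] [IsPrincipalIdealRing B] {N : ℕ}

lemma UT' (hQ : QC (MvPolynomial (Fin N) B)) (hS : SplitIdem (MvPolynomial (Fin N) B)) {s : ℕ}
    (H : Matrix (Fin (s+1)) (Fin (s+1)) (MvPolynomial (Fin N) B)) (Φ : ℕ → B)
    (hI : ∀ k ≤ s, mI H k = Ideal.span {C (∏ j ∈ Finset.range k, Φ j)})
    (h0 : ∀ i < s, Φ i ≠ 0) (hbot : mI H (s+1) = ⊥) :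
    MEq H (diagonal fun i : Fin (s+1) => if i = Fin.last s then 0 else C (Φ i)) := by
  obtain ⟨h1, h2, G, hG, hGI⟩ := reduce_square hS H _ (by
    rw [Ne, C_eq_zero]
    exact Finset.prod_ne_zero_iff.2 fun i hi => h0 i (by simpa using hi)) (hI s le_rfl) hbot
  have h3 := UT hQ s G Φ (fun k hk => by rw [hGI, hI k hk]) h0
  have h4 := hG.trans (h3.pad h1 h2)
  convert h4 using 1
  ext i j : 2
  rw [Jm_diag_Jm (fun i => C (Φ i)), diagonal_apply]
  have : (i : ℕ) < s ↔ i ≠ Fin.last s := by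
    rw [Ne, Fin.ext_iff, Fin.val_last]; omega
  by_cases hij : i = j
  · subst hij
    by_cases hi : i = Fin.last s <;> simp [this, hi]
  · have : ¬ (i : ℕ) = j := fun h => hij (Fin.ext h)
    simp [hij, this]

end UTp

section Glue
variable {A : Type*} [CommRing A] {ι : Type*} (ρ : ι → A →+* A)
  {q : Type*} [Fintype q] [DecidableEq q]

lemma lemmaX (hc : ∀ i j x, ρ i (ρ j x) = ρ j (ρ i x)) (hi : ∀ i x, ρ i (ρ i x) = ρ i x)
    (H M : Matrix q q A) (S : Finset ι) (hM : ∀ j ∈ S, M.map (ρ j) = H)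
    (hH : ∀ j ∈ S, H.map (ρ j) = H) (h : MEq M H) :
    ∃ U V : (Matrix q q A)ˣ, M = U * H * V ∧ (∀ j ∈ S, (U : Matrix q q A).map (ρ j) = 1) ∧
      (∀ j ∈ S, (V : Matrix q q A).map (ρ j) = 1) := by
  classical
  induction S using Finset.induction_on with
  | empty =>
    obtain ⟨_, _, ⟨U, rfl⟩, ⟨V, rfl⟩, h⟩ := h
    exact ⟨U, V, h, by simp, by simp⟩
  | insert j S hj ih =>
    obtain ⟨U, V, hUV, hU, hV⟩ := ih (fun i hi => hM i (Finset.mem_insert_of_mem hi))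
      (fun i hi => hH i (Finset.mem_insert_of_mem hi))
    let τ : ι → (Matrix q q A)ˣ →* (Matrix q q A)ˣ := fun i => Units.map ((ρ i).mapMatrix (m := q) : Matrix q q A →* Matrix q q A)
    have hτ : ∀ i (U : (Matrix q q A)ˣ), ((τ i U : (Matrix q q A)ˣ) : Matrix q q A) = (U : Matrix q q A).map (ρ i) :=
      fun i U => rfl
    have hττ : ∀ i U, τ i (τ i U) = τ i U := by
      intro i U; ext a b
      simp only [hτ, Matrix.map_apply, hi]
    have hτc : ∀ i k U, τ i (τ k U) = τ k (τ i U) := by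
      intro i k U; ext a b
      simp only [hτ, Matrix.map_apply, hc i k]
    have hτ1 : ∀ i (U : (Matrix q q A)ˣ), (U : Matrix q q A).map (ρ i) = 1 ↔ τ i U = 1 := by
      intro i U; rw [← hτ, Units.val_eq_one]
    have e0 : H = (τ j U : (Matrix q q A)ˣ) * H * (τ j V : (Matrix q q A)ˣ) := by
      conv_lhs => rw [← hM j (Finset.mem_insert_self _ _), hUV, Matrix.map_mul, Matrix.map_mul,
        hH j (Finset.mem_insert_self _ _)]
      rfl
    have e1 : H = ((τ j U)⁻¹ : (Matrix q q A)ˣ) * H * ((τ j V)⁻¹ : (Matrix q q A)ˣ) := by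
      rw [Units.eq_mul_inv_iff_mul_eq, Units.eq_inv_mul_iff_mul_eq, ← mul_assoc]
      exact e0.symm
    refine ⟨U * (τ j U)⁻¹, (τ j V)⁻¹ * V, ?_, ?_, ?_⟩
    · conv_lhs => rw [hUV, e1]
      simp only [Units.val_mul, mul_assoc]
    · intro i hi'
      rw [hτ1, map_mul, map_inv, mul_inv_eq_one]
      rcases Finset.mem_insert.1 hi' with rfl | hi'
      · rw [hττ]
      · rw [hτc, (hτ1 _ _).1 (hU i hi'), map_one]
    · intro i hi'
      rw [hτ1, map_mul, map_inv, inv_mul_eq_one]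
      rcases Finset.mem_insert.1 hi' with rfl | hi'
      · rw [hττ]
      · rw [hτc, (hτ1 _ _).1 (hV i hi'), map_one]

lemma glue (hc : ∀ i j x, ρ i (ρ j x) = ρ j (ρ i x)) (hi : ∀ i x, ρ i (ρ i x) = ρ i x)
    (G D : Matrix q q A) (S : Finset ι) (hD : ∀ j ∈ S, D.map (ρ j) = D)
    (h : ∀ j ∈ S, MEq (G.map (ρ j)) D) :
    ∃ G', MEq G G' ∧ ∀ j ∈ S, G'.map (ρ j) = D := by
  classical
  induction S using Finset.induction_on with
  | empty => exact ⟨G, MEq.refl _, by simp⟩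
  | insert j S hj ih =>
    obtain ⟨G', hG, hG'⟩ := ih (fun i hi => hD i (Finset.mem_insert_of_mem hi))
      (fun i hi => h i (Finset.mem_insert_of_mem hi))
    have hDj := hD j (Finset.mem_insert_self _ _)
    have hmm : ∀ i k (M : Matrix q q A), (M.map (ρ i)).map (ρ k) = (M.map (ρ k)).map (ρ i) := by
      intro i k M; ext a b; simp [hc i k]
    have hmi : ∀ i (M : Matrix q q A), (M.map (ρ i)).map (ρ i) = M.map (ρ i) := by
      intro i M; ext a b; simp [hi]
    have h1 : MEq (G'.map (ρ j)) D := (hG.symm.map (ρ j)).trans (h j (Finset.mem_insert_self _ _))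
    obtain ⟨U, V, hUV, hU, hV⟩ := lemmaX ρ hc hi D (G'.map (ρ j)) S
      (fun i hi' => by rw [hmm, hG' i hi', hDj]) (fun i hi => hD i (Finset.mem_insert_of_mem hi)) h1
    let τ : ι → (Matrix q q A)ˣ →* (Matrix q q A)ˣ := fun i => Units.map ((ρ i).mapMatrix (m := q) : Matrix q q A →* Matrix q q A)
    have hτ : ∀ i (U : (Matrix q q A)ˣ), ((τ i U : (Matrix q q A)ˣ) : Matrix q q A) = (U : Matrix q q A).map (ρ i) :=
      fun i U => rfl
    have hττ : ∀ i U, τ i (τ i U) = τ i U := by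
      intro i U; ext a b
      simp only [hτ, Matrix.map_apply, hi]
    have hτc : ∀ i k U, τ i (τ k U) = τ k (τ i U) := by
      intro i k U; ext a b
      simp only [hτ, Matrix.map_apply, hc i k]
    have hτ1 : ∀ i (U : (Matrix q q A)ˣ), (U : Matrix q q A).map (ρ i) = 1 ↔ τ i U = 1 := by
      intro i U; rw [← hτ, Units.val_eq_one]
    have hUV' : G'.map (ρ j) = (τ j U : (Matrix q q A)ˣ) * D * (τ j V : (Matrix q q A)ˣ) := by
      rw [← hmi, hUV, Matrix.map_mul, Matrix.map_mul, hDj]; rfl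
    refine ⟨((τ j U)⁻¹ : (Matrix q q A)ˣ) * G' * ((τ j V)⁻¹ : (Matrix q q A)ˣ),
      hG.trans (MEq.symm ⟨_, _, Units.isUnit _, Units.isUnit _, rfl⟩), ?_⟩
    intro i hi'
    rw [Matrix.map_mul, Matrix.map_mul, ← hτ, ← hτ, map_inv, map_inv]
    rcases Finset.mem_insert.1 hi' with rfl | hi'
    · rw [hττ, hττ, hUV']
      simp [← mul_assoc]
    · rw [hτc, hτc i, (hτ1 _ _).1 (hU i hi'), (hτ1 _ _).1 (hV i hi'), hG' i hi']
      simp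
end Glue

section Retr
variable {B : Type*} [CommRing B] {N : ℕ}

/-- substitute `X j ↦ 0` -/
noncomputable def rho (j : Fin N) : MvPolynomial (Fin N) B →+* MvPolynomial (Fin N) B :=
  ((aeval fun i => if i = j then 0 else X i : MvPolynomial (Fin N) B →ₐ[B] MvPolynomial (Fin N) B) :
    MvPolynomial (Fin N) B →+* MvPolynomial (Fin N) B)

@[simp] lemma rho_C (j : Fin N) (q : B) : rho j (C q) = C q := by
  simp [rho]

lemma rho_X (j i : Fin N) : rho j (X i : MvPolynomial (Fin N) B) = if i = j then 0 else X i := by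
  simp [rho]

@[simp] lemma rho_X_self (j : Fin N) : rho j (X j : MvPolynomial (Fin N) B) = 0 := by
  simp [rho_X]

lemma rho_comm (i j : Fin N) (x : MvPolynomial (Fin N) B) : rho i (rho j x) = rho j (rho i x) := by
  have : (rho i).comp (rho j) = (rho j).comp (rho i : MvPolynomial (Fin N) B →+* _) := by
    apply MvPolynomial.ringHom_ext
    · intro r; simp
    · intro k
      simp only [RingHom.comp_apply, rho_X]
      split_ifs <;> simp [rho_X, *]
  exact congrArg (fun f => f x) this

lemma rho_idem (i : Fin N) (x : MvPolynomial (Fin N) B) : rho i (rho i x) = rho i x := by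
  have : (rho i).comp (rho i) = (rho i : MvPolynomial (Fin N) B →+* _) := by
    apply MvPolynomial.ringHom_ext
    · intro r; simp
    · intro k
      simp only [RingHom.comp_apply, rho_X]
      split_ifs <;> simp [rho_X, *]
  exact congrArg (fun f => f x) this

lemma X_dvd_sub_rho (j : Fin N) (x : MvPolynomial (Fin N) B) : X j ∣ x - rho j x := by
  rw [← Ideal.mem_span_singleton, ← Ideal.Quotient.eq]
  have : (Ideal.Quotient.mk (Ideal.span {(X j : MvPolynomial (Fin N) B)})) =
      (Ideal.Quotient.mk _).comp (rho j) := by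
    apply MvPolynomial.ringHom_ext
    · intro r; simp
    · intro k
      simp only [RingHom.comp_apply, rho_X]
      split_ifs with h
      · subst h; rw [map_zero, Ideal.Quotient.eq_zero_iff_mem]; exact Ideal.mem_span_singleton_self _
      · rfl
  exact congrArg (fun f => f x) this

lemma C_dvd_of_X_mul (q : B) (j : Fin N) (μ : MvPolynomial (Fin N) B) (h : C q ∣ X j * μ) : C q ∣ μ := by
  rw [C_dvd_iff_dvd_coeff] at h ⊢
  intro m
  have := h (Finsupp.single j 1 + m)
  rwa [coeff_X_mul] at this

lemma C_dvd_of_prod_mul (q : B) (S : Finset (Fin N)) (μ : MvPolynomial (Fin N) B)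
    (h : C q ∣ (∏ j ∈ S, X j) * μ) : C q ∣ μ := by
  induction S using Finset.induction_on with
  | empty => simpa using h
  | insert j S hj ih =>
    rw [Finset.prod_insert hj, mul_assoc] at h
    exact ih (C_dvd_of_X_mul q j _ h)

lemma C_dvd_of_pow_mul (q : B) (S : Finset (Fin N)) (k : ℕ) (μ : MvPolynomial (Fin N) B)
    (h : C q ∣ (∏ j ∈ S, X j) ^ k * μ) : C q ∣ μ := by
  induction k with
  | zero => simpa using h
  | succ k ih =>
    rw [pow_succ', mul_assoc] at h
    exact ih (C_dvd_of_prod_mul q S _ h)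

lemma rho_prod (j : Fin N) (S : Finset (Fin N)) (hj : j ∉ S) :
    rho j (∏ i ∈ S, X i : MvPolynomial (Fin N) B) = ∏ i ∈ S, X i := by
  rw [map_prod]
  refine Finset.prod_congr rfl fun i hi => ?_
  rw [rho_X, if_neg]; rintro rfl; exact hj hi

lemma lemmaY (q : B) (S : Finset (Fin N)) (f : MvPolynomial (Fin N) B)
    (h : ∀ j ∈ S, C q ∣ rho j f) : ∃ t y, f = C q * t + (∏ j ∈ S, X j) * y := by
  induction S using Finset.induction_on with
  | empty => exact ⟨0, f, by simp⟩
  | insert j S hj ih =>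
    obtain ⟨t, y, hty⟩ := ih fun i hi => h i (Finset.mem_insert_of_mem hi)
    have h1 := h j (Finset.mem_insert_self _ _)
    rw [hty, map_add, map_mul, map_mul, rho_C, rho_prod j S hj, dvd_add_right (dvd_mul_right _ _)] at h1
    obtain ⟨w, hw⟩ := C_dvd_of_prod_mul q S _ h1
    obtain ⟨z, hz⟩ := X_dvd_sub_rho j y
    refine ⟨t + (∏ j ∈ S, X j) * w, z, ?_⟩
    have : y = C q * w + X j * z := by rw [← hw, ← hz]; ring
    rw [hty, this, Finset.prod_insert hj]; ring

lemma prod_dvd_of_rho (S : Finset (Fin N)) (f : MvPolynomial (Fin N) B)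
    (h : ∀ j ∈ S, rho j f = 0) : (∏ j ∈ S, X j) ∣ f := by
  obtain ⟨t, y, hty⟩ := lemmaY 0 S f fun j hj => by rw [h j hj]; exact dvd_zero _
  exact ⟨y, by rw [hty]; simp⟩

end Retr

section LastRow
variable {A : Type*} [CommRing A] {s : ℕ}

/-- scale the last coordinate -/
def lastD (s : ℕ) (p : A) : Matrix (Fin (s+1)) (Fin (s+1)) A :=
  diagonal fun i => if i = Fin.last s then p else 1

lemma lastD_mul (p : A) (M : Matrix (Fin (s+1)) (Fin (s+1)) A) (i j) :
    (lastD s p * M) i j = (if i = Fin.last s then p else 1) * M i j := by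
  rw [lastD, diagonal_mul]

lemma mul_lastD (p : A) (M : Matrix (Fin (s+1)) (Fin (s+1)) A) (i j) :
    (M * lastD s p) i j = M i j * (if j = Fin.last s then p else 1) := by
  rw [lastD, mul_diagonal]

lemma det_lastD (p : A) : (lastD s p).det = p := by
  rw [lastD, det_diagonal]; simp

lemma isUnit_lastD {u : A} (hu : IsUnit u) : IsUnit (lastD s u) := by
  rw [isUnit_iff_isUnit_det, det_lastD]; exact hu

end LastRow

section SQ

lemma last_minor {A : Type*} [CommRing A] {s : ℕ} (M : Matrix (Fin (s+1)) (Fin (s+1)) A) (φ : ℕ → A)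
    (hM : ∀ i j, i ≠ Fin.last s → M i j = if i = j then φ i else 0) (k : Fin (s+1)) :
    (∏ i ∈ Finset.range k, φ i) * M (Fin.last s) k ∈ mI M (k + 1) := by
  have hk := k.2
  let f : Fin ((k:ℕ)+1) → Fin (s+1) := fun i => if (i:ℕ) < k then ⟨i, by omega⟩ else Fin.last s
  let g : Fin ((k:ℕ)+1) → Fin (s+1) := fun i => ⟨i, by omega⟩
  have hrow : ∀ i : Fin ((k:ℕ)+1), (i:ℕ) < k → ∀ j, M (f i) (g j) = if i = j then φ i else 0 := by
    intro i hi j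
    have : f i = ⟨i, by omega⟩ := by simp only [f, hi, if_true]
    rw [this, hM]
    · simp [g, Fin.ext_iff]
    · rw [Ne, Fin.ext_iff, Fin.val_last]; simp only; omega
  have h := det_mem_mI M f g
  rw [det_of_lowerTriangular, Fin.prod_univ_castSucc, ← Fin.prod_univ_eq_prod_range] at *
  · convert h using 2
    · refine Finset.prod_congr rfl fun i _ => ?_
      rw [submatrix_apply, hrow _ (by simp)]; simp
    · rw [submatrix_apply]
      congr 1
      simp [f]
  · intro i j hij
    have hij' : i < j := hij
    rw [submatrix_apply, hrow _ (by have := Fin.lt_def.1 hij'; omega), if_neg hij'.ne]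

variable {B : Type*} [CommRing B] [IsDomain B] [IsPrincipalIdealRing B] {N : ℕ}

theorem square_step (hQ : QC (MvPolynomial (Fin N) B)) (hS : SplitIdem (MvPolynomial (Fin N) B)) {s : ℕ}
    (G : Matrix (Fin (s+1)) (Fin (s+1)) (MvPolynomial (Fin N) B)) (Φ : ℕ → B)
    (h0 : ∀ i < s + 1, Φ i ≠ 0)
    (hI : ∀ k ≤ s, mI G k = Ideal.span {C (∏ j ∈ Finset.range k, Φ j)})
    (hd : mI G (s+1) = Ideal.span {(∏ i, X i) * C (∏ j ∈ Finset.range (s+1), Φ j)}) :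
    MEq G (lastD s (∏ i, X i) * diagonal fun i : Fin (s+1) => C (Φ i)) := by
  classical
  set p : MvPolynomial (Fin N) B := ∏ i, X i with hp
  have hp0 : p ≠ 0 := Finset.prod_ne_zero_iff.2 fun i _ => X_ne_zero i
  have hrp : ∀ j, rho j p = 0 := by
    intro j
    rw [hp, map_prod]
    exact Finset.prod_eq_zero (Finset.mem_univ j) (rho_X_self j)
  have hδ : ∀ k ≤ s + 1, ∏ j ∈ Finset.range k, Φ j ≠ 0 := fun k hk =>
    Finset.prod_ne_zero_iff.2 fun i hi => h0 i (by simp at hi; omega)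
  -- Step 1: normalise on the hyperplanes
  let D : Matrix (Fin (s+1)) (Fin (s+1)) (MvPolynomial (Fin N) B) :=
    diagonal fun i : Fin (s+1) => if i = Fin.last s then 0 else C (Φ i)
  have hDrho : ∀ j, D.map (rho j) = D := by
    intro j; ext a b : 2
    simp only [D, Matrix.map_apply, diagonal_apply]
    split_ifs <;> simp
  obtain ⟨G1, hG1, hG1D⟩ := glue rho rho_comm rho_idem G D Finset.univ (fun j _ => hDrho j) (by
    intro j _
    refine UT' hQ hS _ Φ ?_ (fun i hi => h0 i (by omega)) ?_
    · intro k hk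
      rw [mI_map, hI k hk, Ideal.map_span, Set.image_singleton, rho_C]
    · rw [mI_map, hd, Ideal.map_span, Set.image_singleton, map_mul, hrp, zero_mul,
        Ideal.span_singleton_eq_bot])
  -- normalise the determinant
  have hdet1 : Ideal.span {G1.det} = Ideal.span {p * C (∏ j ∈ Finset.range (s+1), Φ j)} := by
    rw [← mI_det, ← hd, hG1.mI_eq]
  obtain ⟨u, hu⟩ := Ideal.span_singleton_eq_span_singleton.1 hdet1
  obtain ⟨G2, hG2, hG2D, hG2det⟩ : ∃ G2, MEq G G2 ∧ (∀ j, G2.map (rho j) = D) ∧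
      G2.det = p * C (∏ j ∈ Finset.range (s+1), Φ j) := by
    refine ⟨lastD s (u : MvPolynomial (Fin N) B) * G1, hG1.trans (MEq.symm ⟨_, 1, isUnit_lastD u.isUnit,
      isUnit_one, by rw [Matrix.mul_one]⟩), ?_, ?_⟩
    · intro j
      have h1 := hG1D j (Finset.mem_univ j)
      ext a b : 2
      have h2 := congrFun (congrFun h1 a) b
      rw [Matrix.map_apply] at h2 ⊢
      rw [lastD_mul, map_mul, h2]
      by_cases ha : a = Fin.last s
      · subst ha
        simp [D, diagonal_apply]
      · simp [ha]
    · rw [det_mul, det_lastD, ← hu, mul_comm]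
  have hG2I : ∀ k ≤ s, mI G2 k = Ideal.span {C (∏ j ∈ Finset.range k, Φ j)} := fun k hk => by
    rw [← hG2.mI_eq, hI k hk]
  -- Step 2: divide the last row by p
  have hlast : ∀ b, p ∣ G2 (Fin.last s) b := by
    intro b
    refine prod_dvd_of_rho _ _ fun j _ => ?_
    have := congrFun (congrFun (hG2D j) (Fin.last s)) b
    rw [Matrix.map_apply] at this
    rw [this]; simp [D, diagonal_apply]
  choose w hw using hlast
  let G3 : Matrix (Fin (s+1)) (Fin (s+1)) (MvPolynomial (Fin N) B) :=
    of fun a b => if a = Fin.last s then w b else G2 a b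
  have hG23 : G2 = lastD s p * G3 := by
    ext a b : 2
    rw [lastD_mul]
    by_cases ha : a = Fin.last s
    · subst ha; simp [G3, hw]
    · simp [G3, ha]
  have hG3det : G3.det = C (∏ j ∈ Finset.range (s+1), Φ j) := by
    rw [hG23, det_mul, det_lastD] at hG2det
    exact mul_left_cancel₀ hp0 hG2det
  have hG3I : ∀ k ≤ s + 1, mI G3 k = Ideal.span {C (∏ j ∈ Finset.range k, Φ j)} := by
    intro k hk
    rcases Nat.lt_or_ge s k with h | h
    · obtain rfl : k = s + 1 := by omega
      rw [mI_det, hG3det]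
    · apply le_antisymm
      · intro μ hμ
        rw [Ideal.mem_span_singleton]
        apply C_dvd_of_pow_mul _ Finset.univ k
        rw [← Ideal.mem_span_singleton, ← hG2I k h]
        have e1 : p • G3 = (diagonal fun i => if i = Fin.last s then 1 else p) * G2 := by
          ext a b : 2
          rw [diagonal_mul, hG23, lastD_mul, Matrix.smul_apply, smul_eq_mul]
          split_ifs <;> simp
        have e2 : mI (p • G3) k ≤ mI G2 k := by rw [e1]; exact mI_mul_left _ _ _
        rw [mI_smul] at e2
        exact e2 (Ideal.mul_mem_mul (Ideal.mem_span_singleton_self _) hμ)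
      · rw [← hG2I k h, hG23]; exact mI_mul_left _ _ _
  have hG3UT := UT hQ (s+1) G3 Φ hG3I h0
  set H : Matrix (Fin (s+1)) (Fin (s+1)) (MvPolynomial (Fin N) B) :=
    diagonal fun i : Fin (s+1) => C (Φ i) with hH
  have hHrho : ∀ j, H.map (rho j) = H := by
    intro j; ext a b : 2
    simp only [H, Matrix.map_apply, diagonal_apply]
    split_ifs <;> simp
  -- Step 3: rows of G3
  have hG3row : ∀ j a b, a ≠ Fin.last s → rho j (G3 a b) = if a = b then C (Φ a) else 0 := by
    intro j a b ha
    have := congrFun (congrFun (hG2D j) a) b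
    rw [Matrix.map_apply] at this
    simp only [G3, of_apply, if_neg ha]
    rw [this]; simp [D, diagonal_apply, ha]
  have hG3last : ∀ j (b : Fin (s+1)), C (Φ b) ∣ rho j (G3 (Fin.last s) b) := by
    intro j b
    have h1 := last_minor (G3.map (rho j)) (fun i => C (Φ i)) (fun a b ha => hG3row j a b ha) b
    rw [mI_map, hG3I _ b.2, Ideal.map_span, Set.image_singleton, rho_C, Ideal.mem_span_singleton,
      Finset.prod_range_succ, C_mul, ← map_prod] at h1
    exact (mul_dvd_mul_iff_left (by rw [Ne, C_eq_zero]; exact hδ _ b.2.le)).1 h1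
  have hG3ss : ∀ j, rho j (G3 (Fin.last s) (Fin.last s)) = C (Φ s) := by
    intro j
    have h1 : (G3.map (rho j)).det = C (∏ j ∈ Finset.range (s+1), Φ j) := by
      rw [← RingHom.mapMatrix_apply, ← RingHom.map_det, hG3det, rho_C]
    rw [det_of_lowerTriangular, Fin.prod_univ_castSucc, Finset.prod_range_succ, C_mul,
      ← Fin.prod_univ_eq_prod_range, map_prod] at h1
    · have h2 : ∏ i : Fin s, (G3.map (rho j)) i.castSucc i.castSucc = ∏ i : Fin s, C (Φ i) := by
        refine Finset.prod_congr rfl fun i _ => ?_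
        rw [Matrix.map_apply, hG3row _ _ _ (Fin.castSucc_lt_last i).ne]; simp
      rw [h2] at h1
      refine mul_left_cancel₀ ?_ h1
      exact Finset.prod_ne_zero_iff.2 fun i _ => by
        rw [Ne, C_eq_zero]; exact h0 i (by omega)
    · intro i j hij
      have hij' : i < j := hij
      rw [Matrix.map_apply, hG3row _ _ _ (by rintro rfl; exact absurd hij' (Fin.le_last j).not_gt),
        if_neg hij'.ne]
  choose t y hty using fun b : Fin (s+1) => lemmaY (Φ b) Finset.univ (G3 (Fin.last s) b) (fun j _ => hG3last j b)
  let t' : Fin (s+1) → MvPolynomial (Fin N) B := fun b => if b = Fin.last s then 0 else t b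
  let e : Fin (s+1) → MvPolynomial (Fin N) B := Pi.single (Fin.last s) 1
  let G4 := (1 + vecMulVec (-e) t') * G3
  have hL : IsUnit (1 + vecMulVec (-e) t') := isUnit_one_add_vecMulVec (by simp [e, t'])
  have hL' : IsUnit (1 + vecMulVec (-e) (p • t')) := isUnit_one_add_vecMulVec (by simp [e, t'])
  have hG4G3 : MEq G4 G3 := ⟨_, 1, hL, isUnit_one, by rw [Matrix.mul_one]⟩
  have hPL : lastD s p * (1 + vecMulVec (-e) t') = (1 + vecMulVec (-e) (p • t')) * lastD s p := by
    ext a b : 2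
    rw [lastD_mul, mul_lastD, Matrix.add_apply, Matrix.add_apply, vecMulVec_apply, vecMulVec_apply]
    by_cases ha : a = Fin.last s <;> by_cases hb : b = Fin.last s <;>
      simp [ha, hb, e, t', Matrix.one_apply, eq_comm] 
  have hG2G4 : MEq G2 (lastD s p * G4) := by
    refine MEq.symm ⟨_, 1, hL', isUnit_one, ?_⟩
    rw [Matrix.mul_one, hG23, ← Matrix.mul_assoc (1 + vecMulVec (-e) (p • t')), ← hPL, Matrix.mul_assoc]
  have hG4rho : ∀ j, G4.map (rho j) = H := by
    intro j
    ext a b : 2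
    have e1 : G4 a b = G3 a b - e a * ∑ c, t' c * G3 c b := by
      simp only [G4, Matrix.add_mul, Matrix.one_mul, Matrix.add_apply, Matrix.vecMulVec_mul, vecMulVec_apply,
        vecMul, dotProduct, Pi.neg_apply]
      ring
    rw [Matrix.map_apply, e1, map_sub, map_mul, map_sum, hH, diagonal_apply]
    by_cases ha : a = Fin.last s
    · subst ha
      have e2 : ∑ c, rho j (t' c * G3 c b) = if b = Fin.last s then 0 else rho j (t b) * C (Φ b) := by
        have e3 : ∀ c, rho j (t' c * G3 c b) = if c = b then (if b = Fin.last s then 0 else rho j (t b) * C (Φ b)) else 0 := by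
          intro c
          rw [map_mul]
          by_cases hc : c = Fin.last s
          · by_cases hb : b = Fin.last s
            · simp [t', hc, hb]
            · have hb' : Fin.last s ≠ b := fun h => hb h.symm
              simp [t', hc, hb']
          · rw [hG3row _ _ _ hc]
            by_cases hcb : c = b
            · subst hcb; simp [t', hc]
            · simp [hcb]
        simp only [e3]
        simp
      rw [e2]
      by_cases hb : b = Fin.last s
      · subst hb
        simp [hG3ss]
      · have : Fin.last s ≠ b := fun h => hb h.symm
        have h5 : rho j (G3 (Fin.last s) b) = C (Φ b) * rho j (t b) := by
          rw [hty b, map_add, map_mul, map_mul, rho_C]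
          change _ + rho j p * _ = _
          rw [hrp]; ring
        simp only [if_neg hb, if_neg this, h5, e, Pi.single_eq_same, map_one]
        ring
    · rw [hG3row _ _ _ ha]
      simp [e, ha]
  obtain ⟨U, V, hUV, hU, hV⟩ := lemmaX rho rho_comm rho_idem H G4 Finset.univ (fun j _ => hG4rho j)
    (fun j _ => hHrho j) (hG4G3.trans hG3UT)
  have hUp : ∀ a, a ≠ Fin.last s → p ∣ (U : Matrix _ _ (MvPolynomial (Fin N) B)) a (Fin.last s) := by
    intro a ha
    refine prod_dvd_of_rho _ _ fun j _ => ?_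
    have := congrFun (congrFun (hU j (Finset.mem_univ j)) a) (Fin.last s)
    rw [Matrix.map_apply] at this
    rw [this, Matrix.one_apply_ne ha]
  choose! x hx using hUp
  let U' : Matrix (Fin (s+1)) (Fin (s+1)) (MvPolynomial (Fin N) B) := of fun a b =>
    if a = Fin.last s then (if b = Fin.last s then (U : Matrix _ _ (MvPolynomial (Fin N) B)) a b
      else p * (U : Matrix _ _ (MvPolynomial (Fin N) B)) a b)
    else (if b = Fin.last s then x a else (U : Matrix _ _ (MvPolynomial (Fin N) B)) a b)
  have hPU : lastD s p * (U : Matrix _ _ (MvPolynomial (Fin N) B)) = U' * lastD s p := by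
    ext a b : 2
    rw [lastD_mul, mul_lastD]
    by_cases ha : a = Fin.last s <;> by_cases hb : b = Fin.last s
    · simp [U', ha, hb, mul_comm]
    · simp [U', ha, hb]
    · simp [U', ha, hb, hx a ha, mul_comm]
    · simp [U', ha, hb]
  have hU'unit : IsUnit U' := by
    have h1 := congrArg Matrix.det hPU
    rw [det_mul, det_mul, mul_comm, det_lastD] at h1
    rw [isUnit_iff_isUnit_det, ← mul_right_cancel₀ hp0 h1, ← isUnit_iff_isUnit_det]
    exact U.isUnit
  refine hG2.trans (hG2G4.trans ⟨U', V, hU'unit, V.isUnit, ?_⟩)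
  rw [hUV, ← Matrix.mul_assoc, ← Matrix.mul_assoc, hPU, Matrix.mul_assoc U']

end SQ

section Frozen
variable {A : Type*} [CommRing A] {l m : ℕ}

lemma isGcd_of_span {F : Matrix (Fin l) (Fin m) A} {k : ℕ} {d : A} (h : mI F k = Ideal.span {d}) :
    IsGcdMinors F k d := by
  rw [← span_minorsSet] at h
  constructor
  · intro p hp
    rw [← Ideal.mem_span_singleton, ← h]; exact Ideal.subset_span hp
  · intro e he
    rw [← Ideal.mem_span_singleton]
    have : Ideal.span (minorsSet F k) ≤ Ideal.span {e} := by
      rw [Ideal.span_le]; intro p hp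
      exact Ideal.mem_span_singleton.2 (he p hp)
    exact this (h ▸ Ideal.mem_span_singleton_self d)

lemma span_mul_reduced {F : Matrix (Fin l) (Fin m) A} {k : ℕ} {d : A} (h : ∀ p ∈ minorsSet F k, d ∣ p) :
    Ideal.span {d} * reducedIdeal F k d = mI F k := by
  rw [← span_minorsSet]
  apply le_antisymm
  · rw [Ideal.span_singleton_mul_le_iff]
    intro z hz
    induction hz using Submodule.span_induction with
    | mem x hx => exact Ideal.subset_span hx
    | zero => simp
    | add x y _ _ hx hy => rw [mul_add]; exact Ideal.add_mem _ hx hy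
    | smul a x _ hx => rw [smul_eq_mul, mul_left_comm]; exact Ideal.mul_mem_left _ _ hx
  · rw [Ideal.span_le]
    intro p hp
    obtain ⟨v, rfl⟩ := h p hp
    exact Ideal.mul_mem_mul (Ideal.mem_span_singleton_self _) (Ideal.subset_span hp)

lemma matEquiv_iff (F G : Matrix (Fin l) (Fin m) A) : MatEquiv F G ↔ MEq F G := by
  simp only [MatEquiv, MEq, isUnit_iff_isUnit_det]

lemma JkUnit.span {F : Matrix (Fin l) (Fin m) A} {k : ℕ} (h : JkUnit F k) :
    ∃ d, IsGcdMinors F k d ∧ mI F k = Ideal.span {d} := by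
  obtain ⟨d, hd, hr⟩ := h
  refine ⟨d, hd, ?_⟩
  rw [← span_mul_reduced hd.1, hr, Ideal.mul_top]

lemma HasRank.bot {F : Matrix (Fin l) (Fin m) A} {r : ℕ} (h : HasRank F r) : mI F (r+1) = ⊥ := by
  rw [← span_minorsSet, Ideal.span_eq_bot]; exact h.2

lemma HasRank.ne_bot {F : Matrix (Fin l) (Fin m) A} {r : ℕ} (h : HasRank F r) {k : ℕ} (hk : k ≤ r) :
    mI F k ≠ ⊥ := by
  intro h0
  have h1 : mI F r = ⊥ := le_bot_iff.1 (h0 ▸ mI_antitone F hk)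
  rw [← span_minorsSet, Ideal.span_eq_bot] at h1
  obtain ⟨p, hp, hp0⟩ := h.1
  exact hp0 (h1 p hp)

lemma smithDiag_minor (Φ : Fin l → A) (i : Fin l) (hlm : l ≤ m) :
    ∏ j ∈ Finset.Iic i, Φ j ∈ mI (smithDiag Φ : Matrix (Fin l) (Fin m) A) (i + 1) := by
  have hi := i.2
  have h := det_mem_mI (smithDiag Φ : Matrix (Fin l) (Fin m) A)
    (fun x : Fin ((i:ℕ)+1) => (⟨x, by omega⟩ : Fin l)) (fun x : Fin ((i:ℕ)+1) => (⟨x, by omega⟩ : Fin m))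
  have e : (smithDiag Φ : Matrix (Fin l) (Fin m) A).submatrix
    (fun x : Fin ((i:ℕ)+1) => (⟨x, by omega⟩ : Fin l)) (fun x : Fin ((i:ℕ)+1) => (⟨x, by omega⟩ : Fin m)) =
    diagonal fun x : Fin ((i:ℕ)+1) => Φ ⟨x, by omega⟩ := by
    ext a b
    simp [smithDiag, diagonal_apply, Fin.ext_iff]
  rw [e, det_diagonal] at h
  convert h using 1
  symm
  refine Finset.prod_bij (fun x _ => (⟨x, by omega⟩ : Fin l)) ?_ ?_ ?_ ?_
  · intro a _; rw [Finset.mem_Iic, Fin.le_def]; simp only; omega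
  · intro a _ b _ hab; simpa [Fin.ext_iff] using hab
  · intro b hb
    rw [Finset.mem_Iic, Fin.le_def] at hb
    exact ⟨⟨b, by omega⟩, Finset.mem_univ _, rfl⟩
  · intro a _; rfl

theorem forward [IsDomain A] {F : Matrix (Fin l) (Fin m) A} {r : ℕ} (hlm : l ≤ m) (hrl : r ≤ l)
    (hrank : HasRank F r) (hS : SmithEquivAt F r) (k : ℕ) (hk1 : 1 ≤ k) (hk : k ≤ r) : JkUnit F k := by
  obtain ⟨Φ, hg, -, hE⟩ := hS
  obtain ⟨i, rfl⟩ : ∃ i, k = i + 1 := ⟨k - 1, by omega⟩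
  have h1 := hg ⟨i, by omega⟩ (by simp only; omega)
  simp only at h1
  refine ⟨_, h1, ?_⟩
  set d := ∏ j ∈ Finset.Iic (⟨i, by omega⟩ : Fin l), Φ j with hd
  have h2 : d ∈ mI F (i + 1) := by
    rw [((matEquiv_iff _ _).1 hE).mI_eq]
    exact smithDiag_minor Φ ⟨i, by omega⟩ hlm
  have h3 := span_mul_reduced h1.1
  have hd0 : d ≠ 0 := by
    intro h0
    apply hrank.ne_bot hk
    rw [← h3, h0]; simp
  rw [← h3] at h2
  obtain ⟨z, hz, hz2⟩ := Ideal.mem_span_singleton_mul.1 h2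
  rw [Ideal.eq_top_iff_one]
  have : z = 1 := mul_left_cancel₀ hd0 (by rw [hz2, mul_one])
  rwa [this] at hz

theorem backward_fin {F : Matrix (Fin l) (Fin m) A} {r : ℕ} (Ψ : ℕ → A)
    (h1 : ∀ k ≤ r, mI F k = Ideal.span {∏ j ∈ Finset.range k, Ψ j})
    (h2 : MEq F (Jm A l r * (diagonal fun i : Fin r => Ψ i) * Jm A r m)) : SmithEquivAt F r := by
  refine ⟨fun i => if (i : ℕ) < r then Ψ i else 0, ?_, ?_, ?_⟩
  · intro i hi
    apply isGcd_of_span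
    rw [h1 _ hi]
    congr 2
    symm
    refine Finset.prod_bij (fun x _ => (x : ℕ)) ?_ ?_ ?_ ?_
    · intro a ha; rw [Finset.mem_Iic, Fin.le_def] at ha; rw [Finset.mem_range]; omega
    · intro a _ b _ hab; exact Fin.ext hab
    · intro b hb
      rw [Finset.mem_range] at hb
      exact ⟨⟨b, by omega⟩, by rw [Finset.mem_Iic, Fin.le_def]; simp only; omega, rfl⟩
    · intro a ha
      rw [Finset.mem_Iic, Fin.le_def] at ha
      rw [if_pos (by omega)]
  · intro i hi
    exact if_neg (by omega)
  · rw [matEquiv_iff]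
    convert h2 using 1
    ext i j
    rw [Jm_diag_Jm]; rfl

end Frozen

section Core
variable {B : Type*} [CommRing B] [IsDomain B] {N : ℕ}

lemma rho_eq_zero_iff (j : Fin N) (x : MvPolynomial (Fin N) B) : rho j x = 0 ↔ X j ∣ x := by
  constructor
  · intro h
    have := X_dvd_sub_rho j x
    rwa [h, sub_zero] at this
  · rintro ⟨z, rfl⟩
    rw [map_mul, rho_X_self, zero_mul]

lemma rho_prime_X (j : Fin N) : Prime (X j : MvPolynomial (Fin N) B) := by
  refine ⟨X_ne_zero j, ?_, ?_⟩
  · intro h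
    rw [isUnit_iff_dvd_one, ← rho_eq_zero_iff, map_one] at h
    exact one_ne_zero h
  · intro a b
    rw [← rho_eq_zero_iff, ← rho_eq_zero_iff, ← rho_eq_zero_iff, map_mul, mul_eq_zero]
    exact id

lemma dvd_of_dvd_prod_mul (S : Finset (Fin N)) (d c : MvPolynomial (Fin N) B) 
    (hX : ∀ j, ¬ X j ∣ d) (h : d ∣ (∏ j ∈ S, X j) * c) : d ∣ c := by
  induction S using Finset.induction_on with
  | empty => simpa using h
  | insert j S hj ih =>
    apply ih
    rw [Finset.prod_insert hj, mul_assoc] at h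
    obtain ⟨e, he⟩ := h
    have h1 : X j ∣ d * e := ⟨_, he.symm⟩
    rcases (rho_prime_X (B := B) j).dvd_or_dvd h1 with h2 | ⟨z, rfl⟩
    · exact absurd h2 (hX j)
    · refine ⟨z, mul_left_cancel₀ (X_ne_zero j) ?_⟩
      rw [he]; ring

lemma eq_C_of_dvd_C (d : MvPolynomial (Fin N) B) (h : B) (h0 : h ≠ 0) (hd : d ∣ C h) : ∃ δ, d = C δ := by
  obtain ⟨e, he⟩ := hd
  have hne : (C h : MvPolynomial (Fin N) B) ≠ 0 := by simpa using h0
  have h1 : d ≠ 0 := by rintro rfl; exact hne (by rw [he, zero_mul])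
  have h2 : e ≠ 0 := by rintro rfl; exact hne (by rw [he, mul_zero])
  have h3 := totalDegree_mul_of_isDomain h1 h2
  rw [← he, totalDegree_C] at h3
  exact ⟨_, totalDegree_eq_zero_iff_eq_C.1 (by omega)⟩

lemma not_X_dvd {s : ℕ} (G : Matrix (Fin (s+1)) (Fin (s+1)) (MvPolynomial (Fin N) B))
    (d : MvPolynomial (Fin N) B) (hs : mI G s = Ideal.span {d}) (h : B) (h0 : h ≠ 0)
    (hd : mI G (s+1) = Ideal.span {(∏ i, X i) * C h}) (i : Fin N) : ¬ X i ∣ d := by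
  classical
  intro hdvd
  have hent : ∀ a b, (X i : MvPolynomial (Fin N) B) ∣ G.adjugate a b := by
    intro a b
    rw [adjugate_fin_succ_eq_det_submatrix]
    refine Dvd.dvd.mul_left ?_ _
    refine hdvd.trans ?_
    rw [← Ideal.mem_span_singleton, ← hs]
    exact det_mem_mI _ _ _
  choose M hM using hent
  have e1 : G.adjugate = (X i : MvPolynomial (Fin N) B) • (of M) := by
    ext a b : 2
    rw [hM]; rfl
  have e2 := det_adjugate G
  rw [e1, det_smul, Fintype.card_fin, Nat.add_sub_cancel] at e2
  rw [mI_det] at hd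
  obtain ⟨u, hu⟩ := Ideal.span_singleton_eq_span_singleton.1 hd
  set w : MvPolynomial (Fin N) B := (∏ j ∈ Finset.univ.erase i, X j) * C h with hw
  have hw0 : w ≠ 0 := mul_ne_zero (Finset.prod_ne_zero_iff.2 fun j _ => X_ne_zero j) (by simpa using h0)
  have e3 : G.det * (u : MvPolynomial (Fin N) B) = X i * w := by
    rw [hu, hw, ← mul_assoc, Finset.mul_prod_erase _ _ (Finset.mem_univ i)]
  have e4 : (X i : MvPolynomial (Fin N) B) ∣ w ^ s := by
    refine ⟨(of M).det * (u : MvPolynomial (Fin N) B) ^ s, ?_⟩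
    refine mul_left_cancel₀ (pow_ne_zero s (X_ne_zero (R := B) i)) ?_
    rw [← mul_pow, ← e3, mul_pow, ← e2]; ring
  have e5 : (X i : MvPolynomial (Fin N) B) ∣ w := (rho_prime_X i).dvd_of_dvd_pow e4
  obtain ⟨z, hz⟩ := e5
  have e6 : rho i w = w := by
    rw [hw, map_mul, rho_C, rho_prod _ _ (by simp)]
  apply hw0
  rw [← e6, hz, map_mul, rho_X_self, zero_mul]

theorem core [IsPrincipalIdealRing B] (hQ : QC (MvPolynomial (Fin N) B))
    (hS : SplitIdem (MvPolynomial (Fin N) B)) {l m s : ℕ}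
    (F : Matrix (Fin l) (Fin m) (MvPolynomial (Fin N) B))
    (hP : ∀ k ≤ s + 1, ∃ d, mI F k = Ideal.span {d}) (h : B) (h0 : h ≠ 0)
    (hd : mI F (s+1) = Ideal.span {(∏ i, X i) * C h}) (hbot : mI F (s+1+1) = ⊥) :
    ∃ Ψ : ℕ → MvPolynomial (Fin N) B, (∀ k ≤ s + 1, mI F k = Ideal.span {∏ j ∈ Finset.range k, Ψ j}) ∧
      MEq F (Jm (MvPolynomial (Fin N) B) l (s+1) * (diagonal fun i : Fin (s+1) => Ψ i) * Jm (MvPolynomial (Fin N) B) (s+1) m) := by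
  have hne : (∏ i, X i) * C h ≠ (0 : MvPolynomial (Fin N) B) :=
    mul_ne_zero (Finset.prod_ne_zero_iff.2 fun j _ => X_ne_zero j) (by simpa using h0)
  obtain ⟨hl, hm, G, hFG, hGI⟩ := reduce_square hS F _ hne hd hbot
  simp only [← hGI] at hP hd ⊢
  obtain ⟨ds, hds⟩ := hP s (by omega)
  have hdsC : ds ∣ C h := by
    refine dvd_of_dvd_prod_mul Finset.univ ds _ (fun j => not_X_dvd G ds hds h h0 hd j) ?_
    rw [← Ideal.span_singleton_le_span_singleton, ← hds, ← hd]
    exact mI_succ_le _ _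
  have key : ∀ k, ∃ δ : B, (k = 0 → δ = 1) ∧ (k ≤ s → mI G k = Ideal.span {C δ}) ∧ (k = s + 1 → δ = h) := by
    intro k
    rcases Nat.eq_zero_or_pos k with rfl | hk
    · exact ⟨1, fun _ => rfl, fun _ => by rw [mI_zero]; simp, fun h => absurd h (by omega)⟩
    · by_cases hk2 : k ≤ s
      · obtain ⟨d, hdk⟩ := hP k (by omega)
        have h1 : d ∣ ds := by
          rw [← Ideal.span_singleton_le_span_singleton, ← hds, ← hdk]
          exact mI_antitone _ hk2
        obtain ⟨δ, rfl⟩ := eq_C_of_dvd_C d h h0 (h1.trans hdsC)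
        exact ⟨δ, fun h => absurd h (by omega), fun _ => hdk, fun h => absurd h (by omega)⟩
      · exact ⟨h, fun h => absurd h (by omega), fun h => absurd h hk2, fun _ => rfl⟩
  choose δ hδ1 hδI hδh using key
  have hCC : ∀ x y : B, (C x : MvPolynomial (Fin N) B) ∣ C y → x ∣ y := by
    intro x y hxy
    rw [C_dvd_iff_dvd_coeff] at hxy
    simpa using hxy 0
  have hstep : ∀ k, ∃ φ, k ≤ s → δ (k+1) = δ k * φ := by
    intro k
    by_cases hk : k ≤ s
    · have : δ k ∣ δ (k+1) := by
        apply hCC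
        rcases Nat.lt_or_ge k s with h1 | h1
        · rw [← Ideal.span_singleton_le_span_singleton, ← hδI k hk, ← hδI (k+1) h1]
          exact mI_succ_le _ _
        · obtain rfl : k = s := by omega
          rw [hδh (k+1) rfl]
          refine dvd_trans ?_ hdsC
          rw [← Ideal.span_singleton_le_span_singleton, ← hδI k le_rfl, ← hds]
      obtain ⟨φ, hφ⟩ := this
      exact ⟨φ, fun _ => hφ⟩
    · exact ⟨0, fun h => absurd h hk⟩
  choose Φ hΦ using hstep
  have hprod : ∀ k ≤ s + 1, ∏ j ∈ Finset.range k, Φ j = δ k := by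
    intro k
    induction k with
    | zero => intro _; simp [hδ1 0 rfl]
    | succ k ihk => intro hk; rw [Finset.prod_range_succ, ihk (by omega), hΦ k (by omega)]
  have hph := hprod (s+1) le_rfl
  rw [hδh _ rfl] at hph
  have hΦ0 : ∀ i < s + 1, Φ i ≠ 0 := by
    intro i hi hz
    apply h0
    rw [← hph]
    exact Finset.prod_eq_zero (Finset.mem_range.2 hi) hz
  have hsq := square_step hQ hS G Φ hΦ0 (fun k hk => by rw [hprod k (by omega), hδI k hk]) (by rw [hph, hd])
  refine ⟨fun j => if j = s then (∏ i, X i) * C (Φ j) else C (Φ j), ?_, ?_⟩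
  · have e1 : ∀ k ≤ s, ∏ j ∈ Finset.range k, (if j = s then (∏ i, X i) * C (Φ j) else C (Φ j) : MvPolynomial (Fin N) B) =
        C (δ k) := by
      intro k hk
      rw [← hprod k (by omega), map_prod]
      refine Finset.prod_congr rfl fun j hj => ?_
      rw [Finset.mem_range] at hj
      rw [if_neg (by omega)]
    intro k hk
    rcases Nat.lt_or_ge s k with h1 | h1
    · obtain rfl : k = s + 1 := by omega
      rw [Finset.prod_range_succ, e1 s le_rfl, if_pos rfl, hd]
      congr 2
      rw [← hδh (s+1) rfl, hΦ s le_rfl, C_mul]; ring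
    · rw [e1 k h1, hδI k h1]
  · refine (hFG.trans (hsq.pad hl hm)).trans ?_
    have : (lastD s (∏ i, X i) * diagonal fun i : Fin (s+1) => C (Φ i) : Matrix _ _ (MvPolynomial (Fin N) B)) =
        diagonal fun i : Fin (s+1) => if (i : ℕ) = s then (∏ i, X i) * C (Φ i) else C (Φ i) := by
      rw [lastD, diagonal_mul_diagonal]
      congr 1
      funext i
      have : i = Fin.last s ↔ (i : ℕ) = s := by rw [Fin.ext_iff, Fin.val_last]
      simp only [this, ite_mul, one_mul]
    rw [this]
    exact MEq.refl _

end Core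

section Affine
variable {K : Type*} [Field K] {N : ℕ}

/-- the affine change of coordinates -/
noncomputable def affTo (c : Matrix (Fin N) (Fin N) K) (b : Fin N → K) :
    MvPolynomial (Fin (N+1)) K →+* MvPolynomial (Fin N) (Polynomial K) :=
  eval₂Hom (C.comp Polynomial.C) (Fin.lastCases (C Polynomial.X)
    fun j => ∑ k, C (Polynomial.C (c j k)) * (X k - C (Polynomial.C (b k))))

/-- the inverse affine change of coordinates -/
noncomputable def affInv (a : Matrix (Fin N) (Fin N) K) (b : Fin N → K) :
    MvPolynomial (Fin N) (Polynomial K) →+* MvPolynomial (Fin (N+1)) K :=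
  eval₂Hom (Polynomial.eval₂RingHom C (X (Fin.last N)))
    fun i => (∑ j, C (a i j) * X j.castSucc) + C (b i)

lemma affTo_castSucc (c : Matrix (Fin N) (Fin N) K) (b : Fin N → K) (j : Fin N) :
    affTo c b (X j.castSucc) = ∑ k, C (Polynomial.C (c j k)) * (X k - C (Polynomial.C (b k))) := by
  simp [affTo]

lemma affTo_last (c : Matrix (Fin N) (Fin N) K) (b : Fin N → K) :
    affTo c b (X (Fin.last N)) = C Polynomial.X := by
  simp [affTo]

lemma affTo_C (c : Matrix (Fin N) (Fin N) K) (b : Fin N → K) (x : K) :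
    affTo c b (C x) = C (Polynomial.C x) := by
  simp [affTo]

lemma affInv_X (a : Matrix (Fin N) (Fin N) K) (b : Fin N → K) (i : Fin N) :
    affInv a b (X i) = (∑ j, C (a i j) * X j.castSucc) + C (b i) := by
  simp [affInv]

lemma affInv_CC (a : Matrix (Fin N) (Fin N) K) (b : Fin N → K) (x : K) :
    affInv a b (C (Polynomial.C x)) = C x := by
  simp [affInv]

lemma affInv_CX (a : Matrix (Fin N) (Fin N) K) (b : Fin N → K) :
    affInv a b (C Polynomial.X) = X (Fin.last N) := by
  simp [affInv]

lemma sum_aux {R : Type*} [CommRing R] (f : K →+* R) (a c : Matrix (Fin N) (Fin N) K) (h : c * a = 1)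
    (x : Fin N → R) (j : Fin N) : ∑ k, f (c j k) * ∑ i, f (a k i) * x i = x j := by
  have : ∀ i, ∑ k, f (c j k) * f (a k i) = if j = i then 1 else 0 := by
    intro i
    have := congrArg f (congrFun (congrFun h j) i)
    rw [Matrix.mul_apply, map_sum] at this
    simp only [map_mul] at this
    rw [this, Matrix.one_apply]
    split_ifs <;> simp
  simp only [Finset.mul_sum]
  rw [Finset.sum_comm]
  simp only [← mul_assoc, ← Finset.sum_mul, this]
  simp

/-- the ring isomorphism -/
noncomputable def affEquiv (a c : Matrix (Fin N) (Fin N) K) (b : Fin N → K) (hac : a * c = 1) (hca : c * a = 1) :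
    MvPolynomial (Fin (N+1)) K ≃+* MvPolynomial (Fin N) (Polynomial K) :=
  RingEquiv.ofRingHom (affTo c b) (affInv a b)
    (by
      apply MvPolynomial.ringHom_ext'
      · apply Polynomial.ringHom_ext
        · intro x
          simp only [RingHom.comp_apply, affInv_CC, affTo_C, RingHom.id_apply]
        · simp only [RingHom.comp_apply, affInv_CX, affTo_last, RingHom.id_apply]
      · intro i
        simp only [RingHom.comp_apply, affInv_X, map_add, map_sum, map_mul, affTo_C, affTo_castSucc,
          RingHom.id_apply]
        have := sum_aux ((C : Polynomial K →+* MvPolynomial (Fin N) (Polynomial K)).comp Polynomial.C) c a hac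
          (fun k => X k - C (Polynomial.C (b k))) i
        simp only [RingHom.comp_apply] at this
        rw [this]; ring)
    (by
      apply MvPolynomial.ringHom_ext
      · intro x
        simp only [RingHom.comp_apply, affInv_CC, affTo_C, RingHom.id_apply]
      · intro i
        refine Fin.lastCases ?_ (fun j => ?_) i
        · simp only [RingHom.comp_apply, affInv_CX, affTo_last, RingHom.id_apply]
        · simp only [RingHom.comp_apply, affTo_castSucc, map_sum, map_mul, affInv_CC, map_sub, affInv_X,
            RingHom.id_apply, add_sub_cancel_right]
          exact sum_aux (C : K →+* MvPolynomial (Fin (N+1)) K) a c hca (fun k => X k.castSucc) j)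

lemma affTo_supported (c : Matrix (Fin N) (Fin N) K) (b : Fin N → K) (h : MvPolynomial (Fin (N+1)) K)
    (hh : h ∈ supported K {Fin.last N}) : ∃ h', affTo c b h = C h' := by
  induction hh using Algebra.adjoin_induction with
  | mem x hx =>
    rw [Set.image_singleton, Set.mem_singleton_iff] at hx
    exact ⟨_, hx ▸ affTo_last c b⟩
  | algebraMap x => exact ⟨_, affTo_C c b x⟩
  | add x y _ _ hx hy =>
    obtain ⟨x', hx⟩ := hx
    obtain ⟨y', hy⟩ := hy
    exact ⟨x' + y', by rw [map_add, hx, hy, C_add]⟩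
  | mul x y _ _ hx hy =>
    obtain ⟨x', hx⟩ := hx
    obtain ⟨y', hy⟩ := hy
    exact ⟨x' * y', by rw [map_mul, hx, hy, C_mul]⟩

lemma exists_equiv (a : Matrix (Fin N) (Fin N) K) (b : Fin N → K) (ha : IsUnit a.det)
    (g : Fin N → MvPolynomial (Fin (N+1)) K)
    (hg : ∀ i, g i = (∑ j, C (a i j) * X j.castSucc) + C (b i))
    (h : MvPolynomial (Fin (N+1)) K) (hh : h ∈ supported K {Fin.last N}) :
    ∃ φ : MvPolynomial (Fin (N+1)) K ≃+* MvPolynomial (Fin N) (Polynomial K),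
      (∀ i, φ (g i) = X i) ∧ ∃ h', φ h = C h' := by
  have hac : a * a⁻¹ = 1 := mul_nonsing_inv a ha
  have hca : a⁻¹ * a = 1 := nonsing_inv_mul a ha
  let φ := affEquiv a a⁻¹ b hac hca
  have hφg : ∀ i, φ (g i) = X i := by
    intro i
    rw [← φ.apply_symm_apply (X i)]
    congr 1
    rw [hg]
    exact (affInv_X a b i).symm
  exact ⟨φ, hφg, affTo_supported a⁻¹ b h hh⟩

lemma QC_mv (K : Type*) [Field K] (N : ℕ) : QC (MvPolynomial (Fin N) K) :=
  fun _ w i0 hw => qs_column_exact w hw i0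

lemma mI_map_span {A A' : Type*} [CommRing A] [CommRing A'] (φ : A →+* A') {l m : ℕ}
    (F : Matrix (Fin l) (Fin m) A) (k : ℕ) (d : A) (h : mI F k = Ideal.span {d}) :
    mI (F.map φ) k = Ideal.span {φ d} := by
  rw [mI_map, h, Ideal.map_span, Set.image_singleton]

lemma transfer {A A' : Type*} [CommRing A] [CommRing A'] (φ : A →+* A') (ψ : A' →+* A)
    (hψ : ∀ x, ψ (φ x) = x) {l m r : ℕ}
    (F : Matrix (Fin l) (Fin m) A) (Ψ : ℕ → A')
    (hΨ : ∀ k ≤ r, mI (F.map φ) k = Ideal.span {∏ j ∈ Finset.range k, Ψ j})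
    (hE : MEq (F.map φ) (Jm A' l r * (diagonal fun i : Fin r => Ψ i) * Jm A' r m)) : SmithEquivAt F r := by
  have hback : (F.map φ).map ψ = F := by
    ext i j : 2
    simp [hψ]
  refine backward_fin (fun j => ψ (Ψ j)) ?_ ?_
  · intro k hk
    have := mI_map_span ψ _ k _ (hΨ k hk)
    rwa [hback, map_prod] at this
  · have := hE.map ψ
    rw [hback] at this
    convert this using 1
    ext i j : 2
    rw [Jm_diag_Jm (fun j => ψ (Ψ j)), Matrix.map_apply, Jm_diag_Jm Ψ]
    split_ifs <;> simp

theorem backward (a : Matrix (Fin N) (Fin N) K) (b : Fin N → K) (ha : IsUnit a.det)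
    (g : Fin N → MvPolynomial (Fin (N+1)) K)
    (hg : ∀ i, g i = (∑ j, C (a i j) * X j.castSucc) + C (b i))
    (l m r : ℕ) (hr1 : 1 ≤ r)
    (F : Matrix (Fin l) (Fin m) (MvPolynomial (Fin (N+1)) K)) (hrank : HasRank F r)
    (h : MvPolynomial (Fin (N+1)) K) (hh : h ∈ supported K {Fin.last N})
    (hd : IsGcdMinors F r ((∏ i, g i) * h)) (hJ : ∀ k, 1 ≤ k → k ≤ r → JkUnit F k) : SmithEquivAt F r := by
  obtain ⟨s, rfl⟩ : ∃ s, r = s + 1 := ⟨r - 1, by omega⟩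
  obtain ⟨φ, hφg, h', hh'⟩ := exists_equiv a b ha g hg h hh
  have hQ : QC (MvPolynomial (Fin N) (Polynomial K)) := QC.of_equiv φ.symm (QC_mv K (N+1))
  have hS : SplitIdem (MvPolynomial (Fin N) (Polynomial K)) := SplitIdem.of_equiv φ.symm (splitIdem_mv K (N+1))
  have hspan : mI F (s+1) = Ideal.span {(∏ i, g i) * h} := by
    obtain ⟨d, hdg, hds⟩ := (hJ (s+1) (by omega) le_rfl).span
    rw [hds]
    apply le_antisymm
    · rw [Ideal.span_singleton_le_span_singleton]; exact hdg.2 _ hd.1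
    · rw [Ideal.span_singleton_le_span_singleton]; exact hd.2 _ hdg.1
  have hspan' := mI_map_span φ.toRingHom F _ _ hspan
  rw [RingEquiv.toRingHom_eq_coe, RingEquiv.coe_toRingHom, map_mul, map_prod, hh'] at hspan'
  simp only [hφg] at hspan'
  have h0 : h' ≠ 0 := by
    rintro rfl
    rw [C_0] at hh'
    have : h = 0 := by simpa using hh'
    apply hrank.ne_bot le_rfl
    rw [hspan, this]; simp
  obtain ⟨Ψ, hΨ, hE⟩ := core hQ hS (F.map φ.toRingHom) (by
    intro k hk
    rcases Nat.eq_zero_or_pos k with rfl | hk0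
    · exact ⟨1, by rw [mI_zero]; simp⟩
    · obtain ⟨d, -, hdk⟩ := (hJ k hk0 hk).span
      exact ⟨_, mI_map_span φ.toRingHom F _ _ hdk⟩) h' h0 hspan' (by rw [mI_map, hrank.bot, Ideal.map_bot])
  exact transfer φ.toRingHom φ.symm.toRingHom (fun x => φ.symm_apply_apply x) F Ψ hΨ hE

end Affine

/-- `g_i = a_{i1} z_1 + ⋯ + a_{i,n-1} z_{n-1} + b_i` for `i = 1, …, n-1`
(indexed by `Fin (n-1)`, with `z_j = X ⟨j-1⟩`). -/
theorem statement15 {K : Type*} [Field K] (n : ℕ) (hn : 2 ≤ n)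
    (a : Matrix (Fin (n - 1)) (Fin (n - 1)) K) (b : Fin (n - 1) → K)
    (ha : IsUnit a.det)
    (g : Fin (n - 1) → MvPolynomial (Fin n) K)
    (hg : ∀ i : Fin (n - 1), g i =
      (∑ j : Fin (n - 1), MvPolynomial.C (a i j) *
        MvPolynomial.X (Fin.castLE (by omega : n - 1 ≤ n) j)) + MvPolynomial.C (b i))
    (l m r : ℕ) (hlm : l < m) (hr1 : 1 ≤ r) (hrl : r ≤ l)
    (F : Matrix (Fin l) (Fin m) (MvPolynomial (Fin n) K))
    (hrank : HasRank F r)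
    (h : MvPolynomial (Fin n) K)
    (hh : h ∈ MvPolynomial.supported K {(⟨n - 1, by omega⟩ : Fin n)})
    (hd : IsGcdMinors F r ((∏ i : Fin (n - 1), g i) * h)) :
    SmithEquivAt F r ↔ ∀ k : ℕ, 1 ≤ k → k ≤ r → JkUnit F k := by
  constructor
  · intro hS k hk1 hk
    exact forward hlm.le hrl hrank hS k hk1 hk
  · intro hJ
    obtain ⟨N, rfl⟩ : ∃ N, n = N + 1 := ⟨n - 1, by omega⟩
    exact backward (N := N) a b ha g hg l m r hr1 F hrank h hh hd hJ
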